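/- arXiv:2409.05952 — 3 statements merged into one kernel-verified Lean document; each statement's English description precedes it below -/
import Mathlib

section
/- Let P ∈ ℤ[x] be an admissible irreducible quadratic polynomial with P(n) ≥ 1 for all positive integers n, and let κ_P > 0 be the density of squarefree values of P (so that #{n ≤ N : P(n) squarefree} = κ_P·N + O_P(N^{3/4})). Then for every ε > 0, #{(n₁,n₂,n₃,n₄) ∈ [1,N]⁴ : each P(n_i) is squarefree and P(n₁)P(n₂)P(n₃)P(n₄) is a perfect square} = 3κ_P²·N² + O_{P,ε}(N^{7/4+ε}), as N → ∞. -/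
/-!
Let `S` be the set of `n ≤ N` with `P n` squarefree. If `P x P y P z P w` is a square and `P x`
equals one of the other three values, then the remaining two values coincide; as `P` is injective up
to boundedly many exceptions, such quadruples number `3 |S|² + O(N)`.

Otherwise `P x` divides `P y P z P w`, so it has a common factor of size at least `|P x| ^ (1/3)`
with one of these values, say with `P y`. Counting solutions of `P y ≡ 0` modulo the divisors of
`P x` shows that there are `O(N ^ (4/3 + ε))` such pairs `(x, y)`. Given the pair, `P z / P w` is
one of `O(N ^ ε)` fractions `u / v ≠ 1`, where `u v` is the squarefree part of `P x P y`. For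
`|u| ≤ |v|`, the equation `v P z = u P w` has `O(√|v| log N)` solutions, because completing the
square turns it into a Pell-type equation whose solutions grow geometrically with ratio
`1 + c / √|v|`, and also `O(N ^ ε (N / |v| + 1))` solutions, because `v ∣ P w`. The two bounds
balance at `|v| = N ^ (2/3)` and give `O(N ^ (1/3 + ε))`, hence `O(N ^ (5/3 + ε))` quadruples in
total.
-/

open Finset Polynomial

section DivisorBound

lemma add_one_le_mul_rpow {η : ℝ} (hη : 0 < η) {p : ℕ} (hp : 2 ≤ p) (e : ℕ) :
    (e + 1 : ℝ) ≤ (1 + 1 / (η * Real.log 2)) * ((p : ℝ) ^ e) ^ η := by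
  have : 0 < η * Real.log 2 := mul_pos hη (Real.log_pos one_lt_two)
  have hexp : 1 + e * (η * Real.log 2) ≤ ((p : ℝ) ^ e) ^ η :=
    calc 1 + e * (η * Real.log 2) ≤ Real.exp (e * (η * Real.log 2)) := by
          linarith [Real.add_one_le_exp (e * (η * Real.log 2))]
      _ = ((2 : ℝ) ^ e) ^ η := by
          rw [Real.rpow_def_of_pos (by positivity), Real.log_pow]
          ring_nf
      _ ≤ ((p : ℝ) ^ e) ^ η := by
          gcongr
          exact_mod_cast hp
  calc (e + 1 : ℝ) ≤ (1 + 1 / (η * Real.log 2)) * (1 + e * (η * Real.log 2)) := by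
        have : 1 / (η * Real.log 2) * (e * (η * Real.log 2)) = e := by field_simp
        have : 0 ≤ 1 / (η * Real.log 2) := by positivity
        have : 0 ≤ e * (η * Real.log 2) := by positivity
        linarith
    _ ≤ _ := by gcongr

lemma add_one_le_rpow {η : ℝ} (hη : 0 < η) {p : ℕ} (hp : (2 : ℝ) ^ (1 / η) ≤ p) (e : ℕ) :
    (e + 1 : ℝ) ≤ ((p : ℝ) ^ e) ^ η :=
  calc (e + 1 : ℝ) ≤ 2 ^ e := by exact_mod_cast e.lt_two_pow_self
    _ = (((2 : ℝ) ^ (1 / η)) ^ e) ^ η := by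
        rw [Real.rpow_pow_comm (by positivity), ← Real.rpow_mul (by positivity)]
        simp [hη.ne']
    _ ≤ _ := by gcongr

theorem exists_card_divisors_le_rpow {η : ℝ} (hη : 0 < η) :
    ∃ C : ℝ, 1 ≤ C ∧ ∀ n : ℕ, n ≠ 0 → (#n.divisors : ℝ) ≤ C * (n : ℝ) ^ η := by
  obtain ⟨M, hM⟩ := exists_nat_ge ((2 : ℝ) ^ (1 / η))
  set c : ℝ := 1 + 1 / (η * Real.log 2)
  have hc : 1 ≤ c := le_add_of_nonneg_right <| by
    have := Real.log_nonneg one_le_two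
    positivity
  refine ⟨c ^ M, one_le_pow₀ hc, fun n hn ↦ ?_⟩
  have hfactor : ∀ p ∈ n.primeFactors, (n.factorization p + 1 : ℝ) ≤
      (if p < M then c else 1) * ((p : ℝ) ^ n.factorization p) ^ η := by
    intro p hp
    split_ifs with hpM
    · exact add_one_le_mul_rpow hη (Nat.prime_of_mem_primeFactors hp).two_le _
    · rw [one_mul]
      exact add_one_le_rpow hη (hM.trans (by exact_mod_cast not_lt.mp hpM)) _
  have hsmall : ∏ p ∈ n.primeFactors, (if p < M then c else 1) ≤ c ^ M := by
    rw [← prod_filter, prod_const]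
    refine pow_le_pow_right₀ hc ?_
    calc #{p ∈ n.primeFactors | p < M} ≤ #(range M) := card_le_card fun p ↦ by simp
      _ = M := card_range M
  calc (#n.divisors : ℝ) = ∏ p ∈ n.primeFactors, (n.factorization p + 1 : ℝ) := by
        rw [Nat.card_divisors hn]
        push_cast
        rfl
    _ ≤ ∏ p ∈ n.primeFactors, (if p < M then c else 1) * ((p : ℝ) ^ n.factorization p) ^ η :=
        prod_le_prod (fun _ _ ↦ by positivity) hfactor
    _ = (∏ p ∈ n.primeFactors, (if p < M then c else 1)) * (n : ℝ) ^ η := by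
        rw [prod_mul_distrib, Real.finsetProd_rpow _ _ fun _ _ ↦ by positivity]
        congr 2
        exact_mod_cast Nat.prod_factorization_pow_eq_self hn
    _ ≤ c ^ M * (n : ℝ) ^ η := by gcongr

lemma card_int_divisors_le (k : ℤ) : #k.divisors ≤ 2 * #k.natAbs.divisors := by
  rw [Int.divisors, disjUnion_eq_union]
  refine (card_union_le _ _).trans_eq ?_
  rw [card_map, card_map, two_mul]

end DivisorBound

section Squarefree

lemma isSquare_of_isSquare_mul_self_mul {x m : ℤ} (hx : x ≠ 0) (h : IsSquare (x * x * m)) :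
    IsSquare m := by
  obtain ⟨z, hz⟩ := h
  obtain ⟨s, rfl⟩ : x ∣ z := (Int.pow_dvd_pow_iff two_ne_zero).mp ⟨m, by linear_combination -hz⟩
  exact ⟨s, mul_left_cancel₀ (mul_ne_zero hx hx) (by linear_combination hz)⟩

lemma dvd_of_squarefree_of_isSquare_mul {A m : ℤ} (hA : Squarefree A) (h : IsSquare (A * m)) :
    A ∣ m := by
  obtain ⟨w, hw⟩ := h
  obtain ⟨t, rfl⟩ : A ∣ w := (hA.dvd_pow_iff_dvd two_ne_zero).mp ⟨m, by linear_combination -hw⟩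
  exact ⟨t * t, mul_left_cancel₀ hA.ne_zero (by linear_combination hw)⟩

lemma eq_of_squarefree_of_isSquare_mul {A B : ℤ} (hA : Squarefree A) (hB : Squarefree B)
    (h : IsSquare (A * B)) : A = B := by
  have hAB : A ∣ B := dvd_of_squarefree_of_isSquare_mul hA h
  have hBA : B ∣ A := dvd_of_squarefree_of_isSquare_mul hB (mul_comm A B ▸ h)
  obtain heq | hneg := Int.associated_iff.mp (associated_of_dvd_dvd hAB hBA)
  · exact heq
  · have := h.nonneg
    have : B = 0 := by nlinarith [sq_nonneg B]
    exact absurd this hB.ne_zero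

lemma eq_of_squarefree_of_isSquare_mul_self_mul {A B C : ℤ} (hA : A ≠ 0) (hB : Squarefree B)
    (hC : Squarefree C) (h : IsSquare (A * A * (B * C))) : B = C :=
  eq_of_squarefree_of_isSquare_mul hB hC (isSquare_of_isSquare_mul_self_mul hA h)

end Squarefree

section LogarithmicGap

lemma half_le_log_one_add {δ : ℝ} (hδ : 0 < δ) (hδ1 : δ ≤ 1) : δ / 2 ≤ Real.log (1 + δ) :=
  calc δ / 2 ≤ δ / (1 + δ) := by gcongr; linarith
    _ = 1 - (1 + δ)⁻¹ := by field_simp; ring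
    _ ≤ Real.log (1 + δ) := Real.one_sub_inv_le_log_of_pos (by positivity)

lemma floor_log_div_lt_of_mul_one_add_le {x y δ : ℝ} (hδ : 0 < δ) (hδ1 : δ ≤ 1) (hx : 1 ≤ x)
    (hxy : x * (1 + δ) ≤ y) : ⌊Real.log x / (δ / 2)⌋₊ < ⌊Real.log y / (δ / 2)⌋₊ := by
  have hx0 : 0 < x := one_pos.trans_le hx
  have hlog : Real.log x + δ / 2 ≤ Real.log y :=
    calc Real.log x + δ / 2 ≤ Real.log x + Real.log (1 + δ) := by
          gcongr
          exact half_le_log_one_add hδ hδ1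
      _ = Real.log (x * (1 + δ)) := (Real.log_mul hx0.ne' (by positivity)).symm
      _ ≤ Real.log y := Real.log_le_log (by positivity) hxy
  have hlog_nonneg : 0 ≤ Real.log x / (δ / 2) := div_nonneg (Real.log_nonneg hx) (by positivity)
  rw [← Nat.succ_le_iff, Nat.succ_eq_add_one, ← Nat.floor_add_one hlog_nonneg,
    div_add_one (by positivity)]
  exact Nat.floor_le_floor (by gcongr)

lemma card_le_of_one_add_mul_le {ι : Type*} [LinearOrder ι] {s : Finset ι} {g : ι → ℝ} {δ M : ℝ}
    (hδ : 0 < δ) (hδ1 : δ ≤ 1) (hM : 1 ≤ M) (hg : ∀ i ∈ s, 1 ≤ g i ∧ g i ≤ M)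
    (hgap : ∀ i ∈ s, ∀ j ∈ s, i < j → g i * (1 + δ) ≤ g j) :
    (#s : ℝ) ≤ 2 * Real.log M / δ + 1 := by
  set φ : ι → ℕ := fun i ↦ ⌊Real.log (g i) / (δ / 2)⌋₊
  have hφ_lt : ∀ i ∈ s, ∀ j ∈ s, i < j → φ i < φ j := fun i hi j hj hij ↦
    floor_log_div_lt_of_mul_one_add_le hδ hδ1 (hg i hi).1 (hgap i hi j hj hij)
  have hφ_mem : ∀ i ∈ s, φ i ∈ range (⌊2 * Real.log M / δ⌋₊ + 1) := by
    intro i hi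
    rw [mem_range, Nat.lt_succ_iff]
    refine Nat.floor_le_floor ?_
    rw [div_div_eq_mul_div, mul_comm]
    gcongr
    exacts [one_pos.trans_le (hg i hi).1, (hg i hi).2]
  have hφ_inj : Set.InjOn φ s := by
    intro i hi j hj hij
    rcases lt_trichotomy i j with h | h | h
    · exact absurd hij (hφ_lt i hi j hj h).ne
    · exact h
    · exact absurd hij (hφ_lt j hj i hi h).ne'
  have hcard : #s ≤ ⌊2 * Real.log M / δ⌋₊ + 1 := by
    simpa only [card_range] using card_le_card_of_injOn φ hφ_mem hφ_inj
  calc (#s : ℝ) ≤ (⌊2 * Real.log M / δ⌋₊ : ℝ) + 1 := by exact_mod_cast hcard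
    _ ≤ _ := by
        gcongr
        have := Real.log_nonneg hM
        exact Nat.floor_le (by positivity)

end LogarithmicGap

section PellEquation

variable {D u v : ℤ}

-- The determinant `X₁ Y₂ - X₂ Y₁` is a nonzero integer, so solutions repel each other.
lemma mul_le_of_pell {X₁ Y₁ X₂ Y₂ : ℤ} (hD : D ≠ 0) (huv : u ≠ v)
    (hle : |u| ≤ |v|) (h₁ : v * (X₁ ^ 2 - D) = u * (Y₁ ^ 2 - D))
    (h₂ : v * (X₂ ^ 2 - D) = u * (Y₂ ^ 2 - D)) (hX₁ : 0 ≤ X₁) (hX₂ : 0 ≤ X₂) (hY₁ : 0 ≤ Y₁)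
    (hY : Y₁ < Y₂) : X₁ * Y₁ ≤ 2 * |D| * (Y₂ ^ 2 - Y₁ ^ 2) := by
  have hsq : 0 < Y₂ ^ 2 - Y₁ ^ 2 := by nlinarith
  have hdet : v * ((X₁ * Y₂ - X₂ * Y₁) * (X₁ * Y₂ + X₂ * Y₁)) =
      D * (v - u) * (Y₂ ^ 2 - Y₁ ^ 2) := by
    linear_combination Y₂ ^ 2 * h₁ - Y₁ ^ 2 * h₂
  have hdet_ne : v * ((X₁ * Y₂ - X₂ * Y₁) * (X₁ * Y₂ + X₂ * Y₁)) ≠ 0 := by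
    rw [hdet]
    exact mul_ne_zero (mul_ne_zero hD (sub_ne_zero.mpr huv.symm)) hsq.ne'
  have hv : 0 < |v| := abs_pos.mpr (left_ne_zero_of_mul hdet_ne)
  have hone : 1 ≤ |X₁ * Y₂ - X₂ * Y₁| :=
    Int.one_le_abs (left_ne_zero_of_mul (right_ne_zero_of_mul hdet_ne))
  refine le_of_mul_le_mul_left ?_ hv
  calc |v| * (X₁ * Y₁) ≤ |v| * (|X₁ * Y₂ - X₂ * Y₁| * |X₁ * Y₂ + X₂ * Y₁|) := by
        have : X₁ * Y₁ ≤ |X₁ * Y₂ + X₂ * Y₁| := le_abs.mpr (Or.inl (by nlinarith))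
        exact mul_le_mul_of_nonneg_left
          (this.trans (le_mul_of_one_le_left (abs_nonneg _) hone)) hv.le
    _ = |D| * |v - u| * (Y₂ ^ 2 - Y₁ ^ 2) := by
        rw [← abs_mul, ← abs_mul, hdet, abs_mul, abs_mul, abs_of_pos hsq]
    _ ≤ |D| * (|v| + |v|) * (Y₂ ^ 2 - Y₁ ^ 2) := by
        gcongr
        exact (abs_sub v u).trans (by gcongr)
    _ = |v| * (2 * |D| * (Y₂ ^ 2 - Y₁ ^ 2)) := by ring

lemma sq_le_of_pell {X Y : ℤ} (hu : u ≠ 0) (hle : |u| ≤ |v|)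
    (h : v * (X ^ 2 - D) = u * (Y ^ 2 - D)) (hX : X ≠ 0) :
    Y ^ 2 ≤ |v| * (1 + 2 * |D|) * X ^ 2 := by
  have hX1 : 1 ≤ X ^ 2 := Int.add_one_le_of_lt (sq_pos_of_ne_zero hX)
  calc Y ^ 2 ≤ |u| * Y ^ 2 := le_mul_of_one_le_left (sq_nonneg Y) (Int.one_le_abs hu)
    _ = |v * X ^ 2 + (u - v) * D| := by
        rw [show v * X ^ 2 + (u - v) * D = u * Y ^ 2 by linear_combination h, abs_mul,
          abs_of_nonneg (sq_nonneg Y)]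
    _ ≤ |v| * X ^ 2 + (|v| + |v|) * |D| := by
        refine (abs_add_le _ _).trans ?_
        rw [abs_mul, abs_mul, abs_of_nonneg (sq_nonneg X)]
        gcongr
        exact (abs_sub u v).trans (by gcongr)
    _ ≤ |v| * X ^ 2 + (|v| + |v|) * |D| * X ^ 2 := by
        exact add_le_add_right (le_mul_of_one_le_right (by positivity) hX1) _
    _ = |v| * (1 + 2 * |D|) * X ^ 2 := by ring

lemma sq_mul_one_add_le_sq_of_pell {X₁ Y₁ X₂ Y₂ : ℤ} (hD : D ≠ 0) (hu : u ≠ 0) (huv : u ≠ v)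
    (hle : |u| ≤ |v|) (h₁ : v * (X₁ ^ 2 - D) = u * (Y₁ ^ 2 - D))
    (h₂ : v * (X₂ ^ 2 - D) = u * (Y₂ ^ 2 - D)) (hX₁ : 0 < X₁) (hX₂ : 0 ≤ X₂) (hY₁ : 0 ≤ Y₁)
    (hY : Y₁ < Y₂) :
    (Y₁ : ℝ) ^ 2 * (1 + 1 / (2 * |D| * √(|v| * (1 + 2 * |D|)))) ≤ (Y₂ : ℝ) ^ 2 := by
  have hXY : (X₁ * Y₁ : ℝ) ≤ 2 * |D| * (Y₂ ^ 2 - Y₁ ^ 2) := by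
    exact_mod_cast mul_le_of_pell hD huv hle h₁ h₂ hX₁.le hX₂ hY₁ hY
  have hsq : (Y₁ : ℝ) ^ 2 ≤ |v| * (1 + 2 * |D|) * X₁ ^ 2 := by
    exact_mod_cast sq_le_of_pell hu hle h₁ hX₁.ne'
  set s : ℝ := √(|v| * (1 + 2 * |D|))
  have hX₁' : (0 : ℝ) ≤ X₁ := by exact_mod_cast hX₁.le
  have : (0 : ℝ) ≤ Y₁ := by exact_mod_cast hY₁
  have hYX : (Y₁ : ℝ) ≤ s * X₁ := by
    rw [← Real.sqrt_sq hX₁', ← Real.sqrt_mul (by positivity)]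
    exact Real.le_sqrt_of_sq_le hsq
  have hvpos : 0 < |v| := (abs_pos.mpr hu).trans_le hle
  have hs : 0 < 2 * |D| * s := by positivity
  have hgap : (Y₁ : ℝ) ^ 2 ≤ (Y₂ ^ 2 - Y₁ ^ 2) * (2 * |D| * s) :=
    calc (Y₁ : ℝ) ^ 2 = Y₁ * Y₁ := sq _
      _ ≤ s * X₁ * Y₁ := by gcongr
      _ = s * (X₁ * Y₁) := by ring
      _ ≤ s * (2 * |D| * (Y₂ ^ 2 - Y₁ ^ 2)) := by gcongr
      _ = _ := by ring
  have := (div_le_iff₀ hs).mpr hgap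
  rw [mul_one_add, mul_one_div]
  linarith

lemma card_pos_le_of_pell {M : ℝ} {𝒴 : Finset ℕ} (hD : D ≠ 0) (hu : u ≠ 0) (huv : u ≠ v)
    (hle : |u| ≤ |v|) (hM : 1 ≤ M) (h𝒴 : ∀ Y ∈ 𝒴, 0 < Y ∧ Y ≤ M ∧
      ∃ X : ℕ, 0 < X ∧ v * ((X : ℤ) ^ 2 - D) = u * ((Y : ℤ) ^ 2 - D)) :
    (#𝒴 : ℝ) ≤ 8 * |D| * √(|v| * (1 + 2 * |D|)) * Real.log M + 1 := by
  set s : ℝ := √(|v| * (1 + 2 * |D|))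
  have hvpos : 0 < |v| := (abs_pos.mpr hu).trans_le hle
  have hD1 : (1 : ℝ) ≤ |D| := by exact_mod_cast Int.one_le_abs hD
  have hv1 : (1 : ℝ) ≤ |v| := by exact_mod_cast hvpos
  have hs : 1 ≤ s := Real.one_le_sqrt.mpr (one_le_mul_of_one_le_of_one_le hv1 (by linarith))
  have hDs : 1 ≤ 2 * |D| * s := one_le_mul_of_one_le_of_one_le (by linarith) hs
  have hcard := card_le_of_one_add_mul_le (s := 𝒴) (g := fun Y ↦ (Y : ℝ) ^ 2) (M := M ^ 2)
    (δ := 1 / (2 * |D| * s)) (by positivity) ((div_le_one (by positivity)).mpr hDs)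
    (one_le_pow₀ hM) ?_ ?_
  · calc (#𝒴 : ℝ) ≤ 2 * Real.log (M ^ 2) / (1 / (2 * |D| * s)) + 1 := hcard
      _ = 8 * |D| * s * Real.log M + 1 := by
          rw [Real.log_pow]
          field_simp
          push_cast
          ring
  · intro Y hY
    obtain ⟨hYpos, hYM, -⟩ := h𝒴 Y hY
    exact ⟨one_le_pow₀ (by exact_mod_cast hYpos), by gcongr⟩
  · intro Y₁ hY₁ Y₂ hY₂ hlt
    obtain ⟨-, -, X₁, hX₁, h₁⟩ := h𝒴 Y₁ hY₁
    obtain ⟨-, -, X₂, -, h₂⟩ := h𝒴 Y₂ hY₂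
    simpa only [Int.cast_natCast] using sq_mul_one_add_le_sq_of_pell hD hu huv hle h₁ h₂
      (by exact_mod_cast hX₁) (Int.natCast_nonneg X₂) (Int.natCast_nonneg Y₁)
      (by exact_mod_cast hlt)

theorem card_le_of_pell {M : ℝ} {𝒴 : Finset ℕ} (hD : D ≠ 0) (hu : u ≠ 0) (huv : u ≠ v)
    (hle : |u| ≤ |v|) (hM : 1 ≤ M) (h𝒴 : ∀ Y ∈ 𝒴, Y ≤ M ∧
      ∃ X : ℕ, v * ((X : ℤ) ^ 2 - D) = u * ((Y : ℤ) ^ 2 - D)) :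
    (#𝒴 : ℝ) ≤ 8 * |D| * √(|v| * (1 + 2 * |D|)) * Real.log M + 3 := by
  set 𝒴₀ := 𝒴.filter fun Y : ℕ ↦ v * (0 ^ 2 - D) = u * ((Y : ℤ) ^ 2 - D)
  have hX_zero : #𝒴₀ ≤ 1 := by
    refine card_le_one.mpr fun Y hY Z hZ ↦ ?_
    have hYZ : (Y : ℤ) ^ 2 - D = (Z : ℤ) ^ 2 - D :=
      mul_left_cancel₀ hu ((mem_filter.mp hY).2.symm.trans (mem_filter.mp hZ).2)
    exact Nat.pow_left_injective two_ne_zero (by exact_mod_cast sub_left_injective hYZ)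
  have hrest : (#(𝒴 \ (𝒴₀ ∪ {0})) : ℝ) ≤ 8 * |D| * √(|v| * (1 + 2 * |D|)) * Real.log M + 1 := by
    refine card_pos_le_of_pell hD hu huv hle hM fun Y hY ↦ ?_
    rw [mem_sdiff, mem_union, mem_singleton, not_or] at hY
    obtain ⟨hY𝒴, hY₀, hYne⟩ := hY
    obtain ⟨hYM, X, hX⟩ := h𝒴 Y hY𝒴
    refine ⟨Nat.pos_of_ne_zero hYne, hYM, X, Nat.pos_of_ne_zero ?_, hX⟩
    rintro rfl
    exact hY₀ (mem_filter.mpr ⟨hY𝒴, hX⟩)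
  have hcard : #𝒴 ≤ #(𝒴 \ (𝒴₀ ∪ {0})) + 2 :=
    calc #𝒴 ≤ #(𝒴 \ (𝒴₀ ∪ {0})) + #(𝒴₀ ∪ {0}) := by
          rw [add_comm]
          exact (card_le_card (subset_union_right.trans_eq union_sdiff_self_eq_union.symm)).trans
            (card_union_le _ _)
      _ ≤ #(𝒴 \ (𝒴₀ ∪ {0})) + (#𝒴₀ + #{0}) := by gcongr; exact card_union_le _ _
      _ ≤ #(𝒴 \ (𝒴₀ ∪ {0})) + 2 := by rw [card_singleton]; omega
  have : (#𝒴 : ℝ) ≤ #(𝒴 \ (𝒴₀ ∪ {0})) + 2 := by exact_mod_cast hcard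
  linarith

end PellEquation

section Counting

lemma card_le_card_mul_of_fiber_le {α β : Type*} [DecidableEq β] {s : Finset α} {t : Finset β}
    {f : α → β} {r : ℝ} (hf : ∀ a ∈ s, f a ∈ t) (hr : ∀ b ∈ t, (#{a ∈ s | f a = b} : ℝ) ≤ r) :
    (#s : ℝ) ≤ #t * r := by
  rw [card_eq_sum_card_fiberwise hf, Nat.cast_sum, ← nsmul_eq_mul]
  exact sum_le_card_nsmul t _ r hr

lemma card_le_of_dvd_mul_sub {s : Finset ℕ} {N d : ℕ} {a : ℤ} (hs : s ⊆ Icc 1 N) (ha : a ≠ 0)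
    (hdvd : ∀ n ∈ s, ∀ m ∈ s, (d : ℤ) ∣ a * (n - m)) :
    (#s : ℝ) ≤ |a| * N / d + 1 := by
  have hmaps : ∀ n ∈ s, a.natAbs * n / d ∈ range (a.natAbs * N / d + 1) := fun n hn ↦
    mem_range.mpr (Nat.lt_succ_of_le (by gcongr; exact (mem_Icc.mp (hs hn)).2))
  have hinj : Set.InjOn (fun n ↦ a.natAbs * n / d) s := by
    intro n hn m hm hdiv
    have hmod : a.natAbs * n ≡ a.natAbs * m [MOD d] := by
      refine Nat.ModEq.symm (Nat.modEq_iff_dvd.mpr ?_)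
      rw [Nat.cast_mul, Nat.cast_mul, ← mul_sub, Int.natCast_natAbs, ← dvd_abs, abs_mul, abs_abs,
        ← abs_mul, dvd_abs]
      exact hdvd n hn m hm
    refine Nat.eq_of_mul_eq_mul_left (Int.natAbs_pos.mpr ha) ?_
    rw [← Nat.div_add_mod (a.natAbs * n) d, ← Nat.div_add_mod (a.natAbs * m) d, hmod]
    exact congrArg (d * · + _) hdiv
  have hcard : #s ≤ a.natAbs * N / d + 1 := by
    simpa only [card_range] using card_le_card_of_injOn _ hmaps hinj
  calc (#s : ℝ) ≤ ((a.natAbs * N / d : ℕ) : ℝ) + 1 := by exact_mod_cast hcard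
    _ ≤ |a| * N / d + 1 := by
        gcongr
        refine Nat.cast_div_le.trans_eq ?_
        rw [Nat.cast_mul, Nat.cast_natAbs]

lemma card_le_of_subset_Icc {S : Finset ℕ} {N : ℕ} (hS : S ⊆ Icc 1 N) : #S ≤ N :=
  (card_le_card hS).trans_eq (by rw [Nat.card_Icc, Nat.add_sub_cancel])

end Counting

section Quadratic

/-- The sequence `n ↦ P(n)` of values of an integer polynomial at natural numbers. -/
abbrev evalNat (P : ℤ[X]) (n : ℕ) : ℤ := P.eval (n : ℤ)

variable {P : ℤ[X]}

lemma card_evalNat_eq_le (hdeg : P.natDegree ≠ 0) (s : Finset ℕ) (t : ℤ) :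
    #{n ∈ s | evalNat P n = t} ≤ P.natDegree := by
  have hdeg' : 0 < P.degree := natDegree_pos_iff_degree_pos.mp (Nat.pos_of_ne_zero hdeg)
  have hne : P - C t ≠ 0 := ne_zero_of_degree_gt (degree_sub_C (a := t) hdeg' ▸ hdeg')
  calc #{n ∈ s | evalNat P n = t} ≤ #(P - C t).roots.toFinset :=
        card_le_card_of_injOn (fun n : ℕ ↦ (n : ℤ))
          (fun n hn ↦ Multiset.mem_toFinset.mpr <| (mem_roots hne).mpr <| by
            rw [IsRoot.def, eval_sub, eval_C]
            exact sub_eq_zero.mpr (mem_filter.mp hn).2)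
          Nat.cast_injective.injOn
    _ ≤ (P - C t).roots.card := Multiset.toFinset_card_le _
    _ ≤ P.natDegree := card_roots_sub_C' hdeg'

variable (hdeg : P.natDegree = 2)
include hdeg

lemma eval_eq_of_natDegree_eq_two (x : ℤ) :
    P.eval x = P.leadingCoeff * x ^ 2 + P.coeff 1 * x + P.coeff 0 := by
  rw [eval_eq_sum_range, leadingCoeff, hdeg]
  simp only [sum_range_succ, sum_range_zero]
  ring

lemma leadingCoeff_ne_zero_of_natDegree_eq_two : P.leadingCoeff ≠ 0 :=
  leadingCoeff_ne_zero.mpr (ne_zero_of_natDegree_gt (n := 0) (by omega))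

lemma four_mul_leadingCoeff_mul_eval (x : ℤ) :
    4 * P.leadingCoeff * P.eval x = (2 * P.leadingCoeff * x + P.coeff 1) ^ 2 - P.discr := by
  have hdegree : P.degree = 2 := (degree_eq_iff_natDegree_eq_of_pos two_pos).mpr hdeg
  rw [discr_of_degree_eq_two hdegree, eval_eq_of_natDegree_eq_two hdeg, leadingCoeff, hdeg]
  ring

lemma discr_ne_zero_of_irreducible (hP : Irreducible P) : P.discr ≠ 0 := by
  intro hdisc
  have ha := leadingCoeff_ne_zero_of_natDegree_eq_two hdeg
  have hsquare : C (4 * P.leadingCoeff) * P = (C (2 * P.leadingCoeff) * X + C (P.coeff 1)) ^ 2 := by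
    refine Polynomial.funext fun x ↦ ?_
    simp only [eval_mul, eval_pow, eval_add, eval_C, eval_X]
    rw [four_mul_leadingCoeff_mul_eval hdeg, hdisc, sub_zero]
  have hlinear := natDegree_linear (b := P.coeff 1) (mul_ne_zero two_ne_zero ha)
  have hdvd : P ∣ C (2 * P.leadingCoeff) * X + C (P.coeff 1) :=
    hP.prime.dvd_of_dvd_pow ⟨_, (mul_comm _ _).trans hsquare |>.symm⟩
  have hle := natDegree_le_of_dvd hdvd (ne_zero_of_natDegree_gt (n := 0) (by omega))
  omega

lemma eval_sub_eval_eq_mul (x y : ℤ) :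
    P.eval x - P.eval y = (x - y) * (P.leadingCoeff * (x + y) + P.coeff 1) := by
  rw [eval_eq_of_natDegree_eq_two hdeg, eval_eq_of_natDegree_eq_two hdeg]
  ring

lemma abs_evalNat_le {n N : ℕ} (hn : n ∈ Icc 1 N) :
    |evalNat P n| ≤ (|P.leadingCoeff| + |P.coeff 1| + |P.coeff 0|) * N ^ 2 := by
  obtain ⟨hn1, hnN⟩ := mem_Icc.mp hn
  have hN1 : (1 : ℤ) ≤ N := by exact_mod_cast hn1.trans hnN
  calc |evalNat P n| ≤ |P.leadingCoeff| * n ^ 2 + |P.coeff 1| * n + |P.coeff 0| := by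
        rw [evalNat, eval_eq_of_natDegree_eq_two hdeg]
        refine (abs_add_three _ _ _).trans_eq ?_
        rw [abs_mul, abs_mul, Nat.abs_cast, abs_of_nonneg (sq_nonneg (n : ℤ))]
    _ ≤ |P.leadingCoeff| * N ^ 2 + |P.coeff 1| * N ^ 2 + |P.coeff 0| * N ^ 2 := by
        gcongr ?_ * ?_ ^ 2 + ?_ * ?_ + ?_
        · exact_mod_cast hnN
        · exact_mod_cast hnN.trans (Nat.le_self_pow two_ne_zero N)
        · exact le_mul_of_one_le_right (abs_nonneg _) (one_le_pow₀ hN1)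
    _ = (|P.leadingCoeff| + |P.coeff 1| + |P.coeff 0|) * N ^ 2 := by ring

lemma exists_sq_le_mul_abs_evalNat : ∃ K : ℝ, 1 ≤ K ∧ ∀ n : ℕ, evalNat P n ≠ 0 →
    (n : ℝ) ^ 2 ≤ K * |evalNat P n| := by
  set M : ℤ := |P.coeff 1| + |P.coeff 0| with hM_def
  have hM : 0 ≤ M := by positivity
  refine ⟨(2 + 4 * M ^ 2 : ℤ), by exact_mod_cast (by nlinarith), fun n hn ↦ ?_⟩
  suffices (n : ℤ) ^ 2 ≤ (2 + 4 * M ^ 2) * |evalNat P n| by exact_mod_cast this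
  have hval : 1 ≤ |evalNat P n| := Int.one_le_abs hn
  rcases n.eq_zero_or_pos with rfl | hnpos
  · rw [Nat.cast_zero, zero_pow two_ne_zero]
    positivity
  have hn1 : (1 : ℤ) ≤ n := by exact_mod_cast hnpos
  rcases lt_or_ge (n : ℤ) (2 * M) with hsmall | hlarge
  · nlinarith
  · have ha := Int.one_le_abs (leadingCoeff_ne_zero_of_natDegree_eq_two hdeg)
    have hlead : (n : ℤ) ^ 2 ≤ |evalNat P n| + M * n :=
      calc (n : ℤ) ^ 2 ≤ |P.leadingCoeff| * n ^ 2 := le_mul_of_one_le_left (by positivity) ha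
        _ = |evalNat P n - (P.coeff 1 * n + P.coeff 0)| := by
            rw [evalNat, eval_eq_of_natDegree_eq_two hdeg, add_assoc, add_sub_cancel_right, abs_mul,
              abs_of_nonneg (sq_nonneg (n : ℤ))]
        _ ≤ |evalNat P n| + (|P.coeff 1| * n + |P.coeff 0| * n) := by
            refine (abs_sub _ _).trans (add_le_add_right ((abs_add_le _ _).trans ?_) _)
            rw [abs_mul, Nat.abs_cast]
            gcongr
            exact le_mul_of_one_le_right (abs_nonneg _) hn1
        _ = |evalNat P n| + M * n := by rw [hM_def]; ring
    nlinarith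

lemma exists_abs_evalNat_rpow_le : ∃ K : ℝ, 0 ≤ K ∧ ∀ n : ℕ, n ≠ 0 → evalNat P n ≠ 0 →
    (|evalNat P n| : ℝ) ^ (-(1 / 3) : ℝ) ≤ K * (n : ℝ) ^ (-(2 / 3) : ℝ) := by
  obtain ⟨K, hK, hsq⟩ := exists_sq_le_mul_abs_evalNat hdeg
  refine ⟨K ^ (1 / 3 : ℝ), by positivity, fun n hn hval ↦ ?_⟩
  have hn0 : (0 : ℝ) < n := by positivity
  have hval0 : 0 < (|evalNat P n| : ℝ) := by positivity
  have hroot : (n : ℝ) ^ (2 / 3 : ℝ) ≤ K ^ (1 / 3 : ℝ) * (|evalNat P n| : ℝ) ^ (1 / 3 : ℝ) :=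
    calc (n : ℝ) ^ (2 / 3 : ℝ) = ((n : ℝ) ^ 2) ^ (1 / 3 : ℝ) := by
          rw [← Real.rpow_natCast_mul hn0.le]
          norm_num
      _ ≤ (K * |(evalNat P n : ℝ)|) ^ (1 / 3 : ℝ) := by
          gcongr
          exact_mod_cast hsq n hval
      _ = _ := Real.mul_rpow (by positivity) hval0.le
  rw [Real.rpow_neg hval0.le, Real.rpow_neg hn0.le, ← div_eq_mul_inv,
    le_div_iff₀ (by positivity), inv_mul_le_iff₀ (by positivity), mul_comm]
  exact hroot

-- With `g = gcd(d, n - m)`, the factorization of `P n - P m` fixes `n` modulo `g` and `a n` modulo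
-- the complementary divisor `d / g`.
lemma dvd_leadingCoeff_mul_sub {d : ℕ} (hd : Squarefree d) {n n' m : ℤ} (hn : (d : ℤ) ∣ P.eval n)
    (hn' : (d : ℤ) ∣ P.eval n') (hm : (d : ℤ) ∣ P.eval m)
    (hgcd : Int.gcd d (n - m) = Int.gcd d (n' - m)) :
    (d : ℤ) ∣ P.leadingCoeff * (n - n') := by
  obtain ⟨e, he⟩ : Int.gcd d (n - m) ∣ d := Int.natCast_dvd_natCast.mp (Int.gcd_dvd_left _ _)
  set g := Int.gcd d (n - m)
  have hg0 : (g : ℤ) ≠ 0 := by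
    rintro h
    rw [Int.natCast_eq_zero.mp h, zero_mul] at he
    exact hd.ne_zero he
  have hcop : IsCoprime (g : ℤ) e :=
    Nat.isCoprime_iff_coprime.mpr (Nat.coprime_of_squarefree_mul (he ▸ hd))
  have he_dvd : ∀ k : ℤ, (d : ℤ) ∣ P.eval k → Int.gcd d (k - m) = g →
      (e : ℤ) ∣ P.leadingCoeff * (k + m) + P.coeff 1 := by
    intro k hk hkg
    have hprod := dvd_sub hk hm
    rw [eval_sub_eval_eq_mul hdeg, ← Int.dvd_gcd_mul_iff_dvd_mul, hkg] at hprod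
    nth_rewrite 1 [he] at hprod
    rw [Nat.cast_mul] at hprod
    exact (mul_dvd_mul_iff_left hg0).mp hprod
  have hg_dvd : (g : ℤ) ∣ n - n' := by
    have h₁ : (g : ℤ) ∣ n - m := Int.gcd_dvd_right _ _
    have h₂ : (g : ℤ) ∣ n' - m := hgcd ▸ Int.gcd_dvd_right _ _
    simpa only [sub_sub_sub_cancel_right] using dvd_sub h₁ h₂
  have he_dvd_sub : (e : ℤ) ∣ P.leadingCoeff * (n - n') := by
    have := dvd_sub (he_dvd n hn rfl) (he_dvd n' hn' hgcd.symm)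
    rwa [add_sub_add_right_eq_sub, ← mul_sub, add_sub_add_right_eq_sub] at this
  rw [he, Nat.cast_mul]
  exact hcop.mul_dvd (hg_dvd.mul_left _) he_dvd_sub

theorem card_dvd_evalNat_le {d : ℕ} (hd : Squarefree d) (N : ℕ) :
    (#{n ∈ Icc 1 N | (d : ℤ) ∣ evalNat P n} : ℝ) ≤
      #d.divisors * (|P.leadingCoeff| * N / d + 1) := by
  obtain hempty | ⟨m, hm⟩ := {n ∈ Icc 1 N | (d : ℤ) ∣ evalNat P n}.eq_empty_or_nonempty
  · rw [hempty, card_empty, Nat.cast_zero]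
    positivity
  refine card_le_card_mul_of_fiber_le (f := fun n : ℕ ↦ Int.gcd d (n - m)) (fun n _ ↦ ?_)
    fun g _ ↦ ?_
  · exact Nat.mem_divisors.mpr
      ⟨Int.natCast_dvd_natCast.mp (Int.gcd_dvd_left _ _), hd.ne_zero⟩
  · refine card_le_of_dvd_mul_sub ((filter_subset _ _).trans (filter_subset _ _))
      (leadingCoeff_ne_zero_of_natDegree_eq_two hdeg)
      fun n hn n' hn' ↦ ?_
    simp only [mem_filter] at hn hn' hm
    exact dvd_leadingCoeff_mul_sub hdeg hd hn.1.2 hn'.1.2 hm.2 (hn.2.trans hn'.2.symm)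

end Quadratic

section RatioPairs

/-- The pairs `(x, y) ∈ S²` with `f x / f y = u / v`, written without division. -/
def ratioPairs {ι : Type*} (f : ι → ℤ) (S : Finset ι) (u v : ℤ) : Finset (ι × ι) :=
  {p ∈ S ×ˢ S | v * f p.1 = u * f p.2}

lemma mem_ratioPairs {ι : Type*} {f : ι → ℤ} {S : Finset ι} {u v : ℤ} {p : ι × ι} :
    p ∈ ratioPairs f S u v ↔ (p.1 ∈ S ∧ p.2 ∈ S) ∧ v * f p.1 = u * f p.2 := by
  rw [ratioPairs, mem_filter, mem_product]

lemma card_ratioPairs_swap {ι : Type*} (f : ι → ℤ) (S : Finset ι) (u v : ℤ) :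
    #(ratioPairs f S u v) = #(ratioPairs f S v u) :=
  card_equiv (Equiv.prodComm ι ι) fun p ↦ by
    rw [mem_ratioPairs, mem_ratioPairs, Equiv.prodComm_apply, Prod.fst_swap, Prod.snd_swap,
      and_comm (a := p.2 ∈ S), eq_comm]

variable {P : ℤ[X]} {S : Finset ℕ} {N : ℕ} {u v : ℤ}

lemma card_ratioPairs_le_two_mul (hdeg : P.natDegree = 2) (hv : v ≠ 0) {T : Finset ℕ}
    (hT : ∀ p ∈ ratioPairs (evalNat P) S u v, p.2 ∈ T) :
    (#(ratioPairs (evalNat P) S u v) : ℝ) ≤ #T * 2 := by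
  refine card_le_card_mul_of_fiber_le hT fun y _ ↦ ?_
  have hfiber : #{p ∈ ratioPairs (evalNat P) S u v | p.2 = y} ≤
      #{x ∈ S | evalNat P x = u * evalNat P y / v} := by
    refine card_le_card_of_injOn Prod.fst (fun p hp ↦ ?_) fun p hp q hq hpq ↦ ?_
    · obtain ⟨hpratio, rfl⟩ := mem_filter.mp hp
      obtain ⟨⟨hx, -⟩, hratio⟩ := mem_ratioPairs.mp hpratio
      exact mem_filter.mpr ⟨hx, Int.eq_ediv_of_mul_eq_right hv hratio⟩
    · exact Prod.ext hpq ((mem_filter.mp hp).2.trans (mem_filter.mp hq).2.symm)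
  exact_mod_cast hfiber.trans ((card_evalNat_eq_le (by omega) _ _).trans_eq hdeg)

lemma card_le_two_mul_card_image_natAbs (hdeg : P.natDegree = 2) (T : Finset ℕ) :
    (#T : ℝ) ≤ #(T.image fun y : ℕ ↦ (2 * P.leadingCoeff * y + P.coeff 1).natAbs) * 2 := by
  refine card_le_card_mul_of_fiber_le (fun y hy ↦ mem_image_of_mem _ hy) fun Y _ ↦ ?_
  have hfiber : {y ∈ T | (2 * P.leadingCoeff * (y : ℕ) + P.coeff 1).natAbs = Y} ⊆
      {y ∈ T | evalNat P y = ((Y : ℤ) ^ 2 - P.discr) / (4 * P.leadingCoeff)} := by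
    intro y hy
    obtain ⟨hyT, rfl⟩ := mem_filter.mp hy
    have ha := leadingCoeff_ne_zero_of_natDegree_eq_two hdeg
    refine mem_filter.mpr ⟨hyT, Int.eq_ediv_of_mul_eq_right (by positivity) ?_⟩
    rw [four_mul_leadingCoeff_mul_eval hdeg, Int.natAbs_sq]
  exact_mod_cast (card_le_card hfiber).trans ((card_evalNat_eq_le (by omega) _ _).trans_eq hdeg)

lemma abs_two_mul_leadingCoeff_mul_add_le (P : ℤ[X]) {y : ℕ} (hy1 : 1 ≤ y) (hyN : y ≤ N) :
    |2 * P.leadingCoeff * y + P.coeff 1| ≤ (2 * |P.leadingCoeff| + |P.coeff 1|) * N :=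
  calc |2 * P.leadingCoeff * y + P.coeff 1|
      ≤ 2 * |P.leadingCoeff| * y + |P.coeff 1| * 1 := by
        refine (abs_add_le _ _).trans_eq ?_
        rw [abs_mul, abs_mul, abs_two, Nat.abs_cast, mul_one]
    _ ≤ 2 * |P.leadingCoeff| * N + |P.coeff 1| * N := by
        gcongr
        exact_mod_cast hy1.trans hyN
    _ = (2 * |P.leadingCoeff| + |P.coeff 1|) * N := by ring

lemma card_ratioPairs_le_of_pell (hdeg : P.natDegree = 2) (hdisc : P.discr ≠ 0)
    (hS : S ⊆ Icc 1 N) (hN : 1 ≤ N) (hu : u ≠ 0) (huv : u ≠ v) (hle : |u| ≤ |v|) :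
    (#(ratioPairs (evalNat P) S u v) : ℝ) ≤
      4 * (8 * |P.discr| * √(|v| * (1 + 2 * |P.discr|)) *
        Real.log ((2 * |P.leadingCoeff| + |P.coeff 1|) * N) + 3) := by
  set 𝒴 := ((ratioPairs (evalNat P) S u v).image Prod.snd).image
    fun y : ℕ ↦ (2 * P.leadingCoeff * y + P.coeff 1).natAbs with h𝒴_def
  have hv : v ≠ 0 := abs_pos.mp ((abs_pos.mpr hu).trans_le hle)
  have hM : (1 : ℝ) ≤ (2 * |P.leadingCoeff| + |P.coeff 1|) * N := by
    have := Int.one_le_abs (leadingCoeff_ne_zero_of_natDegree_eq_two hdeg)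
    have := abs_nonneg (P.coeff 1)
    exact_mod_cast one_le_mul_of_one_le_of_one_le
      (by linarith : 1 ≤ 2 * |P.leadingCoeff| + |P.coeff 1|) (by exact_mod_cast hN : 1 ≤ (N : ℤ))
  have h𝒴 : (#𝒴 : ℝ) ≤ 8 * |P.discr| * √(|v| * (1 + 2 * |P.discr|)) *
      Real.log ((2 * |P.leadingCoeff| + |P.coeff 1|) * N) + 3 := by
    refine card_le_of_pell hdisc hu huv hle hM fun Y hY ↦ ?_
    simp only [h𝒴_def, image_image, mem_image, Function.comp_apply] at hY
    obtain ⟨⟨x, y⟩, hp, rfl⟩ := hY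
    obtain ⟨⟨-, hy⟩, hratio⟩ := mem_ratioPairs.mp hp
    obtain ⟨hy1, hyN⟩ := mem_Icc.mp (hS hy)
    refine ⟨?_, (2 * P.leadingCoeff * x + P.coeff 1).natAbs, ?_⟩
    · rw [Nat.cast_natAbs]
      exact_mod_cast abs_two_mul_leadingCoeff_mul_add_le P hy1 hyN
    · rw [Int.natAbs_sq, Int.natAbs_sq, ← four_mul_leadingCoeff_mul_eval hdeg,
        ← four_mul_leadingCoeff_mul_eval hdeg]
      linear_combination 4 * P.leadingCoeff * hratio
  calc (#(ratioPairs (evalNat P) S u v) : ℝ)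
      ≤ #((ratioPairs (evalNat P) S u v).image Prod.snd) * 2 :=
        card_ratioPairs_le_two_mul hdeg hv fun p hp ↦ mem_image_of_mem _ hp
    _ ≤ #𝒴 * 2 * 2 := by
        gcongr
        exact card_le_two_mul_card_image_natAbs hdeg _
    _ ≤ _ := by linarith

lemma card_ratioPairs_le_of_dvd (hdeg : P.natDegree = 2) (hS : S ⊆ Icc 1 N)
    (hcop : IsCoprime u v) (hv : Squarefree v) :
    (#(ratioPairs (evalNat P) S u v) : ℝ) ≤
      2 * (#v.natAbs.divisors * (|P.leadingCoeff| * N / |v| + 1)) := by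
  have hdvd : ∀ p ∈ ratioPairs (evalNat P) S u v,
      p.2 ∈ {y ∈ Icc 1 N | (v.natAbs : ℤ) ∣ evalNat P y} := by
    intro p hp
    obtain ⟨⟨-, hy⟩, hratio⟩ := mem_ratioPairs.mp hp
    exact mem_filter.mpr ⟨hS hy, Int.natAbs_dvd.mpr
      (hcop.symm.dvd_of_dvd_mul_left ⟨_, hratio.symm⟩)⟩
  calc (#(ratioPairs (evalNat P) S u v) : ℝ)
      ≤ #{y ∈ Icc 1 N | (v.natAbs : ℤ) ∣ evalNat P y} * 2 :=
        card_ratioPairs_le_two_mul hdeg hv.ne_zero hdvd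
    _ ≤ #v.natAbs.divisors * (|P.leadingCoeff| * N / v.natAbs + 1) * 2 := by
        gcongr
        exact card_dvd_evalNat_le hdeg (Int.squarefree_natAbs.mpr hv) N
    _ = _ := by rw [Nat.cast_natAbs, mul_comm]

lemma exists_card_ratioPairs_le_of_abs_le_rpow (hdeg : P.natDegree = 2) (hdisc : P.discr ≠ 0)
    {η : ℝ} (hη : 0 < η) : ∃ C : ℝ, 0 ≤ C ∧ ∀ (N : ℕ) (S : Finset ℕ) (u v : ℤ), 1 ≤ N →
      S ⊆ Icc 1 N → u ≠ 0 → u ≠ v → |u| ≤ |v| → |v| ≤ (N : ℝ) ^ (2 / 3 : ℝ) →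
      (#(ratioPairs (evalNat P) S u v) : ℝ) ≤ C * (N : ℝ) ^ (1 / 3 + η) := by
  set K : ℝ := 2 * |P.leadingCoeff| + |P.coeff 1|
  set w : ℝ := 1 + 2 * |P.discr|
  refine ⟨4 * (8 * |P.discr| * √w * (K ^ η / η) + 3), by positivity, ?_⟩
  intro N S u v hN hS hu huv hle hv
  have hN1 : (1 : ℝ) ≤ N := by exact_mod_cast hN
  have hpow : (N : ℝ) ^ (1 / 3 + η) = (N : ℝ) ^ (1 / 3 : ℝ) * (N : ℝ) ^ η :=
    Real.rpow_add (by positivity) _ _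
  have hsqrt : √(|v| * w) ≤ (N : ℝ) ^ (1 / 3 : ℝ) * √w := by
    rw [Real.sqrt_mul (by positivity)]
    gcongr
    refine (Real.sqrt_le_sqrt hv).trans_eq ?_
    rw [Real.sqrt_eq_rpow, ← Real.rpow_mul (by positivity)]
    norm_num
  have hlog : Real.log (K * N) ≤ K ^ η / η * (N : ℝ) ^ η :=
    calc Real.log (K * N) ≤ (K * N) ^ η / η := Real.log_le_rpow_div (by positivity) hη
      _ = _ := by rw [Real.mul_rpow (by positivity) (by positivity), mul_div_right_comm]
  calc (#(ratioPairs (evalNat P) S u v) : ℝ)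
      ≤ 4 * (8 * |P.discr| * √(|v| * w) * Real.log (K * N) + 3) :=
        card_ratioPairs_le_of_pell hdeg hdisc hS hN hu huv hle
    _ ≤ 4 * (8 * |P.discr| * √(|v| * w) * (K ^ η / η * (N : ℝ) ^ η) + 3) := by gcongr
    _ ≤ 4 * (8 * |P.discr| * ((N : ℝ) ^ (1 / 3 : ℝ) * √w) * (K ^ η / η * (N : ℝ) ^ η) +
          3 * (N : ℝ) ^ (1 / 3 + η)) := by
        gcongr
        exact le_mul_of_one_le_right (by norm_num) (Real.one_le_rpow hN1 (by positivity))
    _ = _ := by rw [hpow]; ring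

lemma card_ratioPairs_le_of_rpow_lt (hdeg : P.natDegree = 2) {η : ℝ} (hη : 0 ≤ η) (hN : 1 ≤ N)
    (hS : S ⊆ Icc 1 N) (hcop : IsCoprime u v) (hsq : Squarefree v)
    (hv : (N : ℝ) ^ (2 / 3 : ℝ) < |v|) :
    (#(ratioPairs (evalNat P) S u v) : ℝ) ≤
      2 * (|P.leadingCoeff| + 1) * (#v.natAbs.divisors * (N : ℝ) ^ (1 / 3 + η)) := by
  have hN1 : (1 : ℝ) ≤ N := by exact_mod_cast hN
  have hdiv : (N : ℝ) / |v| ≤ (N : ℝ) ^ (1 / 3 + η) :=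
    calc (N : ℝ) / |v| ≤ N / (N : ℝ) ^ (2 / 3 : ℝ) := by gcongr
      _ = (N : ℝ) ^ (1 / 3 : ℝ) := by
          nth_rewrite 1 [← Real.rpow_one (N : ℝ)]
          rw [← Real.rpow_sub (by positivity)]
          norm_num
      _ ≤ (N : ℝ) ^ (1 / 3 + η) := by gcongr; linarith
  calc (#(ratioPairs (evalNat P) S u v) : ℝ)
      ≤ 2 * (#v.natAbs.divisors * (|P.leadingCoeff| * N / |v| + 1)) :=
        card_ratioPairs_le_of_dvd hdeg hS hcop hsq
    _ ≤ 2 * (#v.natAbs.divisors *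
          (|P.leadingCoeff| * (N : ℝ) ^ (1 / 3 + η) + (N : ℝ) ^ (1 / 3 + η))) := by
        rw [mul_div_assoc]
        gcongr
        exact Real.one_le_rpow hN1 (by positivity)
    _ = _ := by ring

lemma exists_card_ratioPairs_le_of_abs_le (hdeg : P.natDegree = 2) (hdisc : P.discr ≠ 0) {η : ℝ}
    (hη : 0 < η) : ∃ C : ℝ, 0 ≤ C ∧ ∀ (N : ℕ) (S : Finset ℕ) (u v : ℤ), 1 ≤ N → S ⊆ Icc 1 N →
      u ≠ 0 → u ≠ v → |u| ≤ |v| → IsCoprime u v → Squarefree v →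
      (#(ratioPairs (evalNat P) S u v) : ℝ) ≤
        C * (#v.natAbs.divisors * (N : ℝ) ^ (1 / 3 + η)) := by
  obtain ⟨C, hC, hsmall⟩ := exists_card_ratioPairs_le_of_abs_le_rpow hdeg hdisc hη
  refine ⟨C + 2 * (|P.leadingCoeff| + 1), by positivity, ?_⟩
  intro N S u v hN hS hu huv hle hcop hsq
  have hdivisors : (1 : ℝ) ≤ #v.natAbs.divisors := by
    exact_mod_cast card_pos.mpr (Nat.nonempty_divisors.mpr (Int.natAbs_ne_zero.mpr hsq.ne_zero))
  rcases le_or_gt (|v| : ℝ) ((N : ℝ) ^ (2 / 3 : ℝ)) with hv | hv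
  · refine (hsmall N S u v hN hS hu huv hle (by exact_mod_cast hv)).trans ?_
    gcongr
    · exact le_add_of_nonneg_right (by positivity)
    · exact le_mul_of_one_le_left (by positivity) hdivisors
  · refine (card_ratioPairs_le_of_rpow_lt hdeg hη.le hN hS hcop hsq (by exact_mod_cast hv)).trans ?_
    gcongr
    exact le_add_of_nonneg_left hC

theorem exists_card_ratioPairs_le (hdeg : P.natDegree = 2) (hdisc : P.discr ≠ 0) {η : ℝ}
    (hη : 0 < η) : ∃ C : ℝ, 0 ≤ C ∧ ∀ (N : ℕ) (S : Finset ℕ) (u v : ℤ), 1 ≤ N → S ⊆ Icc 1 N →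
      u ≠ v → Squarefree (u * v) →
      (#(ratioPairs (evalNat P) S u v) : ℝ) ≤
        C * (#(u * v).natAbs.divisors * (N : ℝ) ^ (1 / 3 + η)) := by
  obtain ⟨C, hC, hbound⟩ := exists_card_ratioPairs_le_of_abs_le hdeg hdisc hη
  refine ⟨C, hC, fun N S u v hN hS huv hsq ↦ ?_⟩
  have hcop : IsCoprime u v := isRelPrime_iff_isCoprime.mp (IsRelPrime.of_squarefree_mul hsq)
  have : (u * v).natAbs ≠ 0 := Int.natAbs_ne_zero.mpr hsq.ne_zero
  rcases le_total |u| |v| with hle | hle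
  · refine (hbound N S u v hN hS hsq.of_mul_left.ne_zero huv hle hcop hsq.of_mul_right).trans ?_
    gcongr
    exact Int.natAbs_dvd_natAbs.mpr (dvd_mul_left v u)
  · rw [card_ratioPairs_swap]
    refine (hbound N S v u hN hS hsq.of_mul_right.ne_zero huv.symm hle hcop.symm
      hsq.of_mul_left).trans ?_
    gcongr
    exact Int.natAbs_dvd_natAbs.mpr (dvd_mul_right u v)

end RatioPairs

section SquareProducts

lemma exists_eq_mul_of_squarefree {A B : ℤ} (hA : Squarefree A) (hB : Squarefree B) :
    ∃ g u v : ℤ, g ≠ 0 ∧ A = g * u ∧ B = g * v ∧ Squarefree (u * v) := by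
  have hg : 0 < A.gcd B := Int.gcd_pos_of_ne_zero_left B hA.ne_zero
  obtain ⟨u, v, hcop, hAu, hBv⟩ := Int.exists_gcd_one hg
  refine ⟨A.gcd B, u, v, by exact_mod_cast hg.ne', by rwa [mul_comm], by rwa [mul_comm], ?_⟩
  refine squarefree_mul_iff.mpr ⟨(Int.isCoprime_iff_gcd_eq_one.mpr hcop).isRelPrime, ?_, ?_⟩
  · exact hA.squarefree_of_dvd (Dvd.intro _ hAu.symm)
  · exact hB.squarefree_of_dvd (Dvd.intro _ hBv.symm)

lemma eq_of_squarefree_mul_iff {u v : ℤ} (h : Squarefree (u * v)) : u = v ↔ u * v = 1 := by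
  refine ⟨?_, fun h1 ↦ ?_⟩
  · rintro rfl
    rcases Int.isUnit_iff.mp (h u dvd_rfl) with rfl | rfl <;> rfl
  · rcases Int.mul_eq_one_iff_eq_one_or_neg_one.mp h1 with ⟨rfl, rfl⟩ | ⟨rfl, rfl⟩ <;> rfl

lemma natAbs_le_gcd_pow_three {A B C D : ℤ} (hA : Squarefree A) (h : IsSquare (A * B * C * D)) :
    A.natAbs ≤ A.gcd B ^ 3 ∨ A.natAbs ≤ A.gcd C ^ 3 ∨ A.natAbs ≤ A.gcd D ^ 3 := by
  have hdvd : A ∣ B * (C * D) :=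
    dvd_of_squarefree_of_isSquare_mul hA (by rwa [← mul_assoc, ← mul_assoc])
  have hle : A.natAbs ≤ A.gcd B * (A.gcd C * A.gcd D) := by
    have hgcd : A.gcd (B * (C * D)) ∣ A.gcd B * (A.gcd C * A.gcd D) :=
      (Int.gcd_mul_right_dvd_mul_gcd A B (C * D)).trans
        (Nat.mul_dvd_mul_left _ (Int.gcd_mul_right_dvd_mul_gcd A C D))
    rw [Int.gcd_eq_natAbs_left hdvd] at hgcd
    refine Nat.le_of_dvd ?_ hgcd
    have := hA.ne_zero
    positivity
  by_contra! hlt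
  obtain ⟨hB, hC, hD⟩ := hlt
  have hcube : (A.gcd B * (A.gcd C * A.gcd D)) ^ 3 < A.natAbs ^ 3 := by
    rw [mul_pow, mul_pow, pow_succ' A.natAbs 2, sq]
    gcongr
  exact absurd hle (not_le.mpr (lt_of_pow_lt_pow_left₀ 3 (Nat.zero_le _) hcube))

end SquareProducts

section SquareQuadruples

variable {ι : Type*} {f : ι → ℤ} {S : Finset ι}

/-- The quadruples in `S⁴` along which the product of the values of `f` is a perfect square. -/
def squareQuadruples (f : ι → ℤ) (S : Finset ι) : Finset (ι × ι × ι × ι) :=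
  {q ∈ S ×ˢ S ×ˢ S ×ˢ S | IsSquare (f q.1 * f q.2.1 * f q.2.2.1 * f q.2.2.2)}

/-- The square quadruples whose first value differs from the three others. For squarefree values
these are the quadruples whose values are not equal in pairs. -/
def unpairedQuadruples (f : ι → ℤ) (S : Finset ι) : Finset (ι × ι × ι × ι) :=
  {q ∈ squareQuadruples f S | f q.1 ≠ f q.2.1 ∧ f q.1 ≠ f q.2.2.1 ∧ f q.1 ≠ f q.2.2.2}

/-- The pairs of distinct values with greatest common divisor at least the cube root of the first
value. -/
def largeGcdPairs (f : ι → ℤ) (S : Finset ι) : Finset (ι × ι) :=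
  {p ∈ S ×ˢ S | f p.1 ≠ f p.2 ∧ (f p.1).natAbs ≤ (f p.1).gcd (f p.2) ^ 3}

/-- The square quadruples whose first two entries form a pair in `largeGcdPairs f S`. -/
def largeGcdQuadruples (f : ι → ℤ) (S : Finset ι) : Finset (ι × ι × ι × ι) :=
  {q ∈ squareQuadruples f S |
    f q.1 ≠ f q.2.1 ∧ (f q.1).natAbs ≤ (f q.1).gcd (f q.2.1) ^ 3}

/-- The pairs completing `(x, y)` to a square quadruple. -/
def completions (f : ι → ℤ) (S : Finset ι) (x y : ι) : Finset (ι × ι) :=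
  {p ∈ S ×ˢ S | IsSquare (f x * f y * f p.1 * f p.2)}

lemma mem_squareQuadruples {q : ι × ι × ι × ι} : q ∈ squareQuadruples f S ↔
    (q.1 ∈ S ∧ q.2.1 ∈ S ∧ q.2.2.1 ∈ S ∧ q.2.2.2 ∈ S) ∧
      IsSquare (f q.1 * f q.2.1 * f q.2.2.1 * f q.2.2.2) := by
  simp only [squareQuadruples, mem_filter, mem_product]

lemma mem_largeGcdPairs {p : ι × ι} : p ∈ largeGcdPairs f S ↔
    (p.1 ∈ S ∧ p.2 ∈ S) ∧ f p.1 ≠ f p.2 ∧ (f p.1).natAbs ≤ (f p.1).gcd (f p.2) ^ 3 := by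
  rw [largeGcdPairs, mem_filter, mem_product]

section Completions

variable (hsq : ∀ x ∈ S, Squarefree (f x))
include hsq

lemma exists_forall_completions_mem_ratioPairs {x y : ι} (hx : x ∈ S) (hy : y ∈ S)
    (hxy : f x ≠ f y) :
    ∃ k : ℤ, Squarefree k ∧ k ≠ 1 ∧ k ∣ f x * f y ∧
      ∀ p ∈ completions f S x y, ∃ u ∈ k.divisors, p ∈ ratioPairs f S u (k / u) := by
  obtain ⟨g, u, v, hg, hgu, hgv, hk⟩ := exists_eq_mul_of_squarefree (hsq x hx) (hsq y hy)
  refine ⟨u * v, hk, fun hk1 ↦ hxy ?_, ⟨g * g, by rw [hgu, hgv]; ring⟩, fun p hp ↦ ?_⟩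
  · rw [hgu, hgv, (eq_of_squarefree_mul_iff hk).mpr hk1]
  · rw [completions, mem_filter, mem_product] at hp
    obtain ⟨⟨hz, hw⟩, hsquare⟩ := hp
    obtain ⟨h, u', v', hh, hhu, hhv, hk'⟩ := exists_eq_mul_of_squarefree (hsq _ hz) (hsq _ hw)
    have hkk' : u * v = u' * v' := by
      refine eq_of_squarefree_of_isSquare_mul hk hk'
        (isSquare_of_isSquare_mul_self_mul (mul_ne_zero hg hh) ?_)
      convert hsquare using 1
      rw [hgu, hgv, hhu, hhv]
      ring
    refine ⟨u', Int.mem_divisors.mpr ⟨⟨v', hkk'⟩, hk.ne_zero⟩, ?_⟩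
    rw [hkk', Int.mul_ediv_cancel_left v' hk'.of_mul_left.ne_zero]
    exact mem_ratioPairs.mpr ⟨⟨hz, hw⟩, by rw [hhu, hhv]; ring⟩

theorem card_completions_le {x y : ι} (hx : x ∈ S) (hy : y ∈ S) (hxy : f x ≠ f y) {r : ℝ}
    (hr : ∀ u v : ℤ, u ≠ v → Squarefree (u * v) → u * v ∣ f x * f y →
      (#(ratioPairs f S u v) : ℝ) ≤ r) :
    (#(completions f S x y) : ℝ) ≤ 2 * #(f x * f y).natAbs.divisors * r := by
  classical
  obtain ⟨k, hk, hk1, hkdvd, hmem⟩ := exists_forall_completions_mem_ratioPairs hsq hx hy hxy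
  have hratio : ∀ u ∈ k.divisors, (#(ratioPairs f S u (k / u)) : ℝ) ≤ r := by
    intro u hu
    have huk : u * (k / u) = k := Int.mul_ediv_cancel' (Int.mem_divisors.mp hu).1
    refine hr u (k / u) (fun h ↦ hk1 ?_) (by rwa [huk]) (by rwa [huk])
    rw [← huk]
    exact (eq_of_squarefree_mul_iff (by rwa [huk])).mp h
  have hdivisors : #k.divisors ≤ 2 * #(f x * f y).natAbs.divisors := by
    refine (card_int_divisors_le k).trans (Nat.mul_le_mul_left 2 (card_le_card ?_))
    exact Nat.divisors_subset_of_dvd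
      (Int.natAbs_ne_zero.mpr (mul_ne_zero (hsq x hx).ne_zero (hsq y hy).ne_zero))
      (Int.natAbs_dvd_natAbs.mpr hkdvd)
  have hr0 : 0 ≤ r := (Nat.cast_nonneg _).trans
    (hratio 1 (Int.mem_divisors.mpr ⟨one_dvd k, hk.ne_zero⟩))
  calc (#(completions f S x y) : ℝ) ≤ ∑ u ∈ k.divisors, (#(ratioPairs f S u (k / u)) : ℝ) := by
        exact_mod_cast (card_le_card fun p hp ↦ mem_biUnion.mpr (hmem p hp)).trans card_biUnion_le
    _ ≤ #k.divisors * r := by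
        rw [← nsmul_eq_mul]
        exact sum_le_card_nsmul _ _ r hratio
    _ ≤ 2 * #(f x * f y).natAbs.divisors * r := by
        gcongr
        exact_mod_cast hdivisors

end Completions

section Unpaired

lemma card_largeGcdQuadruples_le {r : ℝ}
    (hr : ∀ p ∈ largeGcdPairs f S, (#(completions f S p.1 p.2) : ℝ) ≤ r) :
    (#(largeGcdQuadruples f S) : ℝ) ≤ #(largeGcdPairs f S) * r := by
  classical
  refine card_le_card_mul_of_fiber_le (f := fun q : ι × ι × ι × ι ↦ (q.1, q.2.1)) ?_ ?_
  · intro q hq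
    obtain ⟨hq, hgcd⟩ := mem_filter.mp hq
    obtain ⟨⟨hx, hy, -, -⟩, -⟩ := mem_squareQuadruples.mp hq
    exact mem_largeGcdPairs.mpr ⟨⟨hx, hy⟩, hgcd⟩
  · rintro ⟨x, y⟩ hp
    refine le_trans (Nat.cast_le.mpr ?_) (hr (x, y) hp)
    refine card_le_card_of_injOn (fun q ↦ q.2.2) ?_ ?_
    · rintro ⟨x', y', z, w⟩ hq
      obtain ⟨hq, hxy⟩ := mem_filter.mp hq
      obtain ⟨⟨-, -, hz, hw⟩, hsquare⟩ := mem_squareQuadruples.mp (mem_filter.mp hq).1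
      obtain ⟨rfl, rfl⟩ := Prod.mk.inj hxy
      exact mem_filter.mpr ⟨mem_product.mpr ⟨hz, hw⟩, hsquare⟩
    · rintro ⟨x₁, y₁, p₁⟩ hq₁ ⟨x₂, y₂, p₂⟩ hq₂ (rfl : p₁ = p₂)
      obtain ⟨rfl, rfl⟩ := Prod.mk.inj (mem_filter.mp hq₁).2
      obtain ⟨rfl, rfl⟩ := Prod.mk.inj (mem_filter.mp hq₂).2
      rfl

lemma card_unpairedQuadruples_le_three_mul (hsq : ∀ x ∈ S, Squarefree (f x)) :
    #(unpairedQuadruples f S) ≤ 3 * #(largeGcdQuadruples f S) := by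
  classical
  set R := largeGcdQuadruples f S
  have hcover : unpairedQuadruples f S ⊆ R ∪ ((R.image fun q ↦ (q.1, q.2.2.1, q.2.1, q.2.2.2)) ∪
      R.image fun q ↦ (q.1, q.2.2.2, q.2.2.1, q.2.1)) := by
    rintro ⟨x, y, z, w⟩ hq
    obtain ⟨hq, hxy, hxz, hxw⟩ := mem_filter.mp hq
    obtain ⟨⟨hx, hy, hz, hw⟩, hsquare⟩ := mem_squareQuadruples.mp hq
    have mem_R : ∀ {y' z' w'}, y' ∈ S → z' ∈ S → w' ∈ S → f x ≠ f y' →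
        f y' * f z' * f w' = f y * f z * f w → (f x).natAbs ≤ (f x).gcd (f y') ^ 3 →
        (x, y', z', w') ∈ R := by
      intro y' z' w' hy' hz' hw' hne hprod hgcd
      refine mem_filter.mpr ⟨mem_squareQuadruples.mpr ⟨⟨hx, hy', hz', hw'⟩, ?_⟩, hne, hgcd⟩
      convert hsquare using 1
      linear_combination f x * hprod
    rw [mem_union, mem_union, mem_image, mem_image]
    rcases natAbs_le_gcd_pow_three (hsq x hx) hsquare with hgcd | hgcd | hgcd
    · exact Or.inl (mem_R hy hz hw hxy rfl hgcd)
    · exact Or.inr (Or.inl ⟨_, mem_R hz hy hw hxz (by ring) hgcd, rfl⟩)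
    · exact Or.inr (Or.inr ⟨_, mem_R hw hz hy hxw (by ring) hgcd, rfl⟩)
  calc #(unpairedQuadruples f S) ≤ #R + (#R + #R) := by
        refine (card_le_card hcover).trans ((card_union_le _ _).trans (Nat.add_le_add_left ?_ _))
        exact (card_union_le _ _).trans (Nat.add_le_add card_image_le card_image_le)
    _ = 3 * #R := by ring

theorem card_unpairedQuadruples_le (hsq : ∀ x ∈ S, Squarefree (f x)) {r : ℝ}
    (hr : ∀ p ∈ largeGcdPairs f S, (#(completions f S p.1 p.2) : ℝ) ≤ r) :
    (#(unpairedQuadruples f S) : ℝ) ≤ 3 * (#(largeGcdPairs f S) * r) :=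
  calc (#(unpairedQuadruples f S) : ℝ) ≤ 3 * #(largeGcdQuadruples f S) := by
        exact_mod_cast card_unpairedQuadruples_le_three_mul hsq
    _ ≤ 3 * (#(largeGcdPairs f S) * r) := by gcongr; exact card_largeGcdQuadruples_le hr

end Unpaired

section Paired

theorem three_mul_card_sq_le (f : ι → ℤ) (S : Finset ι) :
    3 * #S ^ 2 ≤ #(squareQuadruples f S) + 2 * #S := by
  classical
  set T₁ := (S ×ˢ S).image fun p ↦ (p.1, p.1, p.2, p.2)
  set T₂ := S.offDiag.image fun p ↦ (p.1, p.2, p.1, p.2)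
  set T₃ := S.offDiag.image fun p ↦ (p.1, p.2, p.2, p.1)
  have hT₁ : #T₁ = #S * #S := by
    rw [card_image_of_injective _ fun p q h ↦ by simp_all [Prod.ext_iff], card_product]
  have hT₂ : #T₂ = #S * #S - #S := by
    rw [card_image_of_injective _ fun p q h ↦ by simp_all [Prod.ext_iff], offDiag_card]
  have hT₃ : #T₃ = #S * #S - #S := by
    rw [card_image_of_injective _ fun p q h ↦ by simp_all [Prod.ext_iff], offDiag_card]
  have hdisj₁₂ : Disjoint T₁ T₂ := by
    simp only [T₁, T₂, disjoint_left, mem_image, mem_offDiag]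
    grind
  have hdisj₃ : Disjoint (T₁ ∪ T₂) T₃ := by
    simp only [T₁, T₂, T₃, disjoint_left, mem_union, mem_image, mem_offDiag]
    grind
  have hsub : T₁ ∪ T₂ ∪ T₃ ⊆ squareQuadruples f S := by
    intro q hq
    simp only [T₁, T₂, T₃, mem_union, mem_image, mem_product, mem_offDiag] at hq
    rcases hq with (⟨p, hp, rfl⟩ | ⟨p, hp, rfl⟩) | ⟨p, hp, rfl⟩
    · exact mem_squareQuadruples.mpr ⟨⟨hp.1, hp.1, hp.2, hp.2⟩, f p.1 * f p.2, by ring⟩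
    · exact mem_squareQuadruples.mpr ⟨⟨hp.1, hp.2.1, hp.1, hp.2.1⟩, f p.1 * f p.2, by ring⟩
    · exact mem_squareQuadruples.mpr ⟨⟨hp.1, hp.2.1, hp.2.1, hp.1⟩, f p.1 * f p.2, by ring⟩
  have hcard := card_le_card hsub
  rw [card_union_of_disjoint hdisj₃, card_union_of_disjoint hdisj₁₂, hT₁, hT₂, hT₃] at hcard
  rw [sq]
  omega

theorem card_squareQuadruples_le (hsq : ∀ x ∈ S, Squarefree (f x)) :
    #(squareQuadruples f S) ≤ #(unpairedQuadruples f S) + 3 * #(ratioPairs f S 1 1) ^ 2 := by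
  classical
  set E := ratioPairs f S 1 1
  have mem_E : ∀ {x y}, x ∈ S → y ∈ S → f x = f y → (x, y) ∈ E := fun hx hy hxy ↦
    mem_ratioPairs.mpr ⟨⟨hx, hy⟩, congrArg (1 * ·) hxy⟩
  have hcover : squareQuadruples f S ⊆ unpairedQuadruples f S ∪
      ((E ×ˢ E).image (fun p ↦ (p.1.1, p.1.2, p.2.1, p.2.2)) ∪
      ((E ×ˢ E).image (fun p ↦ (p.1.1, p.2.1, p.1.2, p.2.2)) ∪
      (E ×ˢ E).image fun p ↦ (p.1.1, p.2.1, p.2.2, p.1.2))) := by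
    rintro ⟨x, y, z, w⟩ hq
    obtain ⟨⟨hx, hy, hz, hw⟩, hsquare⟩ := mem_squareQuadruples.mp hq
    simp only [mem_union, mem_image, mem_product]
    by_cases hxy : f x = f y
    · have hzw : f z = f w := eq_of_squarefree_of_isSquare_mul_self_mul (hsq x hx).ne_zero
        (hsq z hz) (hsq w hw) (by convert hsquare using 1; rw [← hxy]; ring)
      exact Or.inr (Or.inl ⟨((x, y), (z, w)), ⟨mem_E hx hy hxy, mem_E hz hw hzw⟩, rfl⟩)
    by_cases hxz : f x = f z
    · have hyw : f y = f w := eq_of_squarefree_of_isSquare_mul_self_mul (hsq x hx).ne_zero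
        (hsq y hy) (hsq w hw) (by convert hsquare using 1; rw [← hxz]; ring)
      exact Or.inr (Or.inr (Or.inl ⟨((x, z), (y, w)), ⟨mem_E hx hz hxz, mem_E hy hw hyw⟩, rfl⟩))
    by_cases hxw : f x = f w
    · have hyz : f y = f z := eq_of_squarefree_of_isSquare_mul_self_mul (hsq x hx).ne_zero
        (hsq y hy) (hsq z hz) (by convert hsquare using 1; rw [← hxw]; ring)
      exact Or.inr (Or.inr (Or.inr ⟨((x, w), (y, z)), ⟨mem_E hx hw hxw, mem_E hy hz hyz⟩, rfl⟩))
    exact Or.inl (mem_filter.mpr ⟨hq, hxy, hxz, hxw⟩)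
  refine (card_le_card hcover).trans ((card_union_le _ _).trans (Nat.add_le_add_left ?_ _))
  calc _ ≤ #(E ×ˢ E) + (#(E ×ˢ E) + #(E ×ˢ E)) := by
        refine (card_union_le _ _).trans (Nat.add_le_add card_image_le ?_)
        exact (card_union_le _ _).trans (Nat.add_le_add card_image_le card_image_le)
    _ = 3 * #E ^ 2 := by rw [card_product]; ring

end Paired

end SquareQuadruples

section LargeGcdPairs

lemma sum_rpow_neg_two_thirds_le (N : ℕ) :
    ∑ n ∈ Icc 1 N, (n : ℝ) ^ (-(2 / 3) : ℝ) ≤ 3 * (N : ℝ) ^ (1 / 3 : ℝ) := by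
  induction N with
  | zero => simp
  | succ n ih =>
    set x : ℝ := ((n + 1 : ℕ) : ℝ) ^ (1 / 3 : ℝ) with hx_def
    set y : ℝ := (n : ℝ) ^ (1 / 3 : ℝ) with hy_def
    have hx : 0 < x := by positivity
    have hy : 0 ≤ y := by positivity
    have hxy : y ≤ x := by rw [hx_def, hy_def]; gcongr; exact n.le_succ
    have hcubes : x ^ 3 - y ^ 3 = 1 := by
      rw [hx_def, hy_def, ← Real.rpow_mul_natCast (by positivity),
        ← Real.rpow_mul_natCast (by positivity)]
      norm_num
    have hterm : ((n + 1 : ℕ) : ℝ) ^ (-(2 / 3) : ℝ) = (x ^ 2)⁻¹ := by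
      rw [hx_def, ← Real.rpow_mul_natCast (by positivity), Real.rpow_neg (by positivity)]
      norm_num
    have hstep : (x ^ 2)⁻¹ ≤ 3 * (x - y) := by
      rw [inv_le_iff_one_le_mul₀ (by positivity)]
      nlinarith [mul_nonneg (sub_nonneg.mpr hxy) (mul_nonneg hx.le (sub_nonneg.mpr hxy)),
        mul_nonneg (sub_nonneg.mpr hxy) (mul_nonneg hy (sub_nonneg.mpr hxy))]
    rw [sum_Icc_succ_top (by omega), hterm]
    linarith

lemma sum_mul_rpow_neg_two_thirds_add_one_le {b : ℝ} (hb : 0 ≤ b) (N : ℕ) :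
    ∑ n ∈ Icc 1 N, (b * N * (n : ℝ) ^ (-(2 / 3) : ℝ) + 1) ≤
      (3 * b + 1) * (N : ℝ) ^ (4 / 3 : ℝ) := by
  rcases N.eq_zero_or_pos with rfl | hN
  · simp
  have hN1 : (1 : ℝ) ≤ N := by exact_mod_cast hN
  have hpow : (N : ℝ) * (N : ℝ) ^ (1 / 3 : ℝ) = (N : ℝ) ^ (4 / 3 : ℝ) := by
    rw [← Real.rpow_one_add' (by positivity) (by norm_num)]
    norm_num
  calc ∑ n ∈ Icc 1 N, (b * N * (n : ℝ) ^ (-(2 / 3) : ℝ) + 1)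
      = b * N * ∑ n ∈ Icc 1 N, (n : ℝ) ^ (-(2 / 3) : ℝ) + N := by
        rw [sum_add_distrib, ← mul_sum, sum_const, Nat.card_Icc, nsmul_one, Nat.add_sub_cancel]
    _ ≤ b * N * (3 * (N : ℝ) ^ (1 / 3 : ℝ)) + (N : ℝ) ^ (4 / 3 : ℝ) := by
        gcongr
        · exact sum_rpow_neg_two_thirds_le N
        · exact Real.self_le_rpow_of_one_le hN1 (by norm_num)
    _ = (3 * b + 1) * (N : ℝ) ^ (4 / 3 : ℝ) := by
        rw [← hpow]
        ring

lemma card_filter_fst_largeGcdPairs_le {ι : Type*} [DecidableEq ι] {f : ι → ℤ} {S T : Finset ι}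
    (hST : S ⊆ T) (x : ι) : #{p ∈ largeGcdPairs f S | p.1 = x} ≤
      #{y ∈ T | (f x).natAbs ≤ (f x).gcd (f y) ^ 3} := by
  refine card_le_card_of_injOn Prod.snd (fun p hp ↦ ?_) fun p hp q hq hpq ↦ ?_
  · obtain ⟨hpair, rfl⟩ := mem_filter.mp hp
    obtain ⟨⟨-, hy⟩, -, hgcd⟩ := mem_largeGcdPairs.mp hpair
    exact mem_filter.mpr ⟨hST hy, hgcd⟩
  · exact Prod.ext ((mem_filter.mp hp).2.trans (mem_filter.mp hq).2.symm) hpq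

variable {P : ℤ[X]} (hdeg : P.natDegree = 2)
include hdeg

lemma card_natAbs_le_gcd_pow_three_le {A : ℤ} (hA : Squarefree A) (N : ℕ) :
    (#{y ∈ Icc 1 N | A.natAbs ≤ A.gcd (evalNat P y) ^ 3} : ℝ) ≤
      #A.natAbs.divisors *
        (#A.natAbs.divisors * (|P.leadingCoeff| * N * (|A| : ℝ) ^ (-(1 / 3) : ℝ) + 1)) := by
  have hApos : 0 < A.natAbs := Int.natAbs_pos.mpr hA.ne_zero
  refine card_le_card_mul_of_fiber_le (f := fun y ↦ A.gcd (evalNat P y)) (fun y _ ↦ ?_)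
    fun g hg ↦ ?_
  · exact Nat.mem_divisors.mpr ⟨Int.natCast_dvd.mp (Int.gcd_dvd_left _ _), hApos.ne'⟩
  obtain ⟨hgA, -⟩ := Nat.mem_divisors.mp hg
  rcases lt_or_ge (g ^ 3) A.natAbs with hsmall | hlarge
  · rw [filter_filter, filter_false_of_mem, card_empty, Nat.cast_zero]
    · positivity
    · rintro y - ⟨hle, rfl⟩
      exact absurd hle (not_le.mpr hsmall)
  have hgpos : 0 < g := Nat.pos_of_dvd_of_pos hgA hApos
  have hinv : (g : ℝ)⁻¹ ≤ (|A| : ℝ) ^ (-(1 / 3) : ℝ) := by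
    have hroot : (|A| : ℝ) ^ (1 / 3 : ℝ) ≤ g := by
      rw [← Real.le_rpow_inv_iff_of_pos (by positivity) (by positivity) (by positivity), one_div,
        inv_inv]
      rw [← Int.cast_abs, ← Int.natCast_natAbs]
      exact_mod_cast hlarge
    rw [Real.rpow_neg (by positivity)]
    exact inv_anti₀ (by have := hA.ne_zero; positivity) hroot
  calc (#{y ∈ {y ∈ Icc 1 N | A.natAbs ≤ A.gcd (evalNat P y) ^ 3} | A.gcd (evalNat P y) = g} : ℝ)
      ≤ #{y ∈ Icc 1 N | (g : ℤ) ∣ evalNat P y} := by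
        gcongr
        intro y hy
        rw [mem_filter, mem_filter] at hy
        exact mem_filter.mpr ⟨hy.1.1, hy.2 ▸ Int.gcd_dvd_right _ _⟩
    _ ≤ #g.divisors * (|P.leadingCoeff| * N * (g : ℝ)⁻¹ + 1) := by
        rw [← div_eq_mul_inv]
        exact card_dvd_evalNat_le hdeg
          ((Int.squarefree_natAbs.mpr hA).squarefree_of_dvd hgA) N
    _ ≤ _ := by
        gcongr

theorem exists_card_largeGcdPairs_le : ∃ C : ℝ, 0 ≤ C ∧ ∀ (N : ℕ) (S : Finset ℕ) (t : ℝ),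
    S ⊆ Icc 1 N → (∀ x ∈ S, Squarefree (evalNat P x)) →
    (∀ x ∈ S, (#(evalNat P x).natAbs.divisors : ℝ) ≤ t) →
    (#(largeGcdPairs (evalNat P) S) : ℝ) ≤ C * (t ^ 2 * (N : ℝ) ^ (4 / 3 : ℝ)) := by
  obtain ⟨K, hK, hrpow⟩ := exists_abs_evalNat_rpow_le hdeg
  set b : ℝ := |P.leadingCoeff| * K with hb_def
  refine ⟨3 * b + 1, by positivity, fun N S t hS hsq ht ↦ ?_⟩
  have hfiber : ∀ x ∈ S, (#{p ∈ largeGcdPairs (evalNat P) S | p.1 = x} : ℝ) ≤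
      t ^ 2 * (b * N * (x : ℝ) ^ (-(2 / 3) : ℝ) + 1) := by
    intro x hx
    have hx0 : x ≠ 0 := Nat.one_le_iff_ne_zero.mp (mem_Icc.mp (hS hx)).1
    calc (#{p ∈ largeGcdPairs (evalNat P) S | p.1 = x} : ℝ)
        ≤ t * (t * (|P.leadingCoeff| * N * (K * (x : ℝ) ^ (-(2 / 3) : ℝ)) + 1)) := by
          refine (Nat.cast_le.mpr (card_filter_fst_largeGcdPairs_le hS x)).trans
            ((card_natAbs_le_gcd_pow_three_le hdeg (hsq x hx) N).trans ?_)
          have ht0 : 0 ≤ t := (Nat.cast_nonneg _).trans (ht x hx)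
          gcongr
          exacts [ht x hx, ht x hx, hrpow x hx0 (hsq x hx).ne_zero]
      _ = _ := by rw [hb_def]; ring
  have hmaps : ∀ p ∈ largeGcdPairs (evalNat P) S, p.1 ∈ S := fun p hp ↦
    (mem_largeGcdPairs.mp hp).1.1
  calc (#(largeGcdPairs (evalNat P) S) : ℝ)
      = ∑ x ∈ S, (#{p ∈ largeGcdPairs (evalNat P) S | p.1 = x} : ℝ) := by
        exact_mod_cast card_eq_sum_card_fiberwise hmaps
    _ ≤ ∑ x ∈ S, t ^ 2 * (b * N * (x : ℝ) ^ (-(2 / 3) : ℝ) + 1) := sum_le_sum hfiber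
    _ ≤ ∑ x ∈ Icc 1 N, t ^ 2 * (b * N * (x : ℝ) ^ (-(2 / 3) : ℝ) + 1) :=
        sum_le_sum_of_subset_of_nonneg hS fun _ _ _ ↦ by positivity
    _ ≤ t ^ 2 * ((3 * b + 1) * (N : ℝ) ^ (4 / 3 : ℝ)) := by
        rw [← mul_sum]
        gcongr
        exact sum_mul_rpow_neg_two_thirds_add_one_le (by positivity) N
    _ = (3 * b + 1) * (t ^ 2 * (N : ℝ) ^ (4 / 3 : ℝ)) := mul_left_comm _ _ _

end LargeGcdPairs

section FourthMoment

variable {P : ℤ[X]}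

lemma exists_card_divisors_le_of_dvd_evalNat_mul (hdeg : P.natDegree = 2) {η : ℝ} (hη : 0 < η) :
    ∃ C : ℝ, 0 ≤ C ∧ ∀ (N x y : ℕ) (k : ℤ), x ∈ Icc 1 N → y ∈ Icc 1 N →
      evalNat P x * evalNat P y ≠ 0 → k ∣ evalNat P x * evalNat P y →
      (#k.natAbs.divisors : ℝ) ≤ C * (N : ℝ) ^ η := by
  obtain ⟨C, hC, hdivisors⟩ := exists_card_divisors_le_rpow (η := η / 4) (by positivity)
  set H : ℤ := |P.leadingCoeff| + |P.coeff 1| + |P.coeff 0|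
  refine ⟨C * ((H : ℝ) ^ 2) ^ (η / 4), by positivity, fun N x y k hx hy hne hk ↦ ?_⟩
  have hkabs : (k.natAbs : ℝ) ≤ (H : ℝ) ^ 2 * (N : ℝ) ^ 4 := by
    suffices |k| ≤ H ^ 2 * N ^ 4 by rw [Nat.cast_natAbs]; exact_mod_cast this
    calc |k| ≤ |evalNat P x * evalNat P y| :=
          Int.le_of_dvd (abs_pos.mpr hne) ((abs_dvd_abs _ _).mpr hk)
      _ = |evalNat P x| * |evalNat P y| := abs_mul _ _
      _ ≤ H * N ^ 2 * (H * N ^ 2) := by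
          gcongr
          exacts [abs_evalNat_le hdeg hx, abs_evalNat_le hdeg hy]
      _ = H ^ 2 * N ^ 4 := by ring
  calc (#k.natAbs.divisors : ℝ) ≤ C * (k.natAbs : ℝ) ^ (η / 4) :=
        hdivisors _ (Int.natAbs_ne_zero.mpr (ne_zero_of_dvd_ne_zero hne hk))
    _ ≤ C * ((H : ℝ) ^ 2 * (N : ℝ) ^ 4) ^ (η / 4) := by gcongr
    _ = C * ((H : ℝ) ^ 2) ^ (η / 4) * (N : ℝ) ^ η := by
        have hN4 : ((N : ℝ) ^ 4) ^ (η / 4) = (N : ℝ) ^ η := by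
          rw [← Real.rpow_natCast_mul (by positivity), Nat.cast_ofNat,
            mul_div_cancel₀ η four_ne_zero]
        rw [Real.mul_rpow (by positivity) (by positivity), hN4, mul_assoc]

theorem exists_card_unpairedQuadruples_le (hdeg : P.natDegree = 2) (hdisc : P.discr ≠ 0) {E : ℝ}
    (hE : 5 / 3 < E) : ∃ C : ℝ, 0 ≤ C ∧ ∀ (N : ℕ) (S : Finset ℕ), 1 ≤ N → S ⊆ Icc 1 N →
      (∀ x ∈ S, Squarefree (evalNat P x)) →
      (#(unpairedQuadruples (evalNat P) S) : ℝ) ≤ C * (N : ℝ) ^ E := by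
  obtain ⟨η, hη, hηE⟩ : ∃ η : ℝ, 0 < η ∧ 5 / 3 + 5 * η = E :=
    ⟨(E - 5 / 3) / 5, by linarith, by ring⟩
  obtain ⟨D, hD, hdivisors⟩ := exists_card_divisors_le_of_dvd_evalNat_mul hdeg hη
  obtain ⟨R, hR, hratio⟩ := exists_card_ratioPairs_le hdeg hdisc hη
  obtain ⟨L, hL, hlarge⟩ := exists_card_largeGcdPairs_le hdeg
  refine ⟨6 * L * R * D ^ 4, by positivity, fun N S hN hS hsq ↦ ?_⟩
  set t : ℝ := D * (N : ℝ) ^ η with ht_def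
  have hN0 : (0 : ℝ) < N := by exact_mod_cast hN
  have ht : ∀ x ∈ S, ∀ y ∈ S, ∀ k : ℤ, k ∣ evalNat P x * evalNat P y →
      (#k.natAbs.divisors : ℝ) ≤ t := fun x hx y hy k ↦
    hdivisors N x y k (hS hx) (hS hy) (mul_ne_zero (hsq x hx).ne_zero (hsq y hy).ne_zero)
  have hcompletions : ∀ p ∈ largeGcdPairs (evalNat P) S,
      (#(completions (evalNat P) S p.1 p.2) : ℝ) ≤
        2 * t * (R * (t * (N : ℝ) ^ (1 / 3 + η))) := by
    intro p hp
    obtain ⟨⟨hx, hy⟩, hne, -⟩ := mem_largeGcdPairs.mp hp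
    refine (card_completions_le hsq hx hy hne (r := R * (t * (N : ℝ) ^ (1 / 3 + η)))
      fun u v huv hsquv hdvd ↦ (hratio N S u v hN hS huv hsquv).trans ?_).trans ?_
    · gcongr
      exact ht _ hx _ hy _ hdvd
    · gcongr
      exact ht _ hx _ hy _ dvd_rfl
  have hpairs : (#(largeGcdPairs (evalNat P) S) : ℝ) ≤ L * (t ^ 2 * (N : ℝ) ^ (4 / 3 : ℝ)) :=
    hlarge N S t hS hsq fun x hx ↦ ht x hx x hx _ (dvd_mul_right _ _)
  have hpow : (N : ℝ) ^ E = (N : ℝ) ^ (4 / 3 : ℝ) * (N : ℝ) ^ (1 / 3 + η) * ((N : ℝ) ^ η) ^ 4 := by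
    rw [← Real.rpow_mul_natCast hN0.le, ← Real.rpow_add hN0, ← Real.rpow_add hN0, ← hηE]
    congr 1
    push_cast
    ring
  calc (#(unpairedQuadruples (evalNat P) S) : ℝ)
      ≤ 3 * (L * (t ^ 2 * (N : ℝ) ^ (4 / 3 : ℝ)) *
          (2 * t * (R * (t * (N : ℝ) ^ (1 / 3 + η))))) := by
        refine (card_unpairedQuadruples_le hsq hcompletions).trans ?_
        gcongr
    _ = 6 * L * R * D ^ 4 * (N : ℝ) ^ E := by rw [hpow, ht_def]; ring

lemma card_ratioPairs_one_one_le (hdeg : P.natDegree = 2) (S : Finset ℕ) :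
    #(ratioPairs (evalNat P) S 1 1) ≤ #S + ((P.coeff 1).natAbs + 1) := by
  have ha := leadingCoeff_ne_zero_of_natDegree_eq_two hdeg
  have hsum : ∀ p ∈ ratioPairs (evalNat P) S 1 1, p.1 ≠ p.2 →
      P.leadingCoeff * (p.1 + p.2) = -P.coeff 1 := by
    intro p hp hne
    have hfactor := eval_sub_eval_eq_mul hdeg (p.1 : ℤ) p.2
    rw [sub_eq_zero.mpr (mul_left_cancel₀ one_ne_zero (mem_ratioPairs.mp hp).2)] at hfactor
    rcases mul_eq_zero.mp hfactor.symm with h | h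
    · exact absurd (by exact_mod_cast sub_eq_zero.mp h) hne
    · exact eq_neg_of_add_eq_zero_left h
  rw [← card_filter_add_card_filter_not fun p : ℕ × ℕ ↦ p.1 = p.2]
  refine Nat.add_le_add ?_ ?_
  · refine card_le_card_of_injOn Prod.fst (fun p hp ↦ ?_) fun p hp q hq hpq ↦ ?_
    · exact (mem_ratioPairs.mp (mem_filter.mp hp).1).1.1
    · exact Prod.ext hpq ((mem_filter.mp hp).2.symm.trans (hpq.trans (mem_filter.mp hq).2))
  · rw [← card_range (_ + 1)]
    refine card_le_card_of_injOn Prod.fst (fun p hp ↦ ?_) fun p hp q hq hpq ↦ ?_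
    · obtain ⟨hp, hne⟩ := mem_filter.mp hp
      have hle : ((p.1 + p.2 : ℕ) : ℤ).natAbs ≤ (P.coeff 1).natAbs := by
        rw [← Int.natAbs_neg (P.coeff 1), ← hsum p hp hne]
        push_cast
        rw [Int.natAbs_mul]
        exact Nat.le_mul_of_pos_left _ (Int.natAbs_pos.mpr ha)
      rw [coe_range, Set.mem_Iio]
      omega
    · obtain ⟨hp, hpne⟩ := mem_filter.mp hp
      obtain ⟨hq, hqne⟩ := mem_filter.mp hq
      have := mul_left_cancel₀ ha ((hsum p hp hpne).trans (hsum q hq hqne).symm)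
      exact Prod.ext hpq (by omega)

theorem exists_abs_card_squareQuadruples_sub_le (hdeg : P.natDegree = 2) (hdisc : P.discr ≠ 0)
    {E : ℝ} (hE : 5 / 3 < E) : ∃ C : ℝ, ∀ (N : ℕ) (S : Finset ℕ), 1 ≤ N → S ⊆ Icc 1 N →
      (∀ x ∈ S, Squarefree (evalNat P x)) →
      |(#(squareQuadruples (evalNat P) S) : ℝ) - 3 * (#S : ℝ) ^ 2| ≤ C * (N : ℝ) ^ E := by
  obtain ⟨C, hC, hunpaired⟩ := exists_card_unpairedQuadruples_le hdeg hdisc hE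
  set b : ℕ := (P.coeff 1).natAbs + 1
  refine ⟨C + (6 * b + 3 * (b : ℝ) ^ 2) + 2, fun N S hN hS hsq ↦ ?_⟩
  have hN1 : (1 : ℝ) ≤ N := by exact_mod_cast hN
  have hNE : (N : ℝ) ≤ (N : ℝ) ^ E := Real.self_le_rpow_of_one_le hN1 (by linarith)
  have hSN : (#S : ℝ) ≤ N := by
    exact_mod_cast card_le_of_subset_Icc hS
  have hratio : (#(ratioPairs (evalNat P) S 1 1) : ℝ) ≤ #S + b := by
    exact_mod_cast card_ratioPairs_one_one_le hdeg S
  have hlower : 3 * (#S : ℝ) ^ 2 ≤ #(squareQuadruples (evalNat P) S) + 2 * #S := by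
    exact_mod_cast three_mul_card_sq_le (evalNat P) S
  have hupper : (#(squareQuadruples (evalNat P) S) : ℝ) ≤
      C * (N : ℝ) ^ E + 3 * (#S + b) ^ 2 :=
    calc (#(squareQuadruples (evalNat P) S) : ℝ)
        ≤ #(unpairedQuadruples (evalNat P) S) + 3 * (#(ratioPairs (evalNat P) S 1 1) : ℝ) ^ 2 := by
          exact_mod_cast card_squareQuadruples_le hsq
      _ ≤ _ := by
          gcongr
          exact hunpaired N S hN hS hsq
  have hcross : 6 * b * #S + 3 * (b : ℝ) ^ 2 ≤ (6 * b + 3 * (b : ℝ) ^ 2) * (N : ℝ) ^ E :=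
    calc 6 * b * #S + 3 * (b : ℝ) ^ 2 ≤ 6 * b * (N : ℝ) ^ E + 3 * (b : ℝ) ^ 2 * (N : ℝ) ^ E := by
          gcongr ?_ * ?_ + ?_
          · exact hSN.trans hNE
          · exact le_mul_of_one_le_right (by positivity) (hN1.trans hNE)
      _ = _ := by ring
  have hCN : 0 ≤ C * (N : ℝ) ^ E := by positivity
  have hcross0 : 0 ≤ (6 * b + 3 * (b : ℝ) ^ 2) * (N : ℝ) ^ E := by positivity
  rw [abs_le]
  constructor <;> linarith

open scoped Classical in
/-- The positive integers up to `N` at which `P` takes a squarefree value. -/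
noncomputable def squarefreeArgs (P : ℤ[X]) (N : ℕ) : Finset ℕ :=
  {n ∈ Icc 1 N | Squarefree (evalNat P n)}

lemma mem_squarefreeArgs {n N : ℕ} :
    n ∈ squarefreeArgs P N ↔ (1 ≤ n ∧ n ≤ N) ∧ Squarefree (evalNat P n) := by
  simp only [squarefreeArgs, mem_filter, mem_Icc]

lemma squarefreeArgs_subset (P : ℤ[X]) (N : ℕ) : squarefreeArgs P N ⊆ Icc 1 N :=
  fun _ hn ↦ mem_Icc.mpr (mem_squarefreeArgs.mp hn).1

lemma coe_squarefreeArgs (P : ℤ[X]) (N : ℕ) : (squarefreeArgs P N : Set ℕ) =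
    {n : ℕ | 1 ≤ n ∧ n ≤ N ∧ Squarefree (P.eval (n : ℤ))} := by
  ext n
  rw [mem_coe, mem_squarefreeArgs, Set.mem_ofPred_eq, and_assoc]

lemma coe_squareQuadruples_squarefreeArgs (P : ℤ[X]) (N : ℕ) :
    (squareQuadruples (evalNat P) (squarefreeArgs P N) : Set (ℕ × ℕ × ℕ × ℕ)) =
      {q : ℕ × ℕ × ℕ × ℕ |
        (1 ≤ q.1 ∧ q.1 ≤ N) ∧ (1 ≤ q.2.1 ∧ q.2.1 ≤ N) ∧
        (1 ≤ q.2.2.1 ∧ q.2.2.1 ≤ N) ∧ (1 ≤ q.2.2.2 ∧ q.2.2.2 ≤ N) ∧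
        Squarefree (P.eval (q.1 : ℤ)) ∧ Squarefree (P.eval (q.2.1 : ℤ)) ∧
        Squarefree (P.eval (q.2.2.1 : ℤ)) ∧ Squarefree (P.eval (q.2.2.2 : ℤ)) ∧
        IsSquare (P.eval (q.1 : ℤ) * P.eval (q.2.1 : ℤ) *
          P.eval (q.2.2.1 : ℤ) * P.eval (q.2.2.2 : ℤ))} := by
  ext q
  simp only [mem_coe, mem_squareQuadruples, mem_squarefreeArgs, Set.mem_ofPred_eq]
  tauto

lemma abs_three_mul_sq_sub_le {κ θ C : ℝ} {s N : ℕ} (hsN : s ≤ N)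
    (h : |s - κ * N| ≤ C * (N : ℝ) ^ θ) (hN : 1 ≤ N) :
    |3 * (s : ℝ) ^ 2 - 3 * κ ^ 2 * N ^ 2| ≤ 3 * C * (1 + |κ|) * (N : ℝ) ^ (1 + θ) := by
  have hN0 : (0 : ℝ) < N := by exact_mod_cast hN
  have hsum : |s + κ * N| ≤ (1 + |κ|) * N :=
    calc |s + κ * N| ≤ |(s : ℝ)| + |κ * N| := abs_add_le _ _
      _ = s + |κ| * N := by rw [abs_mul, Nat.abs_cast, Nat.abs_cast]
      _ ≤ N + |κ| * N := by gcongr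
      _ = _ := by ring
  calc |3 * (s : ℝ) ^ 2 - 3 * κ ^ 2 * N ^ 2| = 3 * (|s - κ * N| * |s + κ * N|) := by
        rw [← abs_mul, ← Nat.abs_ofNat (R := ℝ) 3, ← abs_mul]
        congr 1
        rw [Nat.abs_ofNat]
        ring
    _ ≤ 3 * (C * (N : ℝ) ^ θ * ((1 + |κ|) * N)) := by
        gcongr
        exact (abs_nonneg _).trans h
    _ = _ := by rw [Real.rpow_add hN0, Real.rpow_one]; ring

theorem fourth_moment_count_irreducible_quadratic_general (P : ℤ[X]) (hdeg : P.natDegree = 2)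
    (hdisc : P.discr ≠ 0) {κ θ E : ℝ}
    (hdensity : ∃ C : ℝ, ∀ N : ℕ, 1 ≤ N →
      |({n : ℕ | 1 ≤ n ∧ n ≤ N ∧ Squarefree (P.eval (n : ℤ))}.ncard : ℝ) - κ * N| ≤
        C * (N : ℝ) ^ θ)
    (hθ : 1 + θ ≤ E) (hE : 5 / 3 < E) :
    ∃ C : ℝ, ∀ N : ℕ, 1 ≤ N →
      |({q : ℕ × ℕ × ℕ × ℕ |
          (1 ≤ q.1 ∧ q.1 ≤ N) ∧ (1 ≤ q.2.1 ∧ q.2.1 ≤ N) ∧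
          (1 ≤ q.2.2.1 ∧ q.2.2.1 ≤ N) ∧ (1 ≤ q.2.2.2 ∧ q.2.2.2 ≤ N) ∧
          Squarefree (P.eval (q.1 : ℤ)) ∧ Squarefree (P.eval (q.2.1 : ℤ)) ∧
          Squarefree (P.eval (q.2.2.1 : ℤ)) ∧ Squarefree (P.eval (q.2.2.2 : ℤ)) ∧
          IsSquare (P.eval (q.1 : ℤ) * P.eval (q.2.1 : ℤ) *
            P.eval (q.2.2.1 : ℤ) * P.eval (q.2.2.2 : ℤ))}.ncard : ℝ) -
        3 * κ ^ 2 * (N : ℝ) ^ 2| ≤ C * (N : ℝ) ^ E := by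
  obtain ⟨B, hB⟩ := hdensity
  obtain ⟨C, hC⟩ := exists_abs_card_squareQuadruples_sub_le hdeg hdisc hE
  refine ⟨C + 3 * B * (1 + |κ|), fun N hN ↦ ?_⟩
  set S := squarefreeArgs P N
  have hcard : #S ≤ N := card_le_of_subset_Icc (squarefreeArgs_subset P N)
  have hdensityN : |#S - κ * N| ≤ B * (N : ℝ) ^ θ := by
    have := hB N hN
    rwa [← coe_squarefreeArgs, Set.ncard_coe_finset] at this
  have hB0 : 0 ≤ B :=
    nonneg_of_mul_nonneg_left ((abs_nonneg _).trans hdensityN) (by positivity)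
  rw [← coe_squareQuadruples_squarefreeArgs, Set.ncard_coe_finset]
  calc |(#(squareQuadruples (evalNat P) S) : ℝ) - 3 * κ ^ 2 * (N : ℝ) ^ 2|
      ≤ |(#(squareQuadruples (evalNat P) S) : ℝ) - 3 * (#S : ℝ) ^ 2| +
          |3 * (#S : ℝ) ^ 2 - 3 * κ ^ 2 * (N : ℝ) ^ 2| := abs_sub_le _ _ _
    _ ≤ C * (N : ℝ) ^ E + 3 * B * (1 + |κ|) * (N : ℝ) ^ (1 + θ) := by
        gcongr
        · exact hC N S hN (squarefreeArgs_subset P N) fun n hn ↦ (mem_squarefreeArgs.mp hn).2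
        · exact abs_three_mul_sq_sub_le hcard hdensityN hN
    _ ≤ C * (N : ℝ) ^ E + 3 * B * (1 + |κ|) * (N : ℝ) ^ E := by
        gcongr
        exact_mod_cast hN
    _ = (C + 3 * B * (1 + |κ|)) * (N : ℝ) ^ E := by ring

end FourthMoment

/-- Fourth moment count for an admissible irreducible quadratic `P` with squarefree density
`κ_P`: the number of quadruples `(n₁,n₂,n₃,n₄) ∈ [1,N]⁴` with each `P(nᵢ)` squarefree and
`P(n₁)P(n₂)P(n₃)P(n₄)` a perfect square is `3κ_P²N² + O_ε(N^{7/4+ε})`. -/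
theorem fourth_moment_count_irreducible_quadratic
    (P : Polynomial ℤ)
    (hP : P.natDegree = 2 ∧ Irreducible P)
    (hadm : ¬ ∃ p : ℕ, p.Prime ∧ ∀ n : ℕ, 0 < n → (p : ℤ)^2 ∣ P.eval (n : ℤ))
    (hpos : ∀ n : ℕ, 0 < n → 1 ≤ P.eval (n : ℤ))
    (κ : ℝ) (hκ : 0 < κ)
    (hdensity : ∃ C : ℝ, ∀ N : ℕ, 1 ≤ N →
      |({n : ℕ | 1 ≤ n ∧ n ≤ N ∧ Squarefree (P.eval (n : ℤ))}.ncard : ℝ) - κ * N| ≤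
        C * (N : ℝ) ^ ((3:ℝ)/4)) :
    ∀ ε : ℝ, 0 < ε → ∃ C : ℝ, ∀ N : ℕ, 1 ≤ N →
      |({q : ℕ × ℕ × ℕ × ℕ |
          (1 ≤ q.1 ∧ q.1 ≤ N) ∧ (1 ≤ q.2.1 ∧ q.2.1 ≤ N) ∧
          (1 ≤ q.2.2.1 ∧ q.2.2.1 ≤ N) ∧ (1 ≤ q.2.2.2 ∧ q.2.2.2 ≤ N) ∧
          Squarefree (P.eval (q.1 : ℤ)) ∧ Squarefree (P.eval (q.2.1 : ℤ)) ∧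
          Squarefree (P.eval (q.2.2.1 : ℤ)) ∧ Squarefree (P.eval (q.2.2.2 : ℤ)) ∧
          IsSquare (P.eval (q.1 : ℤ) * P.eval (q.2.1 : ℤ) *
            P.eval (q.2.2.1 : ℤ) * P.eval (q.2.2.2 : ℤ))}.ncard : ℝ) -
        3 * κ^2 * (N : ℝ)^2| ≤ C * (N : ℝ) ^ ((7:ℝ)/4 + ε) := by
  exact fun ε hε ↦ fourth_moment_count_irreducible_quadratic_general P hP.1
    (discr_ne_zero_of_irreducible hP.1 hP.2) hdensity (by linarith) (by linarith)
end

section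
/- Let P ∈ ℤ[x] be either an irreducible quadratic polynomial or a polynomial of arbitrary degree that factors as a product of pairwise non-proportional linear factors a_i x + b_i over ℤ (i.e. a_i b_j − a_j b_i ≠ 0 for i ≠ j), with positive leading coefficient. If there is no prime p such that p² ∣ P(n) for all positive integers n, then there exists a constant κ_P > 0 such that #{n ≤ N : P(n) is a squarefree integer} = κ_P·N + O_P(N^{3/4}), as N → ∞. -/
/-!
Fix `z` with `N ≤ z³`. Replacing the indicator of squarefreeness of `P(n)` by the sum of `μ(d)` over
`d ≤ z` with `d² ∣ P(n)` gives the main term `κ N`, where `κ = ∑ μ(d) ρ(d²) / d²` and `ρ` counts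
roots of `P` modulo its argument. Separability of `P` bounds `ρ(p²)`, so the error from this step is
small, and `κ` is an Euler product whose factors are positive because no `p²` divides all values.

The replacement is exact unless `d² ∣ P(n)` for some squarefree `d > z`. Taking the least divisor of
`d` exceeding `z`, we may assume that `d ≤ z²`, which congruence counting handles, or that `d` is a
prime `p > z²`. The second case is treated one irreducible factor of `P` at a time. A linear factor
is too small to be divisible by `p²`. For a quadratic factor, write `P(n) = m p²` with `m = O(z²)`;
for each `m`, completing the square leads to a Pell equation, whose solutions in a fixed residue
class grow geometrically, so that there are only `O(log z)` of them. In total the error is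
`O(z^(2+ε))`, and `z ≈ N^(1/3)` gives `O(N^(2/3+ε))`.
-/

open Polynomial Finset
open scoped ArithmeticFunction.Moebius

section Divisors

theorem exists_pow_card_primeFactors_le {c : ℝ} (hc : 1 ≤ c) {ε : ℝ} (hε : 0 < ε) :
    ∃ K : ℝ, 0 < K ∧ ∀ m : ℕ, m ≠ 0 → c ^ #m.primeFactors ≤ K * (m : ℝ) ^ ε := by
  have hc0 : 0 < c := by linarith
  set B : ℕ := ⌈c ^ ε⁻¹⌉₊
  refine ⟨c ^ B, by positivity, fun m hm => ?_⟩
  have hsmall : #{p ∈ m.primeFactors | p < B} ≤ B := by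
    calc #{p ∈ m.primeFactors | p < B} ≤ #(range B) :=
          card_le_card fun p hp => mem_range.2 (mem_filter.1 hp).2
      _ = B := card_range B
  have hlarge : ∀ p : ℕ, ¬ p < B → c ≤ (p : ℝ) ^ ε := fun p hp =>
    calc c = (c ^ ε⁻¹) ^ ε := (Real.rpow_inv_rpow hc0.le hε.ne').symm
      _ ≤ (p : ℝ) ^ ε := by
        gcongr
        exact (Nat.le_ceil _).trans (mod_cast not_lt.1 hp)
  have hdvd : ∏ p ∈ m.primeFactors with ¬ p < B, p ∣ m :=
    (prod_dvd_prod_of_subset _ _ _ (filter_subset _ _)).trans (Nat.prod_primeFactors_dvd m)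
  calc c ^ #m.primeFactors
      = c ^ #{p ∈ m.primeFactors | p < B} * ∏ p ∈ m.primeFactors with ¬ p < B, c := by
        rw [prod_const, ← pow_add, card_filter_add_card_filter_not]
    _ ≤ c ^ B * ∏ p ∈ m.primeFactors with ¬ p < B, (p : ℝ) ^ ε := by
        gcongr with p hp
        exact hlarge p (mem_filter.1 hp).2
    _ = c ^ B * ((∏ p ∈ m.primeFactors with ¬ p < B, p : ℕ) : ℝ) ^ ε := by
        rw [Real.finsetProd_rpow _ _ fun _ _ => by positivity, Nat.cast_prod]
    _ ≤ c ^ B * (m : ℝ) ^ ε := by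
        gcongr
        exact Nat.le_of_dvd (Nat.pos_of_ne_zero hm) hdvd

theorem sq_dvd_sq_mul_iff_of_squarefree {a : ℕ} (ha : Squarefree a) {b : ℕ} (hb : b ≠ 0) (d : ℕ) :
    d ^ 2 ∣ b ^ 2 * a ↔ d ∣ b := by
  refine ⟨fun h => ?_, fun h => (pow_dvd_pow_of_dvd h 2).mul_right a⟩
  have hd : d ≠ 0 := by
    rintro rfl
    simp [hb, ha.ne_zero] at h
  rw [← Nat.factorization_le_iff_dvd (by positivity) (by simp [hb, ha.ne_zero])] at h
  rw [← Nat.factorization_le_iff_dvd hd hb]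
  intro p
  have hp := h p
  have hap := ha.natFactorization_le_one p
  simp only [Nat.factorization_mul (pow_ne_zero 2 hb) ha.ne_zero, Nat.factorization_pow,
    Finsupp.add_apply, Finsupp.smul_apply, smul_eq_mul] at hp
  omega

/-- The sum of `μ(d)` over the `d ≤ z` with `d² ∣ n`. As `z` grows, this stabilises for `n ≠ 0`
at the indicator function of squarefreeness. -/
def truncatedMoebiusSum (z n : ℕ) : ℤ := ∑ d ∈ Icc 1 z with d ^ 2 ∣ n, μ d

theorem truncatedMoebiusSum_eq_ite {n : ℕ} (hn : n ≠ 0) {z : ℕ}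
    (hz : ∀ d : ℕ, Squarefree d → d ^ 2 ∣ n → d ≤ z) :
    truncatedMoebiusSum z n = if Squarefree n then 1 else 0 := by
  obtain ⟨a, b, rfl, ha⟩ := Nat.sq_mul_squarefree n
  have hb : b ≠ 0 := by
    rintro rfl
    simp at hn
  have hdvd := sq_dvd_sq_mul_iff_of_squarefree ha hb
  have hsquarefree : Squarefree (b ^ 2 * a) ↔ b = 1 := by
    refine ⟨fun h => Nat.isUnit_iff.1 (h b (by rw [sq]; exact dvd_mul_right _ _)), ?_⟩
    rintro rfl
    simpa using ha
  have hzeta := congrArg (· b) ArithmeticFunction.moebius_mul_coe_zeta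
  simp only [ArithmeticFunction.coe_mul_zeta_apply, ArithmeticFunction.one_apply] at hzeta
  rw [if_congr hsquarefree rfl rfl, ← hzeta]
  refine sum_subset_zero_on_sdiff (fun d hd => ?_) (fun d hd => ?_) fun _ _ => rfl
  · exact Nat.mem_divisors.2 ⟨(hdvd d).1 (mem_filter.1 hd).2, hb⟩
  · obtain ⟨hdb, hdz⟩ := mem_sdiff.1 hd
    have hd2 := (hdvd d).2 (Nat.dvd_of_mem_divisors hdb)
    refine ArithmeticFunction.moebius_eq_zero_of_not_squarefree fun hsq => hdz ?_
    exact mem_filter.2 ⟨mem_Icc.2 ⟨Nat.pos_of_mem_divisors hdb, hz d hsq hd2⟩, hd2⟩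

theorem abs_truncatedMoebiusSum_le_card (z n : ℕ) :
    |truncatedMoebiusSum z n| ≤ #{d ∈ Icc 1 z | d ^ 2 ∣ n ∧ Squarefree d} := by
  rw [← filter_filter, card_filter, Nat.cast_sum]
  refine (abs_sum_le_sum_abs _ _).trans (sum_le_sum fun d _ => ?_)
  rw [ArithmeticFunction.abs_moebius]
  split_ifs <;> simp

theorem abs_truncatedMoebiusSum_le (z n : ℕ) : |truncatedMoebiusSum z n| ≤ z := by
  refine (abs_truncatedMoebiusSum_le_card z n).trans ?_
  exact_mod_cast (card_filter_le _ _).trans_eq (Nat.card_Icc 1 z)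

theorem abs_truncatedMoebiusSum_le_two_pow (z : ℕ) {n : ℕ} (hn : n ≠ 0) :
    |truncatedMoebiusSum z n| ≤ 2 ^ #n.primeFactors := by
  refine (abs_truncatedMoebiusSum_le_card z n).trans ?_
  norm_cast
  rw [← card_powerset]
  refine card_le_card_of_injOn Nat.primeFactors (fun d hd => ?_) fun d hd e he hde => ?_
  · exact mem_powerset.2 <|
      Nat.primeFactors_mono ((dvd_pow_self d two_ne_zero).trans (mem_filter.1 hd).2.1) hn
  · rw [← Nat.prod_primeFactors_of_squarefree (mem_filter.1 hd).2.2, hde,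
      Nat.prod_primeFactors_of_squarefree (mem_filter.1 he).2.2]

theorem abs_truncatedMoebiusSum_sub_ite_le (z n : ℕ) :
    |(truncatedMoebiusSum z n : ℝ) - if Squarefree n then 1 else 0| ≤
      |(truncatedMoebiusSum z n : ℝ)| + 1 := by
  refine (abs_sub _ _).trans ?_
  gcongr
  split_ifs <;> simp

theorem exists_dvd_gt_le_sq_or_prime {z d : ℕ} (hz : 1 ≤ z) (hzd : z < d) :
    ∃ e, e ∣ d ∧ z < e ∧ (e ≤ z ^ 2 ∨ e.Prime) := by
  have hex : ∃ e, e ∣ d ∧ z < e := ⟨d, dvd_rfl, hzd⟩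
  obtain ⟨hed, hze⟩ := Nat.find_spec hex
  have hmin : ∀ f, f ∣ d → z < f → Nat.find hex ≤ f := fun f hf hzf =>
    Nat.find_min' hex ⟨hf, hzf⟩
  generalize Nat.find hex = e at hed hze hmin
  refine ⟨e, hed, hze, or_iff_not_imp_left.2 fun hez => ?_⟩
  obtain ⟨q, hq, r, rfl⟩ := Nat.exists_prime_and_dvd (show e ≠ 1 by omega)
  have hr0 : 0 < r := Nat.pos_of_ne_zero (by rintro rfl; omega)
  have hrz : r ≤ z := by
    by_contra! h
    nlinarith [hmin r ((dvd_mul_left r q).trans hed) h, hq.two_le]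
  have hzq : z < q := by
    by_contra! h
    exact hez (by nlinarith)
  have hle : q * r ≤ q := hmin q ((dvd_mul_right q r).trans hed) hzq
  have hr1 : r = 1 := by nlinarith [hq.pos]
  simpa [hr1] using hq

theorem natLog_two_le_rpow_div (x : ℕ) {ε : ℝ} (hε : 0 < ε) :
    (Nat.log 2 x : ℝ) ≤ (x : ℝ) ^ ε / (ε * Real.log 2) := by
  have : 0 < Real.log 2 := Real.log_pos one_lt_two
  calc (Nat.log 2 x : ℝ) ≤ Real.logb 2 x := mod_cast Real.natLog_le_logb x 2
    _ ≤ (x : ℝ) ^ ε / ε / Real.log 2 := by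
      rw [Real.logb]
      gcongr
      exact Real.log_le_rpow_div (by positivity) hε
    _ = _ := div_div _ _ _

end Divisors

section RootCount

/-- `|P(n)|` as a natural number, so that its divisors can be treated in `ℕ`. -/
def absEval (P : ℤ[X]) (n : ℕ) : ℕ := (P.eval (n : ℤ)).natAbs

/-- The number of roots of `P` modulo `m`. It is `Nat.card`, hence possibly `0` by
convention, when `m = 0`. -/
noncomputable def rootCount (P : ℤ[X]) (m : ℕ) : ℕ := Nat.card {x : ZMod m // aeval x P = 0}

variable (P : ℤ[X])

theorem absEval_mul (Q : ℤ[X]) (n : ℕ) : absEval (P * Q) n = absEval P n * absEval Q n := by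
  simp only [absEval, eval_mul, Int.natAbs_mul]

theorem aeval_intCast_zmod (m : ℕ) (n : ℤ) :
    aeval (n : ZMod m) P = ((P.eval n : ℤ) : ZMod m) := by
  simpa using aeval_algebraMap_apply (ZMod m) n P

theorem aeval_intCast_zmod_eq_zero_iff (m : ℕ) (n : ℤ) :
    aeval (n : ZMod m) P = 0 ↔ (m : ℤ) ∣ P.eval n := by
  rw [aeval_intCast_zmod, ZMod.intCast_zmod_eq_zero_iff_dvd]

theorem dvd_absEval_iff (m n : ℕ) : m ∣ absEval P n ↔ aeval (n : ZMod m) P = 0 := by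
  rw [absEval, ← Int.natCast_dvd, ← aeval_intCast_zmod_eq_zero_iff, Int.cast_natCast]

theorem exists_absEval_le : ∃ A : ℕ, 0 < A ∧ ∀ n N : ℕ, 1 ≤ N → n ≤ N →
    absEval P n ≤ A * N ^ P.natDegree := by
  refine ⟨∑ i ∈ range (P.natDegree + 1), (P.coeff i).natAbs + 1, by positivity,
    fun n N hN hnN => ?_⟩
  calc absEval P n
      = (∑ i ∈ range (P.natDegree + 1), P.coeff i * (n : ℤ) ^ i).natAbs := by
        rw [absEval, eval_eq_sum_range]
    _ ≤ ∑ i ∈ range (P.natDegree + 1), (P.coeff i * (n : ℤ) ^ i).natAbs :=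
        Int.natAbs_sum_le _ _
    _ ≤ ∑ i ∈ range (P.natDegree + 1), (P.coeff i).natAbs * N ^ P.natDegree := by
        refine sum_le_sum fun i hi => ?_
        rw [Int.natAbs_mul, Int.natAbs_pow, Int.natAbs_natCast]
        exact Nat.mul_le_mul_left _ ((Nat.pow_le_pow_left hnN i).trans
          (Nat.pow_le_pow_right hN (Nat.lt_succ_iff.1 (mem_range.1 hi))))
    _ ≤ _ := by
        rw [← sum_mul]
        gcongr
        exact Nat.le_succ _

variable {P} in
theorem card_absEval_eq_zero_le (hP : P ≠ 0) (s : Finset ℕ) :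
    #{n ∈ s | absEval P n = 0} ≤ P.natDegree := by
  refine le_trans ?_ ((Multiset.toFinset_card_le _).trans P.card_roots')
  refine card_le_card_of_injOn (fun n : ℕ => (n : ℤ)) (fun n hn => ?_) Nat.cast_injective.injOn
  have hn0 : P.eval (n : ℤ) = 0 := Int.natAbs_eq_zero.1 (mem_filter.1 hn).2
  simpa [hP] using hn0

theorem abs_card_natCast_eq_sub_le (N : ℕ) {m : ℕ} [NeZero m] (x : ZMod m) :
    |(#{n ∈ Ioc 0 N | ((n : ℕ) : ZMod m) = x} : ℝ) - N / m| ≤ 1 := by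
  have hm : (0 : ℚ) < m := mod_cast NeZero.pos m
  have hmod : #{n ∈ Ioc 0 N | ((n : ℕ) : ZMod m) = x} = #{n ∈ Ioc 0 N | n ≡ x.val [MOD m]} := by
    congr 1
    refine filter_congr fun n _ => ?_
    rw [← ZMod.natCast_eq_natCast_iff, ZMod.natCast_zmod_val]
  have hcount := Nat.Ioc_filter_modEq_card 0 N (NeZero.pos m) x.val
  have hmono : ⌊(((0 : ℕ) : ℚ) - x.val) / m⌋ ≤ ⌊((N : ℚ) - x.val) / m⌋ := by
    gcongr
    exact Nat.zero_le N
  rw [max_eq_left (sub_nonneg.2 hmono)] at hcount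
  suffices h : |(#{n ∈ Ioc 0 N | n ≡ x.val [MOD m]} : ℚ) - N / m| ≤ 1 by
    rw [hmod]
    have hcast := (Rat.cast_le (K := ℝ)).2 h
    push_cast at hcast
    exact hcast
  rw [← Int.cast_natCast, hcount, Int.cast_sub]
  have hdiff : ((N : ℚ) - x.val) / m - (((0 : ℕ) : ℚ) - x.val) / m = N / m := by
    field_simp
    simp
  have hN := Int.floor_le (((N : ℚ) - x.val) / m)
  have hN1 := Int.lt_floor_add_one (((N : ℚ) - x.val) / m)
  have h0 := Int.floor_le ((((0 : ℕ) : ℚ) - x.val) / m)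
  have h01 := Int.lt_floor_add_one ((((0 : ℕ) : ℚ) - x.val) / m)
  rw [abs_le]
  constructor <;> linarith

theorem abs_card_dvd_absEval_sub_le (N : ℕ) (m : ℕ) [NeZero m] :
    |(#{n ∈ Ioc 0 N | m ∣ absEval P n} : ℝ) - rootCount P m * N / m| ≤ rootCount P m := by
  classical
  set roots : Finset (ZMod m) := {x | aeval x P = 0}
  have hroots : rootCount P m = #roots := by
    rw [rootCount, Nat.card_eq_fintype_card, Fintype.card_subtype]
  have hfiber : #{n ∈ Ioc 0 N | m ∣ absEval P n}
      = ∑ x ∈ roots, #{n ∈ Ioc 0 N | ((n : ℕ) : ZMod m) = x} := by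
    rw [card_eq_sum_card_fiberwise (f := fun n : ℕ => (n : ZMod m)) (t := roots)]
    · refine sum_congr rfl fun x hx => ?_
      rw [filter_filter]
      congr 1
      refine filter_congr fun n _ => ⟨And.right, ?_⟩
      rintro rfl
      exact ⟨(dvd_absEval_iff P m n).2 (mem_filter.1 hx).2, rfl⟩
    · intro n hn
      simpa [roots, ← dvd_absEval_iff] using (mem_filter.1 hn).2
  have hsplit : (#{n ∈ Ioc 0 N | m ∣ absEval P n} : ℝ) - rootCount P m * N / m
      = ∑ x ∈ roots, ((#{n ∈ Ioc 0 N | ((n : ℕ) : ZMod m) = x} : ℝ) - N / m) := by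
    rw [hfiber, hroots, sum_sub_distrib, sum_const, nsmul_eq_mul]
    push_cast
    ring
  calc _ ≤ ∑ x ∈ roots, |(#{n ∈ Ioc 0 N | ((n : ℕ) : ZMod m) = x} : ℝ) - N / m| := by
        rw [hsplit]
        exact abs_sum_le_sum_abs _ _
    _ ≤ #roots • (1 : ℝ) := sum_le_card_nsmul _ _ _ fun x _ => abs_card_natCast_eq_sub_le N x
    _ = rootCount P m := by rw [hroots, nsmul_eq_mul, mul_one]

theorem rootCount_one : rootCount P 1 = 1 := by
  rw [rootCount, Nat.card_eq_one_iff_unique]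
  exact ⟨inferInstance, ⟨⟨0, Subsingleton.elim _ _⟩⟩⟩

theorem rootCount_mul {m n : ℕ} (h : m.Coprime n) :
    rootCount P (m * n) = rootCount P m * rootCount P n := by
  let e := ZMod.chineseRemainder h
  have hfst (x : ZMod (m * n)) : (e (aeval x P)).1 = aeval (e x).1 P := by
    simpa using (aeval_algHom_apply ((RingHom.fst _ _).comp e.toRingHom).toIntAlgHom x P).symm
  have hsnd (x : ZMod (m * n)) : (e (aeval x P)).2 = aeval (e x).2 P := by
    simpa using (aeval_algHom_apply ((RingHom.snd _ _).comp e.toRingHom).toIntAlgHom x P).symm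
  have hroot (x : ZMod (m * n)) : aeval x P = 0 ↔ aeval (e x).1 P = 0 ∧ aeval (e x).2 P = 0 := by
    rw [← hfst, ← hsnd, ← EmbeddingLike.map_eq_zero_iff (f := e)]
    exact Prod.ext_iff
  rw [rootCount, rootCount, rootCount, ← Nat.card_prod]
  exact Nat.card_congr <| (e.toEquiv.subtypeEquiv hroot).trans Equiv.subtypeProdEquivProd

theorem rootCount_le (m : ℕ) [NeZero m] : rootCount P m ≤ m :=
  (Finite.card_subtype_le _).trans_eq (Nat.card_zmod m)

variable {P}

theorem rootCount_lt {m n : ℕ} [NeZero m] (h : ¬ m ∣ absEval P n) : rootCount P m < m :=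
  (Finite.card_subtype_lt (p := fun x : ZMod m => aeval x P = 0)
    (mt (dvd_absEval_iff P m n).2 h)).trans_eq (Nat.card_zmod m)

theorem rootCount_sq_le_pow_card_primeFactors {c : ℕ}
    (hc : ∀ p : ℕ, p.Prime → rootCount P (p ^ 2) ≤ c) {d : ℕ} (hd : Squarefree d) :
    rootCount P (d ^ 2) ≤ c ^ #d.primeFactors := by
  induction d using Nat.recOnPosPrimePosCoprime with
  | zero => exact absurd hd not_squarefree_zero
  | one => simp [rootCount_one]
  | prime_pow p n hp hn =>
    obtain rfl : n = 1 := ((Nat.squarefree_pow_iff hp.ne_one hn.ne').1 hd).2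
    simpa [hp.primeFactors] using hc p hp
  | coprime a b _ _ hab iha ihb =>
    obtain ⟨ha, hb⟩ := (Nat.squarefree_mul hab).1 hd
    rw [mul_pow, rootCount_mul P (hab.pow 2 2), hab.primeFactors_mul,
      card_union_of_disjoint hab.disjoint_primeFactors, pow_add]
    exact Nat.mul_le_mul (iha ha) (ihb hb)

theorem rootCount_le_natDegree {p : ℕ} [Fact p.Prime] (h : P.map (Int.castRingHom (ZMod p)) ≠ 0) :
    rootCount P p ≤ P.natDegree := by
  classical
  have hmem (x : {x : ZMod p // aeval x P = 0}) : x.1 ∈ P.rootSet (ZMod p) :=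
    mem_rootSet'.2 ⟨h, x.2⟩
  calc rootCount P p ≤ Nat.card (P.rootSet (ZMod p)) :=
        Nat.card_le_card_of_injective (fun x => ⟨x.1, hmem x⟩)
          fun x y hxy => Subtype.ext (congrArg (fun t => t.1) hxy)
    _ ≤ P.natDegree := by
        rw [Nat.card_coe_set_eq]
        exact ncard_rootSet_le P (ZMod p)

theorem pow_dvd_sub_of_dvd_eval {p : ℤ} (hp : Prime p) {k : ℕ} {a b : ℤ}
    (hderiv : ¬ p ∣ (derivative P).eval a) (hab : p ∣ b - a)
    (ha : p ^ k ∣ P.eval a) (hb : p ^ k ∣ P.eval b) : p ^ k ∣ b - a := by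
  obtain ⟨q, hq⟩ := P.binomExpansion a (b - a)
  rw [add_sub_cancel] at hq
  have hprod : p ^ k ∣ (b - a) * ((derivative P).eval a + q * (b - a)) := by
    have h : P.eval b - P.eval a = (b - a) * ((derivative P).eval a + q * (b - a)) := by
      rw [hq]
      ring
    exact h ▸ dvd_sub hb ha
  have hcop : IsCoprime p ((derivative P).eval a + q * (b - a)) := by
    refine (Prime.coprime_iff_not_dvd hp).2 fun h => hderiv ?_
    exact (dvd_add_left (hab.mul_left q)).1 h
  exact hcop.pow_left.dvd_of_dvd_mul_right hprod

theorem rootCount_pow_le {p : ℕ} (hp : p.Prime) {k : ℕ} (hk : k ≠ 0)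
    (h : ∀ a : ℤ, (p : ℤ) ∣ P.eval a → ¬ (p : ℤ) ∣ (derivative P).eval a) :
    rootCount P (p ^ k) ≤ rootCount P p := by
  have : Fact p.Prime := ⟨hp⟩
  let φ : ZMod (p ^ k) →+* ZMod p := ZMod.castHom (dvd_pow_self p hk) (ZMod p)
  have hφ (x : ZMod (p ^ k)) : φ (aeval x P) = aeval (φ x) P := by
    simpa using (aeval_algHom_apply φ.toIntAlgHom x P).symm
  refine Nat.card_le_card_of_injective (fun x => ⟨φ x.1, by rw [← hφ, x.2, map_zero]⟩) ?_
  rintro ⟨x, hx⟩ ⟨y, hy⟩ hxy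
  obtain ⟨a, rfl⟩ := ZMod.intCast_surjective x
  obtain ⟨b, rfl⟩ := ZMod.intCast_surjective y
  have hab : (p : ℤ) ∣ b - a := by
    have := congrArg Subtype.val hxy
    simpa [ZMod.intCast_eq_intCast_iff_dvd_sub] using this
  rw [aeval_intCast_zmod_eq_zero_iff] at hx hy
  rw [Nat.cast_pow] at hx hy
  have hderiv := h a ((dvd_pow_self _ hk).trans hx)
  have hpow := pow_dvd_sub_of_dvd_eval (Nat.prime_iff_prime_int.1 hp) hderiv hab hx hy
  exact Subtype.ext <| (ZMod.intCast_eq_intCast_iff_dvd_sub _ _ _).2 (mod_cast hpow)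

theorem exists_mul_add_mul_eq_C_of_isCoprime_map {R K : Type*} [CommRing R] [IsDomain R] [Field K]
    [Algebra R K] [IsFractionRing R K] {P Q : R[X]}
    (h : IsCoprime (P.map (algebraMap R K)) (Q.map (algebraMap R K))) :
    ∃ r : R, r ≠ 0 ∧ ∃ U V : R[X], U * P + V * Q = C r := by
  obtain ⟨u, v, huv⟩ := h
  obtain ⟨b, hb, hu⟩ := IsLocalization.integerNormalization_spec (nonZeroDivisors R) u
  obtain ⟨c, hc, hv⟩ := IsLocalization.integerNormalization_spec (nonZeroDivisors R) v
  refine ⟨b * c, mul_ne_zero (nonZeroDivisors.ne_zero hb) (nonZeroDivisors.ne_zero hc),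
    C c * IsLocalization.integerNormalization (nonZeroDivisors R) u,
    C b * IsLocalization.integerNormalization (nonZeroDivisors R) v,
    map_injective _ (IsFractionRing.injective R K) ?_⟩
  simp only [Polynomial.map_add, Polynomial.map_mul, map_C, hu, hv, ← algebraMap_smul K b u,
    ← algebraMap_smul K c v, smul_eq_C_mul, map_mul]
  linear_combination C (algebraMap R K b) * C (algebraMap R K c) * huv

theorem exists_rootCount_sq_le_of_separable
    (hP : (P.map (Int.castRingHom ℚ)).Separable) :
    ∃ c : ℕ, ∀ p : ℕ, p.Prime → rootCount P (p ^ 2) ≤ c := by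
  rw [separable_def, derivative_map] at hP
  obtain ⟨r, hr, U, V, hUV⟩ := exists_mul_add_mul_eq_C_of_isCoprime_map hP
  have hdvd (p a : ℤ) (h : p ∣ P.eval a) (h' : p ∣ (derivative P).eval a) : p ∣ r := by
    have := congrArg (eval a) hUV
    simp only [eval_add, eval_mul, eval_C] at this
    exact this ▸ dvd_add (h.mul_left _) (h'.mul_left _)
  refine ⟨P.natDegree + r.natAbs ^ 2, fun p hp => ?_⟩
  have : Fact p.Prime := ⟨hp⟩
  by_cases hpr : (p : ℤ) ∣ r
  · have hle : p ≤ r.natAbs := Nat.le_of_dvd (by positivity) (Int.natCast_dvd.1 hpr)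
    calc rootCount P (p ^ 2) ≤ p ^ 2 := rootCount_le P _
      _ ≤ r.natAbs ^ 2 := Nat.pow_le_pow_left hle 2
      _ ≤ _ := Nat.le_add_left _ _
  have hmod : P.map (Int.castRingHom (ZMod p)) ≠ 0 := fun h0 => hpr <| by
    have h0' := congrArg derivative h0
    rw [derivative_map] at h0'
    refine hdvd p 0 ?_ ?_ <;> rw [← aeval_intCast_zmod_eq_zero_iff] <;>
      simp [aeval_def, ← eval_map, h0, h0']
  calc rootCount P (p ^ 2) ≤ rootCount P p :=
        rootCount_pow_le hp two_ne_zero fun a ha ha' => hpr (hdvd p a ha ha')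
    _ ≤ P.natDegree := rootCount_le_natDegree hmod
    _ ≤ _ := Nat.le_add_right _ _

end RootCount

section Density

/-- The coefficient `μ(d) ρ(d²) / d²` of the singular series, where `ρ` is `rootCount P`.
It vanishes at `d = 0`, because `μ(0) = 0`. -/
noncomputable def densityTerm (P : ℤ[X]) (d : ℕ) : ℝ := μ d * rootCount P (d ^ 2) / d ^ 2

/-- The density `∑ μ(d) ρ(d²) / d²` of the positive integers `n` for which `P(n)` is squarefree. -/
noncomputable def squarefreeDensity (P : ℤ[X]) : ℝ := ∑' d, densityTerm P d

variable (P : ℤ[X])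

theorem densityTerm_one : densityTerm P 1 = 1 := by
  simp [densityTerm, rootCount_one]

theorem densityTerm_mul {m n : ℕ} (h : m.Coprime n) :
    densityTerm P (m * n) = densityTerm P m * densityTerm P n := by
  rw [densityTerm, ArithmeticFunction.isMultiplicative_moebius.map_mul_of_coprime h, mul_pow,
    rootCount_mul P (h.pow 2 2), densityTerm, densityTerm]
  push_cast
  ring

theorem abs_densityTerm {d : ℕ} (hd : Squarefree d) :
    |densityTerm P d| = rootCount P (d ^ 2) / (d : ℝ) ^ 2 := by
  rw [densityTerm, abs_div, abs_mul, ← Int.cast_abs,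
    ArithmeticFunction.abs_moebius_eq_one_of_squarefree hd]
  simp

theorem densityTerm_prime {p : ℕ} (hp : p.Prime) :
    densityTerm P p = -(rootCount P (p ^ 2) / (p : ℝ) ^ 2) := by
  rw [densityTerm, ArithmeticFunction.moebius_apply_prime hp]
  push_cast
  ring

theorem tsum_densityTerm_prime_pow {p : ℕ} (hp : p.Prime) :
    ∑' e : ℕ, densityTerm P (p ^ e) = 1 + densityTerm P p := by
  rw [tsum_eq_sum (s := range 2)]
  · rw [sum_range_succ, sum_range_one, pow_zero, pow_one, densityTerm_one]
  · intro e he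
    have he2 : 2 ≤ e := not_lt.1 (mt mem_range.2 he)
    rw [densityTerm, ArithmeticFunction.moebius_apply_prime_pow hp (by omega), if_neg (by omega)]
    simp

variable {P}

theorem squarefreeDensity_pos (hsum : Summable (densityTerm P))
    (hlocal : ∀ p : ℕ, p.Prime → rootCount P (p ^ 2) < p ^ 2) : 0 < squarefreeDensity P := by
  have hprod : HasProd (fun p : Nat.Primes => ∑' e : ℕ, densityTerm P (p ^ e))
      (squarefreeDensity P) :=
    EulerProduct.eulerProduct_hasProd (densityTerm_one P) (densityTerm_mul P) hsum.norm
      (by simp [densityTerm])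
  simp only [fun p : Nat.Primes => tsum_densityTerm_prime_pow P p.2] at hprod
  have hpos (p : Nat.Primes) : 0 < 1 + densityTerm P p := by
    have hp : (0 : ℝ) < (p : ℕ) := mod_cast p.2.pos
    rw [densityTerm_prime P p.2, ← sub_eq_add_neg, sub_pos, div_lt_one (by positivity)]
    exact_mod_cast hlocal p p.2
  have hlog := Real.summable_log_one_add_of_summable
    (hsum.comp_injective Nat.Primes.coe_nat_injective)
  rw [hprod.unique (Real.hasProd_of_hasSum_log hpos hlog.hasSum)]
  exact Real.exp_pos _

variable {c : ℕ} (hc : ∀ p : ℕ, p.Prime → rootCount P (p ^ 2) ≤ c)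
include hc

theorem exists_rootCount_sq_le_rpow {ε : ℝ} (hε : 0 < ε) :
    ∃ K : ℝ, 0 < K ∧ ∀ d : ℕ, Squarefree d → (rootCount P (d ^ 2) : ℝ) ≤ K * (d : ℝ) ^ ε := by
  obtain ⟨K, hK, hbound⟩ := exists_pow_card_primeFactors_le (c := c + 1) (by simp) hε
  refine ⟨K, hK, fun d hd => le_trans ?_ (hbound d hd.ne_zero)⟩
  exact_mod_cast rootCount_sq_le_pow_card_primeFactors
    (fun p hp => (hc p hp).trans (Nat.le_succ c)) hd

theorem exists_abs_densityTerm_le {ε : ℝ} (hε : 0 < ε) :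
    ∃ K : ℝ, 0 < K ∧ ∀ d : ℕ, |densityTerm P d| ≤ K * (d : ℝ) ^ (ε - 2) := by
  obtain ⟨K, hK, hbound⟩ := exists_rootCount_sq_le_rpow hc hε
  refine ⟨K, hK, fun d => ?_⟩
  by_cases hd : Squarefree d
  · have hd0 : (0 : ℝ) < d := mod_cast hd.ne_zero.bot_lt
    rw [abs_densityTerm P hd, Real.rpow_sub hd0, Real.rpow_two, ← mul_div_assoc]
    gcongr
    exact hbound d hd
  · rw [densityTerm, ArithmeticFunction.moebius_eq_zero_of_not_squarefree hd]
    simp only [Int.cast_zero, zero_mul, zero_div, abs_zero]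
    positivity

theorem summable_densityTerm : Summable (densityTerm P) := by
  obtain ⟨K, -, hbound⟩ := exists_abs_densityTerm_le hc (half_pos one_pos)
  exact Summable.of_norm_bounded ((Real.summable_nat_rpow.2 (by norm_num)).mul_left K) hbound

theorem exists_sum_abs_densityTerm_le {ε : ℝ} (hε : 0 < ε) (hε1 : ε ≤ 1) :
    ∃ C : ℝ, 0 ≤ C ∧ ∀ z : ℕ, 1 ≤ z → ∀ s : Finset ℕ, (∀ d ∈ s, z < d) →
      ∑ d ∈ s, |densityTerm P d| ≤ C * (z : ℝ) ^ (ε - 1) := by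
  obtain ⟨K, hK, hbound⟩ := exists_abs_densityTerm_le hc (half_pos hε)
  have hsum : Summable fun d : ℕ => (d : ℝ) ^ (-(1 + ε / 2)) :=
    Real.summable_nat_rpow.2 (by linarith)
  refine ⟨K * ∑' d : ℕ, (d : ℝ) ^ (-(1 + ε / 2)),
    mul_nonneg hK.le (tsum_nonneg fun d => by positivity), fun z hz s hs => ?_⟩
  have hz0 : (0 : ℝ) < z := mod_cast hz
  have hterm : ∀ d ∈ s, |densityTerm P d|
      ≤ K * ((d : ℝ) ^ (-(1 + ε / 2)) * (z : ℝ) ^ (ε - 1)) := fun d hd => by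
    have hzd : (z : ℝ) ≤ d := mod_cast (hs d hd).le
    calc |densityTerm P d| ≤ K * (d : ℝ) ^ (ε / 2 - 2) := hbound d
      _ = K * ((d : ℝ) ^ (-(1 + ε / 2)) * (d : ℝ) ^ (ε - 1)) := by
        rw [← Real.rpow_add (hz0.trans_le hzd)]
        ring_nf
      _ ≤ K * ((d : ℝ) ^ (-(1 + ε / 2)) * (z : ℝ) ^ (ε - 1)) := by
        gcongr ?_ * (?_ * ?_)
        exact Real.rpow_le_rpow_of_nonpos hz0 hzd (by linarith)
  calc ∑ d ∈ s, |densityTerm P d|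
      ≤ ∑ d ∈ s, K * ((d : ℝ) ^ (-(1 + ε / 2)) * (z : ℝ) ^ (ε - 1)) := sum_le_sum hterm
    _ = K * (∑ d ∈ s, (d : ℝ) ^ (-(1 + ε / 2))) * (z : ℝ) ^ (ε - 1) := by
        rw [← mul_sum, ← sum_mul, mul_assoc]
    _ ≤ _ := by
        gcongr
        exact hsum.sum_le_tsum s fun d _ => by positivity

theorem exists_abs_sum_densityTerm_sub_le {ε : ℝ} (hε : 0 < ε) (hε1 : ε ≤ 1) :
    ∃ C : ℝ, 0 ≤ C ∧ ∀ z : ℕ, 1 ≤ z →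
      |∑ d ∈ Icc 1 z, densityTerm P d - squarefreeDensity P| ≤ C * (z : ℝ) ^ (ε - 1) := by
  obtain ⟨C, hC, htail⟩ := exists_sum_abs_densityTerm_le hc hε hε1
  refine ⟨C, hC, fun z hz => ?_⟩
  refine le_of_tendsto (tendsto_const_nhds.sub (summable_densityTerm hc).hasSum).abs
    ((Filter.eventually_ge_atTop (Icc 1 z)).mono fun s hs => ?_)
  have hgt : ∀ d ∈ s \ Icc 1 z, |densityTerm P d| ≠ 0 → z < d := fun d hd hne => by
    have hd0 : d ≠ 0 := by
      rintro rfl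
      simp [densityTerm] at hne
    have := mt mem_Icc.2 (mem_sdiff.1 hd).2
    omega
  calc |∑ d ∈ Icc 1 z, densityTerm P d - ∑ d ∈ s, densityTerm P d|
      = |∑ d ∈ s \ Icc 1 z, densityTerm P d| := by
        rw [← sum_sdiff hs, sub_add_cancel_right, abs_neg]
    _ ≤ ∑ d ∈ s \ Icc 1 z, |densityTerm P d| := abs_sum_le_sum_abs _ _
    _ = ∑ d ∈ s \ Icc 1 z with z < d, |densityTerm P d| := (sum_filter_of_ne hgt).symm
    _ ≤ C * (z : ℝ) ^ (ε - 1) := htail z hz _ fun d hd => (mem_filter.1 hd).2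

end Density

section Sieve

open Classical in
/-- The `n ≤ N` for which `P(n)` is divisible by the square of a squarefree element of `D`. -/
noncomputable def squareIndices (P : ℤ[X]) (D : Set ℕ) (N : ℕ) : Finset ℕ :=
  {n ∈ Ioc 0 N | ∃ d ∈ D, Squarefree d ∧ d ^ 2 ∣ absEval P n}

/-- Among the `n ≤ N ≤ z³`, there are `O(z^(2+ε))` for which `P(n)` is divisible by the square of
a prime exceeding `z²`. This is the arithmetic input that the sieve needs about `P`. -/
def HasFewLargePrimeSquares (P : ℤ[X]) : Prop :=
  ∀ ε : ℝ, 0 < ε → ∃ C : ℝ, ∀ z N : ℕ, 1 ≤ z → N ≤ z ^ 3 →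
    (#(squareIndices P {p | p.Prime ∧ z ^ 2 < p} N) : ℝ) ≤ C * (z : ℝ) ^ (2 + ε)

variable {P : ℤ[X]}

theorem mem_squareIndices {D : Set ℕ} {N n : ℕ} :
    n ∈ squareIndices P D N ↔ n ∈ Ioc 0 N ∧ ∃ d ∈ D, Squarefree d ∧ d ^ 2 ∣ absEval P n := by
  classical exact mem_filter

theorem squareIndices_subset (P : ℤ[X]) (D : Set ℕ) (N : ℕ) : squareIndices P D N ⊆ Ioc 0 N :=
  fun _ hn => (mem_squareIndices.1 hn).1

theorem card_squareIndices_le_sum (D : Finset ℕ) (N : ℕ) :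
    (#(squareIndices P D N) : ℝ) ≤
      ∑ d ∈ D with Squarefree d, (rootCount P (d ^ 2) + N * |densityTerm P d|) := by
  have hsub : squareIndices P D N ⊆
      {d ∈ D | Squarefree d}.biUnion fun d => {n ∈ Ioc 0 N | d ^ 2 ∣ absEval P n} := fun n hn => by
    obtain ⟨hnN, d, hdD, hsq, hdvd⟩ := mem_squareIndices.1 hn
    exact mem_biUnion.2 ⟨d, mem_filter.2 ⟨hdD, hsq⟩, mem_filter.2 ⟨hnN, hdvd⟩⟩
  calc (#(squareIndices P D N) : ℝ)
      ≤ ∑ d ∈ D with Squarefree d, (#{n ∈ Ioc 0 N | d ^ 2 ∣ absEval P n} : ℝ) := by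
        exact_mod_cast (card_le_card hsub).trans card_biUnion_le
    _ ≤ _ := sum_le_sum fun d hd => by
        have hsq := (mem_filter.1 hd).2
        have : NeZero (d ^ 2) := ⟨pow_ne_zero 2 hsq.ne_zero⟩
        have hle := (abs_le.1 (abs_card_dvd_absEval_sub_le P N (d ^ 2))).2
        rw [abs_densityTerm P hsq, ← mul_div_assoc, mul_comm (N : ℝ)]
        push_cast at hle
        linarith

theorem truncatedMoebiusSum_absEval_eq_ite {z N n : ℕ} (hn : n ∈ Ioc 0 N)
    (hbad : n ∉ squareIndices P (Set.Ioi z) N) :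
    truncatedMoebiusSum z (absEval P n) = if Squarefree (absEval P n) then 1 else 0 := by
  have hle : ∀ d : ℕ, Squarefree d → d ^ 2 ∣ absEval P n → d ≤ z := fun d hd hdvd =>
    not_lt.1 fun hzd => hbad (mem_squareIndices.2 ⟨hn, d, hzd, hd, hdvd⟩)
  refine truncatedMoebiusSum_eq_ite (fun h0 => ?_) hle
  obtain ⟨p, hzp, hp⟩ := Nat.exists_infinite_primes (z + 1)
  have := hle p hp.squarefree (h0 ▸ dvd_zero _)
  omega

theorem exists_two_pow_card_primeFactors_absEval_le {ε : ℝ} (hε : 0 < ε) (P : ℤ[X]) :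
    ∃ K : ℝ, 0 ≤ K ∧ ∀ z n : ℕ, 1 ≤ z → n ≤ z ^ 3 → absEval P n ≠ 0 →
      (2 : ℝ) ^ #(absEval P n).primeFactors ≤ K * (z : ℝ) ^ ε := by
  obtain ⟨A, hA, hAbound⟩ := exists_absEval_le P
  set δ : ℝ := ε / (3 * P.natDegree + 1)
  have hδ : 0 < δ := by positivity
  obtain ⟨K, hK, hKbound⟩ := exists_pow_card_primeFactors_le (c := 2) one_le_two hδ
  refine ⟨K * (A : ℝ) ^ δ, by positivity, fun z n hz hn h0 => ?_⟩
  have hz1 : (1 : ℝ) ≤ z := mod_cast hz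
  have hexp : 3 * P.natDegree * δ ≤ ε := by
    rw [← mul_div_assoc, div_le_iff₀ (by positivity)]
    nlinarith
  calc (2 : ℝ) ^ #(absEval P n).primeFactors ≤ K * (absEval P n : ℝ) ^ δ := hKbound _ h0
    _ ≤ K * ((A : ℝ) * (z : ℝ) ^ (3 * P.natDegree)) ^ δ := by
      gcongr
      rw [pow_mul]
      exact_mod_cast hAbound n (z ^ 3) (Nat.one_le_pow _ _ hz) hn
    _ = K * (A : ℝ) ^ δ * (z : ℝ) ^ (3 * P.natDegree * δ) := by
      rw [Real.mul_rpow (by positivity) (by positivity), ← Real.rpow_natCast_mul (by positivity)]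
      push_cast
      ring
    _ ≤ K * (A : ℝ) ^ δ * (z : ℝ) ^ ε := by gcongr

theorem exists_abs_truncatedMoebiusSum_sub_ite_le {ε : ℝ} (hε : 0 < ε) (P : ℤ[X]) :
    ∃ K : ℝ, 0 ≤ K ∧ ∀ z n : ℕ, 1 ≤ z → n ≤ z ^ 3 → absEval P n ≠ 0 →
      |(truncatedMoebiusSum z (absEval P n) : ℝ) - if Squarefree (absEval P n) then 1 else 0| ≤
        K * (z : ℝ) ^ ε := by
  obtain ⟨K, hK, hbound⟩ := exists_two_pow_card_primeFactors_absEval_le hε P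
  refine ⟨K + 1, by positivity, fun z n hz hn h0 => ?_⟩
  have hzε : 1 ≤ (z : ℝ) ^ ε := Real.one_le_rpow (mod_cast hz) hε.le
  have hmoebius : |(truncatedMoebiusSum z (absEval P n) : ℝ)| ≤ K * (z : ℝ) ^ ε :=
    le_trans (mod_cast abs_truncatedMoebiusSum_le_two_pow z h0) (hbound z n hz hn h0)
  linarith [abs_truncatedMoebiusSum_sub_ite_le z (absEval P n)]

theorem exists_sum_abs_truncatedMoebiusSum_sub_ite_le {ε : ℝ} (hε : 0 < ε) (hP : P ≠ 0) :
    ∃ K : ℝ, 0 ≤ K ∧ ∀ z N : ℕ, 1 ≤ z → N ≤ z ^ 3 →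
      ∑ n ∈ Ioc 0 N, |(truncatedMoebiusSum z (absEval P n) : ℝ)
          - if Squarefree (absEval P n) then 1 else 0| ≤
        K * (#(squareIndices P (Set.Ioi z) N) * (z : ℝ) ^ ε + z) := by
  obtain ⟨K, hK, herr⟩ := exists_abs_truncatedMoebiusSum_sub_ite_le hε P
  refine ⟨K + 2 * P.natDegree, by positivity, fun z N hz hN => ?_⟩
  set err : ℕ → ℝ := fun n => |(truncatedMoebiusSum z (absEval P n) : ℝ)
    - if Squarefree (absEval P n) then 1 else 0|
  set bad := squareIndices P (Set.Ioi z) N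
  have herr_zero (n : ℕ) : err n ≤ 2 * z := by
    have hmoebius : |(truncatedMoebiusSum z (absEval P n) : ℝ)| ≤ z :=
      mod_cast abs_truncatedMoebiusSum_le z _
    have hz1 : (1 : ℝ) ≤ z := mod_cast hz
    linarith [abs_truncatedMoebiusSum_sub_ite_le z (absEval P n)]
  calc ∑ n ∈ Ioc 0 N, err n = ∑ n ∈ bad, err n := by
        refine (sum_subset (squareIndices_subset P _ N) fun n hn hbad => ?_).symm
        simp only [err, truncatedMoebiusSum_absEval_eq_ite hn hbad]
        simp
    _ = ∑ n ∈ bad with absEval P n = 0, err n + ∑ n ∈ bad with absEval P n ≠ 0, err n :=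
        (sum_filter_add_sum_filter_not _ _ _).symm
    _ ≤ #{n ∈ bad | absEval P n = 0} • (2 * z : ℝ)
        + #{n ∈ bad | absEval P n ≠ 0} • (K * (z : ℝ) ^ ε) := by
        gcongr
        · exact sum_le_card_nsmul _ _ _ fun n _ => herr_zero n
        · refine sum_le_card_nsmul _ _ _ fun n hn => ?_
          obtain ⟨hnbad, h0⟩ := mem_filter.1 hn
          have hnN := (mem_Ioc.1 (squareIndices_subset P _ N hnbad)).2
          exact herr z n hz (hnN.trans hN) h0
    _ ≤ P.natDegree * (2 * z) + #bad * (K * (z : ℝ) ^ ε) := by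
        simp only [nsmul_eq_mul]
        gcongr
        · exact card_absEval_eq_zero_le hP bad
        · exact filter_subset _ _
    _ ≤ (K + 2 * P.natDegree) * (#bad * (z : ℝ) ^ ε + z) := by
        have hKz : 0 ≤ K * (z : ℝ) := by positivity
        have hdeg : 0 ≤ 2 * (P.natDegree : ℝ) * (#bad * (z : ℝ) ^ ε) := by positivity
        linarith

theorem sum_truncatedMoebiusSum_eq (P : ℤ[X]) (z N : ℕ) :
    ∑ n ∈ Ioc 0 N, (truncatedMoebiusSum z (absEval P n) : ℝ) =
      ∑ d ∈ Icc 1 z, (μ d : ℝ) * #{n ∈ Ioc 0 N | d ^ 2 ∣ absEval P n} := by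
  simp only [truncatedMoebiusSum, Int.cast_sum, sum_filter]
  rw [sum_comm]
  refine sum_congr rfl fun d _ => ?_
  rw [← Int.cast_sum, ← sum_filter, sum_const, nsmul_eq_mul, mul_comm]
  push_cast
  rfl

theorem abs_moebius_mul_card_sub_le (P : ℤ[X]) (N : ℕ) {d : ℕ} (hd : d ≠ 0) :
    |(μ d : ℝ) * #{n ∈ Ioc 0 N | d ^ 2 ∣ absEval P n} - densityTerm P d * N| ≤
      rootCount P (d ^ 2) := by
  have : NeZero (d ^ 2) := ⟨pow_ne_zero 2 hd⟩
  have hμ : |(μ d : ℝ)| ≤ 1 := mod_cast ArithmeticFunction.abs_moebius_le_one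
  calc _ = |(μ d : ℝ)| * |(#{n ∈ Ioc 0 N | d ^ 2 ∣ absEval P n} : ℝ)
          - rootCount P (d ^ 2) * N / (d ^ 2 : ℕ)| := by
        rw [← abs_mul, densityTerm]
        push_cast
        ring_nf
    _ ≤ 1 * rootCount P (d ^ 2) := by
        gcongr
        exact abs_card_dvd_absEval_sub_le P N (d ^ 2)
    _ = rootCount P (d ^ 2) := one_mul _

section

variable {c : ℕ} (hc : ∀ p : ℕ, p.Prime → rootCount P (p ^ 2) ≤ c)
include hc

theorem exists_card_squareIndices_Ioc_le {ε : ℝ} (hε : 0 < ε) (hε1 : ε ≤ 1) :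
    ∃ C : ℝ, ∀ z N : ℕ, 1 ≤ z → N ≤ z ^ 3 →
      (#(squareIndices P (Ioc z (z ^ 2)) N) : ℝ) ≤ C * (z : ℝ) ^ (2 + ε) := by
  obtain ⟨K, hK, hrho⟩ := exists_rootCount_sq_le_rpow hc (half_pos hε)
  obtain ⟨T, hT, htail⟩ := exists_sum_abs_densityTerm_le hc hε hε1
  refine ⟨K + T, fun z N hz hN => ?_⟩
  have hz0 : (0 : ℝ) < z := mod_cast hz
  have hN3 : (N : ℝ) ≤ (z : ℝ) ^ 3 := mod_cast hN
  set D : Finset ℕ := {d ∈ Ioc z (z ^ 2) | Squarefree d}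
  have hD : ∀ d ∈ D, z < d ∧ d ≤ z ^ 2 ∧ Squarefree d := by simp [D, and_assoc]
  have hcardD : (#D : ℝ) ≤ (z : ℝ) ^ 2 := by
    exact_mod_cast (card_filter_le _ _).trans (by simp)
  have hrhoD : ∀ d ∈ D, (rootCount P (d ^ 2) : ℝ) ≤ K * (z : ℝ) ^ ε := fun d hd =>
    calc (rootCount P (d ^ 2) : ℝ) ≤ K * (d : ℝ) ^ (ε / 2) := hrho d (hD d hd).2.2
      _ ≤ K * ((z : ℝ) ^ 2) ^ (ε / 2) := by
        gcongr
        exact_mod_cast (hD d hd).2.1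
      _ = K * (z : ℝ) ^ ε := by
        rw [← Real.rpow_natCast_mul hz0.le]
        push_cast
        ring_nf
  calc (#(squareIndices P (Ioc z (z ^ 2)) N) : ℝ)
      ≤ ∑ d ∈ D, (rootCount P (d ^ 2) + N * |densityTerm P d|) := card_squareIndices_le_sum _ N
    _ ≤ #D * (K * (z : ℝ) ^ ε) + N * ∑ d ∈ D, |densityTerm P d| := by
        rw [sum_add_distrib, mul_sum, ← nsmul_eq_mul]
        gcongr
        exact sum_le_card_nsmul _ _ _ hrhoD
    _ ≤ (z : ℝ) ^ 2 * (K * (z : ℝ) ^ ε) + (z : ℝ) ^ 3 * (T * (z : ℝ) ^ (ε - 1)) := by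
        gcongr
        exact htail z hz D fun d hd => (hD d hd).1
    _ = (K + T) * (z : ℝ) ^ (2 + ε) := by
        rw [Real.rpow_sub hz0, Real.rpow_add hz0, Real.rpow_one, Real.rpow_two]
        field_simp

theorem exists_card_squareIndices_Ioi_le (hfew : HasFewLargePrimeSquares P) {ε : ℝ}
    (hε : 0 < ε) (hε1 : ε ≤ 1) :
    ∃ C : ℝ, ∀ z N : ℕ, 1 ≤ z → N ≤ z ^ 3 →
      (#(squareIndices P (Set.Ioi z) N) : ℝ) ≤ C * (z : ℝ) ^ (2 + ε) := by
  classical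
  obtain ⟨C₁, hmedium⟩ := exists_card_squareIndices_Ioc_le hc hε hε1
  obtain ⟨C₂, hlarge⟩ := hfew ε hε
  refine ⟨C₁ + C₂, fun z N hz hN => ?_⟩
  have hsub : squareIndices P (Set.Ioi z) N ⊆
      squareIndices P (Ioc z (z ^ 2)) N ∪ squareIndices P {p | p.Prime ∧ z ^ 2 < p} N := by
    intro n hn
    obtain ⟨hnN, d, hzd, hsq, hdvd⟩ := mem_squareIndices.1 hn
    obtain ⟨e, hed, hze, he⟩ := exists_dvd_gt_le_sq_or_prime hz hzd
    have hesq := hsq.squarefree_of_dvd hed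
    have hedvd := (pow_dvd_pow_of_dvd hed 2).trans hdvd
    rw [mem_union, mem_squareIndices, mem_squareIndices]
    by_cases hez : e ≤ z ^ 2
    · exact .inl ⟨hnN, e, mem_coe.2 (mem_Ioc.2 ⟨hze, hez⟩), hesq, hedvd⟩
    · exact .inr ⟨hnN, e, ⟨he.resolve_left hez, not_le.1 hez⟩, hesq, hedvd⟩
  calc (#(squareIndices P (Set.Ioi z) N) : ℝ)
      ≤ #(squareIndices P (Ioc z (z ^ 2)) N) + #(squareIndices P {p | p.Prime ∧ z ^ 2 < p} N) := by
        exact_mod_cast (card_le_card hsub).trans (card_union_le _ _)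
    _ ≤ (C₁ + C₂) * (z : ℝ) ^ (2 + ε) := by
        rw [add_mul]
        exact add_le_add (hmedium z N hz hN) (hlarge z N hz hN)

theorem exists_abs_sum_truncatedMoebiusSum_sub_le {ε : ℝ} (hε : 0 < ε) (hε1 : ε ≤ 1) :
    ∃ C : ℝ, ∀ z N : ℕ, 1 ≤ z → N ≤ z ^ 3 →
      |∑ n ∈ Ioc 0 N, (truncatedMoebiusSum z (absEval P n) : ℝ) - squarefreeDensity P * N| ≤
        C * (z : ℝ) ^ (2 + ε) := by
  obtain ⟨K, hK, hrho⟩ := exists_rootCount_sq_le_rpow hc hε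
  obtain ⟨T, hT, htail⟩ := exists_abs_sum_densityTerm_sub_le hc hε hε1
  refine ⟨K + T, fun z N hz hN => ?_⟩
  have hz1 : (1 : ℝ) ≤ z := mod_cast hz
  have hz0 : (0 : ℝ) < z := by linarith
  have hN3 : (N : ℝ) ≤ (z : ℝ) ^ 3 := mod_cast hN
  have hterm : ∀ d ∈ Icc 1 z,
      |(μ d : ℝ) * #{n ∈ Ioc 0 N | d ^ 2 ∣ absEval P n} - densityTerm P d * N| ≤
        K * (z : ℝ) ^ ε := fun d hd => by
    by_cases hsq : Squarefree d
    · have hdz : (d : ℝ) ≤ z := mod_cast (mem_Icc.1 hd).2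
      calc _ ≤ (rootCount P (d ^ 2) : ℝ) := abs_moebius_mul_card_sub_le P N hsq.ne_zero
        _ ≤ K * (d : ℝ) ^ ε := hrho d hsq
        _ ≤ K * (z : ℝ) ^ ε := by gcongr
    · rw [densityTerm, ArithmeticFunction.moebius_eq_zero_of_not_squarefree hsq]
      simp only [Int.cast_zero, zero_mul, zero_div, sub_zero, abs_zero]
      positivity
  calc _ = |∑ d ∈ Icc 1 z,
          ((μ d : ℝ) * #{n ∈ Ioc 0 N | d ^ 2 ∣ absEval P n} - densityTerm P d * N)
        + (∑ d ∈ Icc 1 z, densityTerm P d - squarefreeDensity P) * N| := by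
        rw [sum_truncatedMoebiusSum_eq, sum_sub_distrib, ← sum_mul]
        ring_nf
    _ ≤ #(Icc 1 z) • (K * (z : ℝ) ^ ε) + (T * (z : ℝ) ^ (ε - 1)) * (z : ℝ) ^ 3 := by
        refine (abs_add_le _ _).trans (add_le_add ?_ ?_)
        · exact (abs_sum_le_sum_abs _ _).trans (sum_le_card_nsmul _ _ _ hterm)
        · rw [abs_mul, Nat.abs_cast]
          gcongr
          exact htail z hz
    _ ≤ (z : ℝ) ^ 2 * (K * (z : ℝ) ^ ε) + (T * (z : ℝ) ^ (ε - 1)) * (z : ℝ) ^ 3 := by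
        rw [Nat.card_Icc, Nat.add_sub_cancel, nsmul_eq_mul]
        gcongr
        exact le_self_pow₀ hz1 two_ne_zero
    _ = (K + T) * (z : ℝ) ^ (2 + ε) := by
        rw [Real.rpow_sub hz0, Real.rpow_add hz0, Real.rpow_one, Real.rpow_two]
        field_simp

theorem exists_abs_card_squarefree_absEval_sub_le_of_le_cube (hP : P ≠ 0)
    (hfew : HasFewLargePrimeSquares P) {ε : ℝ} (hε : 0 < ε) (hε1 : ε ≤ 1) :
    ∃ C : ℝ, ∀ z N : ℕ, 1 ≤ z → N ≤ z ^ 3 →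
      |(#{n ∈ Ioc 0 N | Squarefree (absEval P n)} : ℝ) - squarefreeDensity P * N| ≤
        C * (z : ℝ) ^ (2 + ε) := by
  obtain ⟨C₁, hmain⟩ := exists_abs_sum_truncatedMoebiusSum_sub_le hc hε hε1
  obtain ⟨K, hK, herr⟩ := exists_sum_abs_truncatedMoebiusSum_sub_ite_le (half_pos hε) hP
  obtain ⟨C₂, hbad⟩ := exists_card_squareIndices_Ioi_le hc hfew (half_pos hε) (by linarith)
  refine ⟨C₁ + K * (C₂ + 1), fun z N hz hN => ?_⟩
  have hz1 : (1 : ℝ) ≤ z := mod_cast hz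
  have hcard : (#{n ∈ Ioc 0 N | Squarefree (absEval P n)} : ℝ)
      = ∑ n ∈ Ioc 0 N, if Squarefree (absEval P n) then (1 : ℝ) else 0 := by
    rw [sum_boole]
  have hdiff : |∑ n ∈ Ioc 0 N, (truncatedMoebiusSum z (absEval P n) : ℝ)
      - #{n ∈ Ioc 0 N | Squarefree (absEval P n)}| ≤ K * (C₂ + 1) * (z : ℝ) ^ (2 + ε) := by
    calc _ ≤ ∑ n ∈ Ioc 0 N, |(truncatedMoebiusSum z (absEval P n) : ℝ)
          - if Squarefree (absEval P n) then 1 else 0| := by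
          rw [hcard, ← sum_sub_distrib]
          exact abs_sum_le_sum_abs _ _
      _ ≤ K * (#(squareIndices P (Set.Ioi z) N) * (z : ℝ) ^ (ε / 2) + z) := herr z N hz hN
      _ ≤ K * (C₂ * (z : ℝ) ^ (2 + ε / 2) * (z : ℝ) ^ (ε / 2) + (z : ℝ) ^ (2 + ε)) := by
          gcongr
          · exact hbad z N hz hN
          · exact Real.self_le_rpow_of_one_le hz1 (by linarith)
      _ = K * (C₂ + 1) * (z : ℝ) ^ (2 + ε) := by
          rw [mul_assoc C₂, ← Real.rpow_add (by linarith)]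
          ring_nf
  rw [abs_sub_comm] at hdiff
  calc _ ≤ K * (C₂ + 1) * (z : ℝ) ^ (2 + ε) + C₁ * (z : ℝ) ^ (2 + ε) :=
        (abs_sub_le _ _ _).trans (add_le_add hdiff (hmain z N hz hN))
    _ = _ := by ring

theorem exists_abs_card_squarefree_absEval_sub_le (hP : P ≠ 0)
    (hfew : HasFewLargePrimeSquares P) {ε : ℝ} (hε : 0 < ε) :
    ∃ C : ℝ, ∀ N : ℕ, 1 ≤ N →
      |(#{n ∈ Ioc 0 N | Squarefree (absEval P n)} : ℝ) - squarefreeDensity P * N| ≤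
        C * (N : ℝ) ^ (2 / 3 + ε) := by
  set δ : ℝ := min ε 1
  have hδ : 0 < δ := lt_min hε one_pos
  obtain ⟨C, hC⟩ := exists_abs_card_squarefree_absEval_sub_le_of_le_cube hc hP hfew hδ
    (min_le_right ε 1)
  refine ⟨|C| * 2 ^ (2 + δ), fun N hN => ?_⟩
  have hN1 : (1 : ℝ) ≤ N := mod_cast hN
  set t : ℝ := (N : ℝ) ^ (3 : ℝ)⁻¹
  have ht : 1 ≤ t := Real.one_le_rpow hN1 (by norm_num)
  have ht3 : t ^ 3 = N := Real.rpow_inv_natCast_pow (by positivity) three_ne_zero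
  have hNz : N ≤ ⌈t⌉₊ ^ 3 := by
    have : (N : ℝ) ≤ (⌈t⌉₊ : ℝ) ^ 3 := by
      rw [← ht3]
      gcongr
      exact Nat.le_ceil t
    exact_mod_cast this
  calc _ ≤ C * (⌈t⌉₊ : ℝ) ^ (2 + δ) := hC ⌈t⌉₊ N (Nat.one_le_ceil_iff.2 (by linarith)) hNz
    _ ≤ |C| * (2 * t) ^ (2 + δ) := by
        gcongr
        · exact le_abs_self C
        · exact Nat.ceil_le_two_mul (by linarith)
    _ = |C| * 2 ^ (2 + δ) * (N : ℝ) ^ ((2 + δ) / 3) := by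
        rw [Real.mul_rpow (by norm_num) (by linarith), ← Real.rpow_mul (by linarith)]
        ring_nf
    _ ≤ |C| * 2 ^ (2 + δ) * (N : ℝ) ^ (2 / 3 + ε) := by
        gcongr
        linarith [min_le_left ε 1]

end
end Sieve

section Pell

variable {D k x₁ x₂ y₁ y₂ : ℤ}

/- `s + t √D` is the quotient of `x₂ + y₂ √D` by `x₁ + y₁ √D`; the congruences make it integral. -/
theorem exists_pell_ratio (hk : k ≠ 0) (h₁ : x₁ ^ 2 - D * y₁ ^ 2 = k)
    (h₂ : x₂ ^ 2 - D * y₂ ^ 2 = k) (hx : k ∣ x₂ - x₁) (hy : k ∣ y₂ - y₁) :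
    ∃ s t : ℤ, s ^ 2 - D * t ^ 2 = 1 ∧ x₂ = x₁ * s + D * y₁ * t ∧ x₁ = x₂ * s - D * y₂ * t := by
  obtain ⟨u, hu⟩ := hx
  obtain ⟨v, hv⟩ := hy
  have hs : k * (1 + x₁ * u - D * y₁ * v) = x₁ * x₂ - D * y₁ * y₂ := by
    linear_combination -h₁ - x₁ * hu + D * y₁ * hv
  have ht : k * (x₁ * v - y₁ * u) = x₁ * y₂ - x₂ * y₁ := by
    linear_combination -x₁ * hv + y₁ * hu
  generalize 1 + x₁ * u - D * y₁ * v = s at hs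
  generalize x₁ * v - y₁ * u = t at ht
  refine ⟨s, t, mul_left_cancel₀ (pow_ne_zero 2 hk) ?_, mul_left_cancel₀ hk ?_,
    mul_left_cancel₀ hk ?_⟩
  · linear_combination (k * s + (x₁ * x₂ - D * y₁ * y₂)) * hs
      - D * (k * t + (x₁ * y₂ - x₂ * y₁)) * ht + (x₂ ^ 2 - D * y₂ ^ 2) * h₁ + k * h₂
  · linear_combination -x₁ * hs - D * y₁ * ht - x₂ * h₁
  · linear_combination -x₂ * hs + D * y₂ * ht - x₁ * h₂

theorem pell_eq_or_two_mul_le (hD : 4 ≤ |D|) (hk : k ≠ 0) (hx₁ : 0 < x₁) (hy₁ : 0 < y₁)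
    (hx₂ : 0 < x₂) (hy₂ : 0 < y₂) (h₁ : x₁ ^ 2 - D * y₁ ^ 2 = k) (h₂ : x₂ ^ 2 - D * y₂ ^ 2 = k)
    (hx : k ∣ x₂ - x₁) (hy : k ∣ y₂ - y₁) : x₁ = x₂ ∨ 2 * x₁ ≤ x₂ ∨ 2 * x₂ ≤ x₁ := by
  obtain ⟨s, t, hst, hx₂s, hx₁s⟩ := exists_pell_ratio hk h₁ h₂ hx hy
  rcases eq_or_ne t 0 with rfl | ht
  · left
    have hs : s = 1 ∨ s = -1 := sq_eq_one_iff.1 (by linarith)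
    rcases hs with rfl | rfl <;> linarith
  right
  have ht2 : 1 ≤ t ^ 2 := Int.add_one_le_iff.2 (sq_pos_of_ne_zero ht)
  have hD4 : 4 ≤ D := by
    rcases le_abs'.1 hD with hneg | hpos
    · nlinarith [sq_nonneg s]
    · exact hpos
  have hs : 2 ≤ |s| := by
    have : 2 ^ 2 < s ^ 2 := by nlinarith
    exact (sq_lt_sq.1 this).le
  have hDy₁ : 0 < D * y₁ := by positivity
  have hDy₂ : 0 < D * y₂ := by positivity
  rcases le_abs'.1 hs with hs | hs <;> rcases lt_or_gt_of_ne ht with ht | ht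
  · nlinarith
  · nlinarith
  · right; nlinarith
  · left; nlinarith

theorem card_pell_le (hD : 4 ≤ |D|) (hk : k ≠ 0) {X : ℕ} {S : Finset ℕ}
    (hS : ∀ x ∈ S, 0 < x ∧ x ≤ X ∧ ∃ y : ℕ, 0 < y ∧ (x : ℤ) ^ 2 - D * (y : ℤ) ^ 2 = k) :
    #S ≤ k.natAbs ^ 2 * (Nat.log 2 X + 1) := by
  have : NeZero k.natAbs := ⟨Int.natAbs_ne_zero.2 hk⟩
  choose! hpos hle y hy hpell using hS
  have hlog {i j : ℕ} (hi : 0 < i) (hij : 2 * i ≤ j) : Nat.log 2 i < Nat.log 2 j := by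
    have := Nat.log_mono_right (b := 2) hij
    rwa [mul_comm, Nat.log_mul_base one_lt_two hi.ne'] at this
  let code (x : ℕ) : ZMod k.natAbs × ZMod k.natAbs × ℕ := (x, y x, Nat.log 2 x)
  calc #S ≤ #((univ : Finset (ZMod k.natAbs)) ×ˢ (univ : Finset (ZMod k.natAbs)) ×ˢ
          range (Nat.log 2 X + 1)) := by
        refine card_le_card_of_injOn code (fun x hx => ?_) fun x₁ hx₁ x₂ hx₂ hcode => ?_
        · simpa [code, Nat.lt_succ_iff] using Nat.log_mono_right (hle x hx)
        · simp only [code, Prod.mk.injEq, ← Int.cast_natCast (R := ZMod _),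
            ZMod.intCast_eq_intCast_iff_dvd_sub, Int.natCast_natAbs, abs_dvd] at hcode
          obtain ⟨hx, hy', hlog_eq⟩ := hcode
          rcases pell_eq_or_two_mul_le hD hk (mod_cast hpos _ hx₁) (mod_cast hy _ hx₁)
            (mod_cast hpos _ hx₂) (mod_cast hy _ hx₂) (hpell _ hx₁) (hpell _ hx₂) hx hy'
            with heq | hdouble | hdouble
          · exact mod_cast heq
          · exact absurd hlog_eq (hlog (hpos _ hx₁) (mod_cast hdouble)).ne
          · exact absurd hlog_eq (hlog (hpos _ hx₂) (mod_cast hdouble)).ne'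
    _ = k.natAbs ^ 2 * (Nat.log 2 X + 1) := by
        simp only [card_product, card_univ, ZMod.card, card_range]
        ring

theorem card_quadratic_eq_mul_sq_le {a b c m : ℤ} (ha : a ≠ 0) (hm : m ≠ 0)
    (hdisc : discrim a b c ≠ 0) {N : ℕ} {S : Finset ℕ}
    (hS : ∀ n ∈ S, b.natAbs < n ∧ n ≤ N ∧
      ∃ y : ℕ, 0 < y ∧ a * (n : ℤ) ^ 2 + b * n + c = m * (y : ℤ) ^ 2) :
    #S ≤ (discrim a b c).natAbs ^ 2 * (Nat.log 2 (2 * a.natAbs * N + b.natAbs) + 1) := by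
  have hne {i : ℕ} (hi : b.natAbs < i) : a * i + b ≠ 0 := fun h => by
    have hb : b.natAbs = a.natAbs * i := by
      rw [eq_neg_of_add_eq_zero_right h, Int.natAbs_neg, Int.natAbs_mul, Int.natAbs_natCast]
    exact (Nat.le_mul_of_pos_left i (Int.natAbs_pos.2 ha)).not_gt (hb ▸ hi)
  let x (n : ℕ) : ℕ := (2 * a * n + b).natAbs
  have hinj : Set.InjOn x S := fun n₁ hn₁ n₂ _ hx => by
    rcases Int.natAbs_eq_natAbs_iff.1 hx with h | h
    · exact Int.natCast_inj.1 (mul_left_cancel₀ (mul_ne_zero two_ne_zero ha) (add_right_cancel h))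
    · refine absurd ?_ (hne (i := n₁ + n₂) ((hS n₁ hn₁).1.trans_le (Nat.le_add_right _ _)))
      push_cast
      linarith
  rw [← card_image_of_injOn hinj]
  have h4am : 4 ≤ |4 * a * m| := by
    rw [mul_assoc, abs_mul, Int.abs_eq_natAbs 4]
    exact le_mul_of_one_le_right (by norm_num) (Int.one_le_abs (mul_ne_zero ha hm))
  refine card_pell_le h4am hdisc (forall_mem_image.2 fun n hn => ?_)
  obtain ⟨hbn, hnN, y, hy, heq⟩ := hS n hn
  refine ⟨Int.natAbs_pos.2 ?_, ?_, y, hy, ?_⟩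
  · convert hne (i := 2 * n) (by omega) using 2
    push_cast
    ring
  · calc x n ≤ (2 * a * n).natAbs + b.natAbs := Int.natAbs_add_le _ _
      _ ≤ 2 * a.natAbs * N + b.natAbs := by
        simp only [Int.natAbs_mul, Int.natAbs_natCast]
        gcongr
        simp
  · rw [Int.natCast_natAbs, sq_abs, discrim]
    linear_combination 4 * a * heq

end Pell

section LargePrimeSquares

open Classical in
/-- The `n ≤ N` for which `P(n)` is `m` times a nonzero square. Large prime squares dividing `P(n)`
are counted by letting the cofactor `m` vary. -/
noncomputable def mulSquareIndices (P : ℤ[X]) (m : ℤ) (N : ℕ) : Finset ℕ :=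
  {n ∈ Ioc 0 N | ∃ y : ℕ, 0 < y ∧ P.eval (n : ℤ) = m * (y : ℤ) ^ 2}

variable {P Q : ℤ[X]}

theorem hasFewLargePrimeSquares_of_forall_card_le {B : ℕ}
    (h : ∀ z N : ℕ, 1 ≤ z → N ≤ z ^ 3 →
      #(squareIndices P {p | p.Prime ∧ z ^ 2 < p} N) ≤ B) : HasFewLargePrimeSquares P := by
  refine fun ε hε => ⟨B, fun z N hz hN => ?_⟩
  have hpow : (1 : ℝ) ≤ (z : ℝ) ^ (2 + ε) := Real.one_le_rpow (mod_cast hz) (by linarith)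
  calc (#(squareIndices P {p | p.Prime ∧ z ^ 2 < p} N) : ℝ) ≤ B := mod_cast h z N hz hN
    _ ≤ B * (z : ℝ) ^ (2 + ε) := le_mul_of_one_le_right B.cast_nonneg hpow

theorem card_squareIndices_le (P : ℤ[X]) (D : Set ℕ) (N : ℕ) : #(squareIndices P D N) ≤ N :=
  (card_le_card (squareIndices_subset P D N)).trans_eq (Nat.card_Ioc 0 N)

theorem hasFewLargePrimeSquares_of_natDegree_le_one (hP : P ≠ 0) (hdeg : P.natDegree ≤ 1) :
    HasFewLargePrimeSquares P := by
  obtain ⟨A, -, hbound⟩ := exists_absEval_le P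
  refine hasFewLargePrimeSquares_of_forall_card_le (B := A ^ 3 + P.natDegree)
    fun z N hz hN => ?_
  rcases lt_or_ge z A with hzA | hAz
  · calc #(squareIndices P _ N) ≤ N := card_squareIndices_le P _ N
      _ ≤ A ^ 3 := hN.trans (Nat.pow_le_pow_left hzA.le 3)
      _ ≤ A ^ 3 + P.natDegree := Nat.le_add_right _ _
  have hroot : squareIndices P {p | p.Prime ∧ z ^ 2 < p} N ⊆ {n ∈ Ioc 0 N | absEval P n = 0} :=
    fun n hn => by
      obtain ⟨hnN, p, ⟨-, hzp⟩, -, hdvd⟩ := mem_squareIndices.1 hn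
      refine mem_filter.2 ⟨hnN, Nat.eq_zero_of_dvd_of_lt hdvd ?_⟩
      calc absEval P n ≤ A * (z ^ 3) ^ P.natDegree :=
            hbound n _ (Nat.one_le_pow _ _ hz) ((mem_Ioc.1 hnN).2.trans hN)
        _ ≤ z * (z ^ 3) ^ 1 := by
            gcongr
            exact Nat.one_le_pow _ _ hz
        _ = (z ^ 2) ^ 2 := by ring
        _ < p ^ 2 := by gcongr
  calc #(squareIndices P _ N) ≤ P.natDegree :=
        (card_le_card hroot).trans (card_absEval_eq_zero_le hP _)
    _ ≤ A ^ 3 + P.natDegree := Nat.le_add_left _ _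

theorem exists_eq_mul_sq_natAbs_le {v : ℤ} {A z p : ℕ} (hz : 0 < z) (hzp : z ^ 2 < p)
    (hv : v.natAbs ≤ A * z ^ 6) (hdvd : p ^ 2 ∣ v.natAbs) :
    ∃ m : ℤ, v = m * (p : ℤ) ^ 2 ∧ m.natAbs ≤ A * z ^ 2 := by
  obtain ⟨m, rfl⟩ : (p : ℤ) ^ 2 ∣ v := mod_cast Int.natCast_dvd.2 hdvd
  refine ⟨m, mul_comm _ _, Nat.le_of_mul_le_mul_right ?_ (pow_pos hz 4)⟩
  calc m.natAbs * z ^ 4 = m.natAbs * (z ^ 2) ^ 2 := by ring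
    _ ≤ m.natAbs * p ^ 2 := by gcongr
    _ = ((p : ℤ) ^ 2 * m).natAbs := by
        rw [Int.natAbs_mul, Int.natAbs_pow, Int.natAbs_natCast, mul_comm]
    _ ≤ A * z ^ 2 * z ^ 4 := hv.trans_eq (by ring)

theorem exists_card_squareIndices_le_of_natDegree_le_two (hP : P ≠ 0) (hdeg : P.natDegree ≤ 2) :
    ∃ A : ℕ, ∀ z N T : ℕ, 1 ≤ z → N ≤ z ^ 3 → (∀ m : ℤ, m ≠ 0 → #(mulSquareIndices P m N) ≤ T) →
      #(squareIndices P {p | p.Prime ∧ z ^ 2 < p} N) ≤ 2 + A * z ^ 2 * T := by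
  classical
  obtain ⟨A, -, hbound⟩ := exists_absEval_le P
  refine ⟨2 * A + 1, fun z N T hz hN hT => ?_⟩
  let M : Finset ℤ := {m ∈ Icc (-(A * z ^ 2 : ℕ) : ℤ) (A * z ^ 2 : ℕ) | m ≠ 0}
  have hM : #M ≤ (2 * A + 1) * z ^ 2 := by
    refine (card_filter_le _ _).trans ?_
    rw [Int.card_Icc]
    have := Nat.one_le_pow 2 z hz
    lia
  have hsub : squareIndices P {p | p.Prime ∧ z ^ 2 < p} N ⊆
      {n ∈ Ioc 0 N | absEval P n = 0} ∪ M.biUnion (mulSquareIndices P · N) := fun n hn => by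
    obtain ⟨hnN, p, ⟨hp, hzp⟩, -, hdvd⟩ := mem_squareIndices.1 hn
    have hPn : absEval P n ≤ A * z ^ 6 :=
      calc absEval P n ≤ A * (z ^ 3) ^ P.natDegree :=
            hbound n _ (Nat.one_le_pow _ _ hz) ((mem_Ioc.1 hnN).2.trans hN)
        _ ≤ A * (z ^ 3) ^ 2 := by
            gcongr
            exact Nat.one_le_pow _ _ hz
        _ = A * z ^ 6 := by ring
    obtain ⟨m, hm, hmA⟩ := exists_eq_mul_sq_natAbs_le hz hzp hPn hdvd
    rw [mem_union, mem_filter, mem_biUnion]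
    rcases eq_or_ne m 0 with rfl | hm0
    · exact .inl ⟨hnN, Int.natAbs_eq_zero.2 (by simpa using hm)⟩
    · exact .inr ⟨m, mem_filter.2 ⟨mem_Icc.2 (by omega), hm0⟩,
        mem_filter.2 ⟨hnN, p, hp.pos, hm⟩⟩
  calc #(squareIndices P {p | p.Prime ∧ z ^ 2 < p} N) ≤ 2 + #M * T :=
        ((card_le_card hsub).trans (card_union_le _ _)).trans <|
          add_le_add ((card_absEval_eq_zero_le hP _).trans hdeg)
            (card_biUnion_le_card_mul _ _ _ fun m hm => hT m (mem_filter.1 hm).2)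
    _ ≤ 2 + (2 * A + 1) * z ^ 2 * T := by gcongr

theorem card_mulSquareIndices_le (hdeg : P.natDegree = 2)
    (hdisc : discrim (P.coeff 2) (P.coeff 1) (P.coeff 0) ≠ 0) {m : ℤ} (hm : m ≠ 0) (N : ℕ) :
    #(mulSquareIndices P m N) ≤ (P.coeff 1).natAbs
      + (discrim (P.coeff 2) (P.coeff 1) (P.coeff 0)).natAbs ^ 2
        * (Nat.log 2 (2 * (P.coeff 2).natAbs * N + (P.coeff 1).natAbs) + 1) := by
  classical
  have ha : P.coeff 2 ≠ 0 := by
    rw [← hdeg, coeff_natDegree, leadingCoeff_ne_zero]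
    rintro rfl
    simp at hdeg
  have heval (x : ℤ) : P.eval x = P.coeff 2 * x ^ 2 + P.coeff 1 * x + P.coeff 0 := by
    conv_lhs => rw [eq_quadratic_of_degree_le_two (natDegree_le_iff_degree_le.1 hdeg.le)]
    simp
  rw [← card_filter_add_card_filter_not (fun n => n ≤ (P.coeff 1).natAbs)]
  refine add_le_add ?_ (card_quadratic_eq_mul_sq_le ha hm hdisc fun n hn => ?_)
  · calc _ ≤ #(Ioc 0 (P.coeff 1).natAbs) := card_le_card fun n hn => by
          obtain ⟨hnm, hnb⟩ := mem_filter.1 hn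
          exact mem_Ioc.2 ⟨(mem_Ioc.1 (mem_filter.1 hnm).1).1, hnb⟩
      _ = (P.coeff 1).natAbs := Nat.card_Ioc _ _
  · obtain ⟨hnm, hbn⟩ := mem_filter.1 hn
    obtain ⟨hnN, y, hy, hym⟩ := mem_filter.1 hnm
    exact ⟨not_le.1 hbn, (mem_Ioc.1 hnN).2, y, hy, (heval n).symm.trans hym⟩

theorem exists_card_squareIndices_le_of_natDegree_eq_two (hdeg : P.natDegree = 2)
    (hdisc : discrim (P.coeff 2) (P.coeff 1) (P.coeff 0) ≠ 0) :
    ∃ A B : ℕ, ∀ z N : ℕ, 1 ≤ z → N ≤ z ^ 3 →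
      #(squareIndices P {p | p.Prime ∧ z ^ 2 < p} N) ≤
        A * (z ^ 2 * (Nat.log 2 (B * z ^ 3) + 1)) := by
  have hP : P ≠ 0 := by rintro rfl; simp at hdeg
  obtain ⟨A, hA⟩ := exists_card_squareIndices_le_of_natDegree_le_two hP hdeg.le
  set b := (P.coeff 1).natAbs
  set Δ := (discrim (P.coeff 2) (P.coeff 1) (P.coeff 0)).natAbs
  set B := 2 * (P.coeff 2).natAbs + b
  refine ⟨2 + A * (b + Δ ^ 2), B, fun z N hz hN => ?_⟩
  set L := Nat.log 2 (B * z ^ 3) + 1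
  have hlog : 2 * (P.coeff 2).natAbs * N + b ≤ B * z ^ 3 := by
    rw [add_mul]
    gcongr
    exact Nat.le_mul_of_pos_right _ (Nat.one_le_pow _ _ hz)
  have hcofactor (m : ℤ) (hm : m ≠ 0) : #(mulSquareIndices P m N) ≤ (b + Δ ^ 2) * L :=
    calc #(mulSquareIndices P m N) ≤ b + Δ ^ 2 * L :=
          (card_mulSquareIndices_le hdeg hdisc hm N).trans <|
            add_le_add_right (Nat.mul_le_mul_left _ (Nat.succ_le_succ (Nat.log_mono_right hlog))) _
      _ ≤ b * L + Δ ^ 2 * L := by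
          gcongr
          exact Nat.le_mul_of_pos_right _ (Nat.succ_pos _)
      _ = (b + Δ ^ 2) * L := (add_mul _ _ _).symm
  calc #(squareIndices P {p | p.Prime ∧ z ^ 2 < p} N)
      ≤ 2 + A * z ^ 2 * ((b + Δ ^ 2) * L) := hA z N _ hz hN hcofactor
    _ ≤ 2 * (z ^ 2 * L) + A * z ^ 2 * ((b + Δ ^ 2) * L) := by
        gcongr
        exact Nat.le_mul_of_pos_right _ (by positivity)
    _ = (2 + A * (b + Δ ^ 2)) * (z ^ 2 * L) := by ring

theorem exists_natLog_add_one_le (B : ℕ) {ε : ℝ} (hε : 0 < ε) :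
    ∃ K : ℝ, ∀ z : ℕ, 1 ≤ z → (Nat.log 2 (B * z ^ 3) + 1 : ℝ) ≤ K * (z : ℝ) ^ ε := by
  refine ⟨(B : ℝ) ^ (ε / 3) / (ε / 3 * Real.log 2) + 1, fun z hz => ?_⟩
  have hpow : ((z : ℝ) ^ 3) ^ (ε / 3) = (z : ℝ) ^ ε := by
    rw [← Real.rpow_natCast_mul z.cast_nonneg]
    congr 1
    push_cast
    ring
  have hlog := natLog_two_le_rpow_div (B * z ^ 3) (ε := ε / 3) (by positivity)
  push_cast at hlog
  rw [Real.mul_rpow B.cast_nonneg (by positivity), hpow] at hlog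
  have hone : (1 : ℝ) ≤ (z : ℝ) ^ ε := Real.one_le_rpow (mod_cast hz) hε.le
  linear_combination hlog + hone

theorem discrim_coeff_ne_zero_of_separable {K : Type*} [Field K] [NeZero (2 : K)] {P : K[X]}
    (hP : P.Separable) (hdeg : P.natDegree = 2) :
    discrim (P.coeff 2) (P.coeff 1) (P.coeff 0) ≠ 0 := fun hdisc => by
  have hP0 : P ≠ 0 := hP.ne_zero
  have ha : P.coeff 2 ≠ 0 := by rwa [← hdeg, coeff_natDegree, leadingCoeff_ne_zero]
  have hquad := eq_quadratic_of_degree_le_two (natDegree_le_iff_degree_le.1 hdeg.le)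
  generalize P.coeff 2 = a, P.coeff 1 = b, P.coeff 0 = c at *
  subst hquad
  refine hP.eval₂_derivative_ne_zero (RingHom.id K) (x := -b / (2 * a)) ?_ ?_
  · simp only [eval₂_add, eval₂_mul, eval₂_C, RingHom.id_apply, eval₂_X_pow, eval₂_X]
    field_simp
    rw [discrim] at hdisc
    linear_combination -hdisc
  · rw [derivative_add, derivative_add, derivative_C_mul_X_sq, derivative_C_mul_X, derivative_C]
    simp only [eval₂_add, eval₂_mul, eval₂_C, eval₂_zero, RingHom.id_apply, eval₂_X]
    field_simp
    ring

theorem hasFewLargePrimeSquares_of_natDegree_eq_two (hP : (P.map (Int.castRingHom ℚ)).Separable)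
    (hdeg : P.natDegree = 2) : HasFewLargePrimeSquares P := by
  have hdisc : discrim (P.coeff 2) (P.coeff 1) (P.coeff 0) ≠ 0 := by
    have := discrim_coeff_ne_zero_of_separable hP
      ((natDegree_map_eq_of_injective (RingHom.injective_int _) P).trans hdeg)
    simp only [coeff_map, discrim, eq_intCast] at this
    exact mod_cast this
  intro ε hε
  obtain ⟨A, B, hcard⟩ := exists_card_squareIndices_le_of_natDegree_eq_two hdeg hdisc
  obtain ⟨K, hlog⟩ := exists_natLog_add_one_le B hε
  refine ⟨A * K, fun z N hz hN => ?_⟩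
  calc (#(squareIndices P {p | p.Prime ∧ z ^ 2 < p} N) : ℝ)
      ≤ A * ((z : ℝ) ^ 2 * (Nat.log 2 (B * z ^ 3) + 1)) := mod_cast hcard z N hz hN
    _ ≤ A * ((z : ℝ) ^ 2 * (K * (z : ℝ) ^ ε)) := by
        gcongr
        exact hlog z hz
    _ = A * K * (z : ℝ) ^ (2 + ε) := by
        rw [Real.rpow_add (by positivity), Real.rpow_two]
        ring

theorem exists_card_squareIndices_mul_le
    (hPQ : IsCoprime (P.map (Int.castRingHom ℚ)) (Q.map (Int.castRingHom ℚ))) :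
    ∃ B : ℕ, ∀ z N : ℕ, N ≤ z ^ 3 →
      #(squareIndices (P * Q) {p | p.Prime ∧ z ^ 2 < p} N) ≤
        #(squareIndices P {p | p.Prime ∧ z ^ 2 < p} N)
          + #(squareIndices Q {p | p.Prime ∧ z ^ 2 < p} N) + B := by
  classical
  obtain ⟨r, hr, U, V, hUV⟩ := exists_mul_add_mul_eq_C_of_isCoprime_map hPQ
  refine ⟨r.natAbs ^ 3, fun z N hN => ?_⟩
  rcases lt_or_ge z r.natAbs with hzr | hrz
  · calc #(squareIndices (P * Q) _ N) ≤ N := card_squareIndices_le _ _ N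
      _ ≤ r.natAbs ^ 3 := hN.trans (Nat.pow_le_pow_left hzr.le 3)
      _ ≤ _ := Nat.le_add_left _ _
  refine ((card_le_card fun n hn => ?_).trans (card_union_le _ _)).trans (Nat.le_add_right _ _)
  obtain ⟨hnN, p, ⟨hp, hzp⟩, hsq, hdvd⟩ := mem_squareIndices.1 hn
  have hcop : ¬ (p ∣ absEval P n ∧ p ∣ absEval Q n) := fun ⟨hpP, hpQ⟩ => by
    have hpr : (p : ℤ) ∣ r := by
      have hr_eval := congrArg (eval (n : ℤ)) hUV
      rw [eval_add, eval_mul, eval_mul, eval_C] at hr_eval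
      exact hr_eval ▸ dvd_add ((Int.natCast_dvd.2 hpP).mul_left _)
        ((Int.natCast_dvd.2 hpQ).mul_left _)
    have hpr_le := Nat.le_of_dvd (Int.natAbs_pos.2 hr) (Int.natCast_dvd.1 hpr)
    have hz_le := Nat.le_self_pow two_ne_zero z
    omega
  rw [absEval_mul] at hdvd
  rw [mem_union, mem_squareIndices, mem_squareIndices]
  rcases not_and_or.1 hcop with hpP | hpQ
  · exact .inr ⟨hnN, p, ⟨hp, hzp⟩, hsq,
      (((hp.coprime_iff_not_dvd).2 hpP).pow_left 2).dvd_of_dvd_mul_left hdvd⟩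
  · exact .inl ⟨hnN, p, ⟨hp, hzp⟩, hsq,
      (((hp.coprime_iff_not_dvd).2 hpQ).pow_left 2).dvd_of_dvd_mul_right hdvd⟩

theorem HasFewLargePrimeSquares.mul (hP : HasFewLargePrimeSquares P)
    (hQ : HasFewLargePrimeSquares Q)
    (hPQ : IsCoprime (P.map (Int.castRingHom ℚ)) (Q.map (Int.castRingHom ℚ))) :
    HasFewLargePrimeSquares (P * Q) := by
  intro ε hε
  obtain ⟨C₁, hcardP⟩ := hP ε hε
  obtain ⟨C₂, hcardQ⟩ := hQ ε hε
  obtain ⟨B, hcard⟩ := exists_card_squareIndices_mul_le hPQ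
  refine ⟨C₁ + C₂ + B, fun z N hz hN => ?_⟩
  have hpow : (1 : ℝ) ≤ (z : ℝ) ^ (2 + ε) := Real.one_le_rpow (mod_cast hz) (by linarith)
  calc (#(squareIndices (P * Q) {p | p.Prime ∧ z ^ 2 < p} N) : ℝ)
      ≤ #(squareIndices P {p | p.Prime ∧ z ^ 2 < p} N)
          + #(squareIndices Q {p | p.Prime ∧ z ^ 2 < p} N) + B := mod_cast hcard z N hN
    _ ≤ C₁ * (z : ℝ) ^ (2 + ε) + C₂ * (z : ℝ) ^ (2 + ε) + B * (z : ℝ) ^ (2 + ε) := by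
        gcongr
        · exact hcardP z N hz hN
        · exact hcardQ z N hz hN
        · exact le_mul_of_one_le_right B.cast_nonneg hpow
    _ = (C₁ + C₂ + B) * (z : ℝ) ^ (2 + ε) := by ring

theorem hasFewLargePrimeSquares_of_separable (hP : (P.map (Int.castRingHom ℚ)).Separable)
    (hdeg : ∀ Q : ℤ[X], Irreducible Q → Q ∣ P → Q.natDegree ≤ 2) :
    HasFewLargePrimeSquares P := by
  induction P using WfDvdMonoid.induction_on_irreducible with
  | zero => exact absurd (Polynomial.map_zero _) hP.ne_zero
  | unit u hu =>
    exact hasFewLargePrimeSquares_of_natDegree_le_one hu.ne_zero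
      ((natDegree_eq_zero_of_isUnit hu).trans_le zero_le_one)
  | mul P Q _ hQ ih =>
    rw [Polynomial.map_mul] at hP
    have hfewQ : HasFewLargePrimeSquares Q := by
      rcases (hdeg Q hQ (dvd_mul_right Q P)).lt_or_eq with hlt | heq
      · exact hasFewLargePrimeSquares_of_natDegree_le_one hQ.ne_zero (Nat.le_of_lt_succ hlt)
      · exact hasFewLargePrimeSquares_of_natDegree_eq_two hP.of_mul_left heq
    exact hfewQ.mul (ih hP.of_mul_right fun R hR hRP => hdeg R hR (hRP.mul_left Q)) hP.isCoprime

end LargePrimeSquares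

section MainTheorem

theorem ncard_squarefree_eval (P : ℤ[X]) (N : ℕ) :
    {n : ℕ | 1 ≤ n ∧ n ≤ N ∧ Squarefree (P.eval (n : ℤ))}.ncard
      = #{n ∈ Ioc 0 N | Squarefree (absEval P n)} := by
  rw [← Set.ncard_coe_finset]
  congr 1
  ext n
  rw [Set.mem_ofPred_eq, mem_coe, mem_filter, mem_Ioc, absEval, Int.squarefree_natAbs, and_assoc,
    Nat.succ_le_iff]

theorem density_of_squarefree_polynomial_values_general (P : ℤ[X])
    (hsep : (P.map (Int.castRingHom ℚ)).Separable)
    (hfactor : ∀ Q : ℤ[X], Irreducible Q → Q ∣ P → Q.natDegree ≤ 2)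
    (hadm : ¬ ∃ p : ℕ, p.Prime ∧ ∀ n : ℕ, 0 < n → (p : ℤ) ^ 2 ∣ P.eval (n : ℤ)) :
    ∃ κ : ℝ, 0 < κ ∧ ∀ ε : ℝ, 0 < ε → ∃ C : ℝ, ∀ N : ℕ, 1 ≤ N →
      |({n : ℕ | 1 ≤ n ∧ n ≤ N ∧ Squarefree (P.eval (n : ℤ))}.ncard : ℝ) - κ * N| ≤
        C * (N : ℝ) ^ (2 / 3 + ε) := by
  have hP : P ≠ 0 := by
    rintro rfl
    exact hsep.ne_zero (Polynomial.map_zero _)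
  obtain ⟨c, hc⟩ := exists_rootCount_sq_le_of_separable hsep
  have hlocal (p : ℕ) (hp : p.Prime) : rootCount P (p ^ 2) < p ^ 2 := by
    push Not at hadm
    obtain ⟨n, -, hn⟩ := hadm p hp
    have : NeZero (p ^ 2) := ⟨pow_ne_zero 2 hp.ne_zero⟩
    exact rootCount_lt (n := n) fun hdvd => hn (mod_cast Int.natCast_dvd.2 hdvd)
  refine ⟨squarefreeDensity P, squarefreeDensity_pos (summable_densityTerm hc) hlocal,
    fun ε hε => ?_⟩
  simp only [ncard_squarefree_eval]
  exact exists_abs_card_squarefree_absEval_sub_le hc hP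
    (hasFewLargePrimeSquares_of_separable hsep hfactor) hε

theorem separable_map_of_irreducible {Q : ℤ[X]} (hQ : Irreducible Q) (hdeg : Q.natDegree ≠ 0) :
    (Q.map (Int.castRingHom ℚ)).Separable :=
  ((IsPrimitive.Int.irreducible_iff_irreducible_map_cast (hQ.isPrimitive hdeg)).1 hQ).separable

theorem separable_C_mul_X_add_C {K : Type*} [Field K] {a : K} (ha : a ≠ 0) (b : K) :
    (C a * X + C b).Separable :=
  (separable_def' _).2 ⟨0, C a⁻¹, by simp [← C_mul, ha]⟩

theorem isCoprime_C_mul_X_add_C {K : Type*} [Field K] {a b a' b' : K} (h : a * b' - a' * b ≠ 0) :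
    IsCoprime (C a * X + C b) (C a' * X + C b') := by
  refine ⟨C (-a' / (a * b' - a' * b)), C (a / (a * b' - a' * b)), ?_⟩
  calc _ = C (-a' / (a * b' - a' * b) * a + a / (a * b' - a' * b) * a') * X
        + C (-a' / (a * b' - a' * b) * b + a / (a * b' - a' * b) * b') := by
        simp only [C_add, C_mul]
        ring
    _ = C 0 * X + C 1 := by
        congr 3 <;> field_simp <;> ring
    _ = 1 := by simp

theorem separable_map_prod_linear {ι R K : Type*} [Fintype ι] [CommRing R] [Field K] {f : R →+* K}
    (hf : Function.Injective f) {a b : ι → R} (ha : ∀ i, a i ≠ 0)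
    (hab : ∀ i j, i ≠ j → a i * b j - a j * b i ≠ 0) :
    ((∏ i, (C (a i) * X + C (b i))).map f).Separable := by
  simp only [Polynomial.map_prod, Polynomial.map_add, Polynomial.map_mul, map_C, map_X]
  refine separable_prod (fun i j hij => isCoprime_C_mul_X_add_C ?_) fun i =>
    separable_C_mul_X_add_C ((map_ne_zero_iff f hf).2 (ha i)) _
  rw [← map_mul, ← map_mul, ← map_sub]
  exact (map_ne_zero_iff f hf).2 (hab i j hij)

theorem natDegree_le_one_of_dvd_prod_linear {ι R : Type*} [Fintype ι] [CommRing R] [IsDomain R]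
    {a b : ι → R} (ha : ∀ i, a i ≠ 0) {Q : R[X]} (hQ : Prime Q)
    (hdvd : Q ∣ ∏ i, (C (a i) * X + C (b i))) : Q.natDegree ≤ 1 := by
  obtain ⟨i, -, hi⟩ := (hQ.dvd_finsetProd_iff _).1 hdvd
  have hne : C (a i) * X + C (b i) ≠ 0 := fun h => ha i (by simpa using congrArg (coeff · 1) h)
  exact (natDegree_le_of_dvd hi hne).trans natDegree_linear_le

end MainTheorem

/-- **Density of squarefree polynomial values.** If `P ∈ ℤ[x]` is an irreducible quadratic or
a product of pairwise non-proportional linear factors over `ℤ`, with positive leading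
coefficient, and no prime `p` satisfies `p² ∣ P(n)` for all `n ≥ 1`, then there is `κ_P > 0`
with `#{n ≤ N : P(n) squarefree} = κ_P N + O_P(N^{3/4})`. -/
theorem density_of_squarefree_polynomial_values
    (P : Polynomial ℤ)
    (hP : (∃ k : ℕ, 1 ≤ k ∧ ∃ a b : Fin k → ℤ, (∀ i, a i ≠ 0) ∧
            P = ∏ i, (Polynomial.C (a i) * Polynomial.X + Polynomial.C (b i)) ∧
            ∀ i j, i ≠ j → a i * b j - a j * b i ≠ 0) ∨
          (P.natDegree = 2 ∧ Irreducible P))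
    (hlead : 0 < P.leadingCoeff)
    (hadm : ¬ ∃ p : ℕ, p.Prime ∧ ∀ n : ℕ, 0 < n → (p : ℤ)^2 ∣ P.eval (n : ℤ)) :
    ∃ κ : ℝ, 0 < κ ∧ ∃ C : ℝ, ∀ N : ℕ, 1 ≤ N →
      |({n : ℕ | 1 ≤ n ∧ n ≤ N ∧ Squarefree (P.eval (n : ℤ))}.ncard : ℝ) - κ * N| ≤
        C * (N : ℝ) ^ ((3:ℝ)/4) := by
  have ⟨hsep, hfactor⟩ : (P.map (Int.castRingHom ℚ)).Separable ∧
      ∀ Q : ℤ[X], Irreducible Q → Q ∣ P → Q.natDegree ≤ 2 := by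
    rcases hP with ⟨_, -, a, b, ha, rfl, hab⟩ | ⟨hdeg, hirr⟩
    · exact ⟨separable_map_prod_linear (RingHom.injective_int _) ha hab, fun Q hQ hdvd =>
        (natDegree_le_one_of_dvd_prod_linear ha hQ.prime hdvd).trans one_le_two⟩
    · exact ⟨separable_map_of_irreducible hirr (by lia), fun Q _ hdvd =>
        (natDegree_le_of_dvd hdvd hirr.ne_zero).trans_eq hdeg⟩
  obtain ⟨κ, hκ, hbound⟩ := density_of_squarefree_polynomial_values_general P hsep hfactor hadm
  refine ⟨κ, hκ, ?_⟩
  convert hbound (1 / 12) (by norm_num) using 6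
  norm_num
end

section
/- Let Q ∈ ℤ[x] be a nonzero polynomial, let y be a squarefree positive integer such that for every prime p ∣ y, the reduction of Q modulo p is not the zero polynomial, and let N be a positive integer. Then #{1 ≤ x ≤ N : Q(x) ≡ 0 (mod y)} ≤ (deg Q)^{ω(y)} · (N/y + 1), where ω(y) denotes the number of distinct prime divisors of y. -/
/-!
A root of `Q` modulo `y` is determined by its reductions modulo the primes dividing `y`, since `y`
is squarefree. Each reduction is a root of a nonzero polynomial of degree at most `deg Q` over a
field, so `Q` has at most `(deg Q) ^ ω(y)` roots modulo `y`. Each residue class modulo `y` meets an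
interval of `N` consecutive integers in at most `N / y + 1` points.
-/

open Finset Polynomial

theorem encard_setOf_isRoot_le_natDegree {R : Type*} [CommRing R] [IsDomain R] {P : R[X]}
    (hP : P ≠ 0) : {a | P.IsRoot a}.encard ≤ P.natDegree := by
  classical
  have hroots : {a | P.IsRoot a} = (P.roots.toFinset : Set R) := by
    ext a
    simp [mem_roots hP]
  rw [hroots, Set.encard_coe_eq_coe_finsetCard]
  exact mod_cast P.roots.toFinset_card_le.trans P.card_roots'

theorem encard_setOf_isRoot_le_natDegree_pow_of_injective {R ι : Type*} [CommSemiring R] [Fintype ι]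
    {F : ι → Type*} [∀ i, CommRing (F i)] [∀ i, IsDomain (F i)] {f : ∀ i, R →+* F i}
    (hf : Function.Injective fun a i ↦ f i a) {P : R[X]} (hP : ∀ i, P.map (f i) ≠ 0) :
    {a | P.IsRoot a}.encard ≤ P.natDegree ^ Fintype.card ι :=
  calc {a | P.IsRoot a}.encard
      ≤ (Set.univ.pi fun i ↦ {b | (P.map (f i)).IsRoot b}).encard :=
        Set.encard_le_encard_of_injOn (fun _ ha _ _ ↦ Set.mem_ofPred.2 (Set.mem_ofPred.1 ha).map)
          hf.injOn
    _ = ∏ i, {b | (P.map (f i)).IsRoot b}.encard := Set.encard_pi_eq_prod_encard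
    _ ≤ ∏ _i : ι, (P.natDegree : ℕ∞) := by
        gcongr with i
        exact (encard_setOf_isRoot_le_natDegree (hP i)).trans (mod_cast natDegree_map_le)
    _ = P.natDegree ^ Fintype.card ι := by rw [prod_const, card_univ]

theorem injective_pi_castHom_of_squarefree {n : ℕ} (hn : Squarefree n) :
    Function.Injective fun (a : ZMod n) (p : n.primeFactors) ↦
      ZMod.castHom (Nat.dvd_of_mem_primeFactors p.2) (ZMod p) a := by
  intro a b hab
  obtain ⟨k, rfl⟩ := ZMod.intCast_surjective a
  obtain ⟨l, rfl⟩ := ZMod.intCast_surjective b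
  have hprime_dvd : ∀ p ∈ n.primeFactors, p ∣ (l - k).natAbs := fun p hp ↦ by
    have hkl : (k : ZMod p) = l := by simpa only [map_intCast] using congrFun hab ⟨p, hp⟩
    exact Int.natCast_dvd.1 ((ZMod.intCast_eq_intCast_iff_dvd_sub k l p).1 hkl)
  rw [ZMod.intCast_eq_intCast_iff_dvd_sub, Int.natCast_dvd,
    ← Nat.prod_primeFactors_of_squarefree hn]
  exact prod_primes_dvd _ (fun p hp ↦ (Nat.prime_of_mem_primeFactors hp).prime) hprime_dvd

theorem isRoot_map_castRingHom_zmod_intCast_iff {Q : ℤ[X]} {n : ℕ} {x : ℤ} :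
    (Q.map (Int.castRingHom (ZMod n))).IsRoot (x : ZMod n) ↔ (n : ℤ) ∣ Q.eval x := by
  rw [IsRoot.def, eval_intCast_map, Int.cast_id, eq_intCast, ZMod.intCast_zmod_eq_zero_iff_dvd]

theorem ncard_setOf_isRoot_zmod_le_natDegree_pow {n : ℕ} (hn : Squarefree n) {Q : ℤ[X]}
    (hQ : ∀ p : ℕ, p.Prime → p ∣ n → Q.map (Int.castRingHom (ZMod p)) ≠ 0) :
    {a | (Q.map (Int.castRingHom (ZMod n))).IsRoot a}.ncard ≤ Q.natDegree ^ #n.primeFactors := by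
  have (p : n.primeFactors) : Fact (p : ℕ).Prime := ⟨Nat.prime_of_mem_primeFactors p.2⟩
  have hmap (p : n.primeFactors) : (Q.map (Int.castRingHom (ZMod n))).map
      (ZMod.castHom (Nat.dvd_of_mem_primeFactors p.2) (ZMod p)) ≠ 0 := by
    rw [Polynomial.map_map, RingHom.ext_int (RingHom.comp _ _) (Int.castRingHom (ZMod p))]
    exact hQ p (Nat.prime_of_mem_primeFactors p.2) (Nat.dvd_of_mem_primeFactors p.2)
  refine ENat.toNat_le_of_le_natCast ?_
  calc {a | (Q.map (Int.castRingHom (ZMod n))).IsRoot a}.encard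
      ≤ (Q.map (Int.castRingHom (ZMod n))).natDegree ^ Fintype.card n.primeFactors :=
        encard_setOf_isRoot_le_natDegree_pow_of_injective
          (injective_pi_castHom_of_squarefree hn) hmap
    _ ≤ (Q.natDegree ^ #n.primeFactors : ℕ) := by
        rw [Fintype.card_coe]
        exact mod_cast Nat.pow_le_pow_left natDegree_map_le _

theorem card_filter_Ioc_natCast_zmod_eq_le (a b n : ℕ) (c : ZMod n) :
    #{x ∈ Ioc a b | ((x : ℕ) : ZMod n) = c} ≤ (b - a) / n + 1 := by
  rw [← card_range ((b - a) / n + 1)]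
  refine card_le_card_of_injOn (fun x ↦ (x - a) / n) (fun x hx ↦ ?_) fun x hx z hz hdiv ↦ ?_
  · have hxb : x ≤ b := (mem_Ioc.1 (mem_filter.1 hx).1).2
    exact mem_coe.2 <| mem_range_succ_iff.2 <| Nat.div_le_div_right <| Nat.sub_le_sub_right hxb a
  · obtain ⟨hx, hxc⟩ := mem_filter.1 hx
    obtain ⟨hz, hzc⟩ := mem_filter.1 hz
    have hax : a ≤ x := (mem_Ioc.1 hx).1.le
    have haz : a ≤ z := (mem_Ioc.1 hz).1.le
    have hmod : x - a ≡ z - a [MOD n] := by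
      rw [← ZMod.natCast_eq_natCast_iff, Nat.cast_sub hax, Nat.cast_sub haz, hxc, hzc]
    exact (tsub_left_inj hax haz).1 (Nat.ext_div_modEq hdiv hmod)

theorem card_filter_Ioc_natCast_zmod_mem_le (a b n : ℕ) [NeZero n] (S : Set (ZMod n))
    [DecidablePred (· ∈ S)] :
    #{x ∈ Ioc a b | ((x : ℕ) : ZMod n) ∈ S} ≤ ((b - a) / n + 1) * S.ncard := by
  rw [Set.ncard_eq_toFinset_card']
  refine card_le_mul_card_image_of_maps_to (f := fun x : ℕ ↦ (x : ZMod n))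
    (fun x hx ↦ Set.mem_toFinset.2 (mem_filter.1 hx).2) _ fun c _ ↦ ?_
  exact (card_le_card (filter_subset_filter _ (filter_subset _ _))).trans
    (card_filter_Ioc_natCast_zmod_eq_le a b n c)

/-- **Lagrange's theorem, interval version.** If `Q ∈ ℤ[x]` is nonzero, `y` is a squarefree
positive integer such that `Q` does not reduce to the zero polynomial modulo any prime
`p ∣ y`, and `N ≥ 1`, then `#{1 ≤ x ≤ N : Q(x) ≡ 0 (mod y)} ≤ (deg Q)^{ω(y)} (N/y + 1)`. -/
theorem lagrange_squarefree_modulus_interval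
    (Q : Polynomial ℤ) (hQ : Q ≠ 0)
    (y : ℕ) (hy : 0 < y) (hysf : Squarefree y)
    (hred : ∀ p : ℕ, p.Prime → p ∣ y →
      Q.map (Int.castRingHom (ZMod p)) ≠ 0)
    (N : ℕ) (hN : 0 < N) :
    (({x : ℕ | 1 ≤ x ∧ x ≤ N ∧ (y : ℤ) ∣ Q.eval (x : ℤ)}.ncard : ℝ)) ≤
      (Q.natDegree ^ y.primeFactors.card : ℝ) * ((N : ℝ) / (y : ℝ) + 1) := by
  classical
  have : NeZero y := ⟨hy.ne'⟩
  let roots : Set (ZMod y) := {a | (Q.map (Int.castRingHom (ZMod y))).IsRoot a}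
  have mem_roots_iff (x : ℕ) : (x : ZMod y) ∈ roots ↔ (y : ℤ) ∣ Q.eval (x : ℤ) := by
    rw [← isRoot_map_castRingHom_zmod_intCast_iff, Int.cast_natCast, Set.mem_ofPred]
  have hset : {x : ℕ | 1 ≤ x ∧ x ≤ N ∧ (y : ℤ) ∣ Q.eval (x : ℤ)} =
      ({x ∈ Ioc 0 N | ((x : ℕ) : ZMod y) ∈ roots} : Finset ℕ) := by
    ext x
    simp [mem_roots_iff, Nat.succ_le_iff, and_assoc]
  calc _ = (#{x ∈ Ioc 0 N | ((x : ℕ) : ZMod y) ∈ roots} : ℝ) := by rw [hset, Set.ncard_coe_finset]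
    _ ≤ ((N / y : ℕ) + 1) * roots.ncard :=
        mod_cast card_filter_Ioc_natCast_zmod_mem_le 0 N y roots
    _ ≤ (N / y + 1) * Q.natDegree ^ #y.primeFactors := by
        gcongr
        · exact Nat.cast_div_le
        · exact mod_cast ncard_setOf_isRoot_zmod_le_natDegree_pow hysf hred
    _ = _ := mul_comm _ _
end
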